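/- arXiv:1506.07699 — 3 statements merged into one kernel-verified Lean document; each statement's English description precedes it below -/
import Mathlib

section
/- Let f ∈ ℝ[x₁,…,xₙ] be a quadratic polynomial such that C = {p ∈ ℝⁿ : f(p) ≥ 0} is a compact convex set with nonempty interior. Suppose C = {p ∈ ℝⁿ : A₀ + A₁p₁ + ⋯ + Aₙpₙ ⪰ 0} with A₀,…,Aₙ real symmetric r×r matrices. If n > 2^k for some non-negative integer k, then r > 2^k. In particular r ≥ n/2, and if n = 2^k + 1 then r ≥ n. -/
open MvPolynomial

def FRl (F : Type*) [CommRing F] : Prop :=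
  ∀ (m : ℕ) (v : Fin m → F), ∑ i, v i ^ 2 = 0 → ∀ i, v i = 0

theorem FRl_mv (n : ℕ) : FRl (MvPolynomial (Fin n) ℝ) := by
  intro m v h i
  apply MvPolynomial.funext
  intro x
  have h1 := congrArg (eval x) h
  simp only [map_sum, map_pow, map_zero] at h1 ⊢
  rw [Finset.sum_eq_zero_iff_of_nonneg (fun i _ => sq_nonneg _)] at h1
  simpa using h1 i (Finset.mem_univ _)

theorem FRl_poly (F : Type*) [Field F] [Infinite F] (hF : FRl F) : FRl (Polynomial F) := by
  intro m v h i
  apply Polynomial.funext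
  intro x
  have h1 := congrArg (Polynomial.eval x) h
  simp only [Polynomial.eval_finsetSum, Polynomial.eval_pow, Polynomial.eval_zero] at h1 ⊢
  exact hF m _ h1 i

theorem clear_den (R : Type*) [CommRing R] [IsDomain R] (m : ℕ) (v : Fin m → FractionRing R) :
    ∃ (b : R) (w : Fin m → R), b ≠ 0 ∧ ∀ i, algebraMap R (FractionRing R) (w i) =
      algebraMap R (FractionRing R) b * v i := by
  obtain ⟨b, hb⟩ := IsLocalization.exist_integer_multiples_of_finite (nonZeroDivisors R) v
  choose w hw using hb
  refine ⟨b, w, nonZeroDivisors.ne_zero b.2, fun i => ?_⟩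
  rw [hw i, Algebra.smul_def]

theorem FRl_frac (R : Type*) [CommRing R] [IsDomain R] (hR : FRl R) : FRl (FractionRing R) := by
  intro m v h i
  obtain ⟨b, w, hb, hw⟩ := clear_den R m v
  have hi := IsFractionRing.injective R (FractionRing R)
  have h0 : ∑ i, w i ^ 2 = 0 := by
    apply hi
    simp only [map_sum, map_pow, map_zero, hw, mul_pow]
    rw [← Finset.mul_sum, h, mul_zero]
  have := hR m w h0 i
  have h2 := hw i
  rw [this, map_zero] at h2
  have hb' : algebraMap R (FractionRing R) b ≠ 0 := by
    rw [Ne, ← map_zero (algebraMap R (FractionRing R))]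
    exact fun h => hb (hi h)
  exact (mul_eq_zero.1 h2.symm).resolve_left hb'

/-- Theorem of Cassels for sums of squares. -/
theorem cassels (F : Type*) [Field F] [Infinite F] (hF : FRl F) (m : ℕ) (p : Polynomial F) :
    ∀ (N : ℕ) (h0 : Polynomial F) (h : Fin m → Polynomial F), h0.natDegree ≤ N → h0 ≠ 0 →
      h0 ^ 2 * p = ∑ i, h i ^ 2 → ∃ g : Fin m → Polynomial F, p = ∑ i, g i ^ 2 := by
  have hP := FRl_poly F hF
  intro N
  induction N using Nat.strong_induction_on with
  | _ N ih =>
  intro h0 h hN hne heq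
  set g : Fin m → Polynomial F := fun i => h i / h0 with hg
  set r : Fin m → Polynomial F := fun i => h i % h0 with hr
  have hdiv : ∀ i, h i = h0 * g i + r i := fun i => (EuclideanDomain.div_add_mod (h i) h0).symm
  have hfg : ∑ i, h i * g i = h0 * ∑ i, g i ^ 2 + ∑ i, r i * g i := by
    rw [Finset.mul_sum, ← Finset.sum_add_distrib]
    exact Finset.sum_congr rfl fun i _ => by rw [hdiv i]; ring
  have hff : ∑ i, h i ^ 2 = h0 ^ 2 * ∑ i, g i ^ 2 + 2 * h0 * ∑ i, r i * g i + ∑ i, r i ^ 2 := by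
    rw [Finset.mul_sum, Finset.mul_sum, ← Finset.sum_add_distrib, ← Finset.sum_add_distrib]
    exact Finset.sum_congr rfl fun i _ => by rw [hdiv i]; ring
  set G := ∑ i, g i ^ 2
  set T := ∑ i, r i * g i
  set S := ∑ i, r i ^ 2 with hS
  by_cases hr0 : S = 0
  · have := hP m r hr0
    refine ⟨g, ?_⟩
    have hT : T = 0 := Finset.sum_eq_zero fun i _ => by rw [this i, zero_mul]
    rw [hff, hr0, hT] at heq
    have h3 : h0 ^ 2 * p = h0 ^ 2 * G := by rw [heq]; ring
    exact mul_left_cancel₀ (pow_ne_zero 2 hne) h3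
  · set h0' := h0 * (G - p) - 2 * ((h0 * G + T) - h0 * p) with hh0'
    set h' : Fin m → Polynomial F := fun i => h i * (G - p) - 2 * g i * ((h0 * G + T) - h0 * p)
    have key : h0' * h0 = S := by
      rw [hh0']
      linear_combination hff + heq
    have hne' : h0' ≠ 0 := by
      intro h
      rw [h, zero_mul] at key
      exact hr0 key.symm
    have heq' : h0' ^ 2 * p = ∑ i, h' i ^ 2 := by
      have aux : ∀ Q : Polynomial F, ∑ i, (h i * (G - p) - 2 * g i * Q) ^ 2
          = (G - p) ^ 2 * ∑ i, h i ^ 2 - 4 * (G - p) * Q * ∑ i, h i * g i + 4 * Q ^ 2 * G := by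
        intro Q
        simp only [G]
        rw [Finset.mul_sum, Finset.mul_sum, Finset.mul_sum, ← Finset.sum_sub_distrib,
          ← Finset.sum_add_distrib]
        exact Finset.sum_congr rfl fun i _ => by ring
      have : ∑ i, h' i ^ 2 = _ := aux ((h0 * G + T) - h0 * p)
      rw [this, hfg, ← heq, hh0']
      ring
    have hpos : 0 < h0.natDegree := by
      rcases Nat.eq_zero_or_pos h0.natDegree with h1 | h1
      · exfalso
        apply hr0
        apply Finset.sum_eq_zero
        intro i _
        have hu : IsUnit h0 := by
          rw [Polynomial.natDegree_eq_zero] at h1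
          obtain ⟨c, rfl⟩ := h1
          rw [Polynomial.isUnit_C]
          exact isUnit_iff_ne_zero.2 (fun h => hne (by rw [h, map_zero]))
        have : r i = 0 := (EuclideanDomain.mod_eq_zero).2 (hu.dvd)
        rw [this]; simp
      · exact h1
    have hSd : S.natDegree ≤ 2 * (h0.natDegree - 1) := by
      apply Polynomial.natDegree_sum_le_of_forall_le
      intro i _
      have : (r i).natDegree < h0.natDegree := Polynomial.natDegree_mod_lt _ hpos.ne'
      exact (Polynomial.natDegree_pow_le_of_le 2 (by omega : (r i).natDegree ≤ h0.natDegree - 1))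
    rw [← key, Polynomial.natDegree_mul hne' hne] at hSd
    exact ih h0'.natDegree (by omega) h0' h' le_rfl hne' heq'

theorem deg_bound (F : Type*) [Field F] (hF : FRl F) (m : ℕ) (d : F)
    (g : Fin m → Polynomial F) (hg : Polynomial.X ^ 2 + Polynomial.C d = ∑ i, g i ^ 2) :
    ∀ N, (∀ i, (g i).natDegree ≤ N + 1) → ∀ i, (g i).natDegree ≤ 1 := by
  intro N
  induction N with
  | zero => simp
  | succ N ih =>
    intro h
    apply ih
    have h1 := congrArg (fun p => Polynomial.coeff p (2 * (N + 1 + 1))) hg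
    simp only [Polynomial.finsetSum_coeff, Polynomial.coeff_pow_of_natDegree_le (h _)] at h1
    have h2 : (Polynomial.X ^ 2 + Polynomial.C d).coeff (2 * (N + 1 + 1)) = 0 := by
      rw [Polynomial.coeff_add, Polynomial.coeff_X_pow, Polynomial.coeff_C]
      simp
    rw [h2] at h1
    intro i
    have h3 := hF m _ h1.symm i
    exact Polynomial.natDegree_le_pred (h i) h3

theorem drop_one (F : Type*) [Field F] [CharZero F] (m : ℕ) (d : F) (a b : Fin (m + 1) → F)
    (h1 : ∑ i, a i ^ 2 = 1) (h2 : ∑ i, a i * b i = 0) (h3 : ∑ i, b i ^ 2 = d)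
    (h0 : 1 + a 0 ≠ 0) : ∃ c : Fin m → F, d = ∑ i, c i ^ 2 := by
  refine ⟨fun i => b i.succ - b 0 / (1 + a 0) * a i.succ, ?_⟩
  rw [Fin.sum_univ_succ] at h1 h2 h3
  have : ∑ i : Fin m, (b i.succ - b 0 / (1 + a 0) * a i.succ) ^ 2 =
      ∑ i : Fin m, b i.succ ^ 2 - 2 * (b 0 / (1 + a 0)) * ∑ i : Fin m, a i.succ * b i.succ
      + (b 0 / (1 + a 0)) ^ 2 * ∑ i : Fin m, a i.succ ^ 2 := by
    rw [Finset.mul_sum, Finset.mul_sum, ← Finset.sum_sub_distrib, ← Finset.sum_add_distrib]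
    exact Finset.sum_congr rfl fun i _ => by ring
  rw [this, eq_sub_of_add_eq' h1, eq_sub_of_add_eq' h2, eq_sub_of_add_eq' h3]
  field_simp
  ring

theorem cassels_step (F : Type*) [Field F] [CharZero F] (hF : FRl F) (m : ℕ) (d : F)
    (h0 : Polynomial F) (h : Fin m → Polynomial F) (hne : h0 ≠ 0)
    (heq : h0 ^ 2 * (Polynomial.X ^ 2 + Polynomial.C d) = ∑ i, h i ^ 2) :
    ∃ m', m = m' + 1 ∧ ∃ c : Fin m' → F, d = ∑ i, c i ^ 2 := by
  obtain ⟨g, hg⟩ := cassels F hF m _ _ h0 h le_rfl hne heq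
  have hdeg : ∀ i, (g i).natDegree ≤ 1 := by
    refine deg_bound F hF m d g hg (∑ i, (g i).natDegree) fun i => ?_
    exact (Finset.single_le_sum (f := fun i => (g i).natDegree) (fun _ _ => Nat.zero_le _)
      (Finset.mem_univ i)).trans (Nat.le_succ _)
  have hgi : ∀ i, g i ^ 2 = Polynomial.C ((g i).coeff 1 ^ 2) * Polynomial.X ^ 2
      + Polynomial.C (2 * ((g i).coeff 1 * (g i).coeff 0)) * Polynomial.X
      + Polynomial.C ((g i).coeff 0 ^ 2) := by
    intro i
    conv_lhs => rw [Polynomial.eq_X_add_C_of_natDegree_le_one (hdeg i)]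
    simp only [map_mul, map_pow]
    have : (Polynomial.C 2 : Polynomial F) = 2 := rfl
    rw [this]
    ring
  simp only [hgi] at hg
  rw [Finset.sum_add_distrib, Finset.sum_add_distrib, ← Finset.sum_mul, ← Finset.sum_mul,
    ← map_sum, ← map_sum, ← map_sum, ← Finset.mul_sum] at hg
  have e2 := congrArg (fun p => Polynomial.coeff p 2) hg
  have e1 := congrArg (fun p => Polynomial.coeff p 1) hg
  have e0 := congrArg (fun p => Polynomial.coeff p 0) hg
  simp [Polynomial.coeff_X, Polynomial.coeff_C, -map_sum, -map_mul, -map_pow] at e0 e1 e2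
  rcases m with _ | m
  · simp at e2
  refine ⟨m, rfl, ?_⟩
  by_cases ha : 1 + (g 0).coeff 1 = 0
  · refine drop_one F m d (fun i => - (g i).coeff 1) (fun i => (g i).coeff 0) ?_ ?_ e0.symm ?_
    · simpa using e2.symm
    · simpa using e1
    · intro h
      have : (2 : F) = 0 := by linear_combination ha + h
      exact two_ne_zero this
  · exact drop_one F m d (fun i => (g i).coeff 1) (fun i => (g i).coeff 0) e2.symm e1 e0.symm ha

theorem mv_step (n m : ℕ) (h0 : MvPolynomial (Fin (n + 1)) ℝ)
    (h : Fin m → MvPolynomial (Fin (n + 1)) ℝ) (hne : h0 ≠ 0)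
    (heq : h0 ^ 2 * (∑ i, X i ^ 2) = ∑ i, h i ^ 2) :
    ∃ m', m = m' + 1 ∧ ∃ (k0 : MvPolynomial (Fin n) ℝ) (k : Fin m' → MvPolynomial (Fin n) ℝ),
      k0 ≠ 0 ∧ k0 ^ 2 * (∑ i, X i ^ 2) = ∑ i, k i ^ 2 := by
  let R := MvPolynomial (Fin n) ℝ
  let K := FractionRing R
  have hinj := IsFractionRing.injective R K
  have : CharZero K := charZero_of_injective_algebraMap hinj
  let φ : MvPolynomial (Fin (n + 1)) ℝ →+* Polynomial K :=
    (Polynomial.mapRingHom (algebraMap R K)).comp (finSuccEquiv ℝ n).toRingEquiv.toRingHom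
  have hφ : Function.Injective φ :=
    (Polynomial.map_injective _ hinj).comp (finSuccEquiv ℝ n).injective
  have hs : φ (∑ i, X i ^ 2) = Polynomial.X ^ 2 + Polynomial.C (algebraMap R K (∑ i, X i ^ 2)) := by
    simp only [map_sum, map_pow]
    rw [Fin.sum_univ_succ]
    simp [φ, finSuccEquiv_X_zero, finSuccEquiv_X_succ]
  obtain ⟨m', hm, c, hc⟩ := cassels_step K (FRl_frac R (FRl_mv n)) m
    (algebraMap R K (∑ i, X i ^ 2)) (φ h0) (fun i => φ (h i))
    (fun h => hne (hφ (by rw [h, map_zero]))) (by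
      rw [← hs, ← map_pow, ← map_mul, heq]; simp)
  refine ⟨m', hm, ?_⟩
  obtain ⟨b, w, hb, hw⟩ := clear_den R m' c
  have hw : ∀ i, algebraMap R K (w i) = algebraMap R K b * c i := hw
  refine ⟨b, w, hb, hinj ?_⟩
  rw [map_mul, hc, map_sum]
  simp only [map_pow, hw, mul_pow]
  rw [Finset.mul_sum]

theorem mv_main (m : ℕ) : ∀ (n : ℕ) (h0 : MvPolynomial (Fin n) ℝ)
    (h : Fin m → MvPolynomial (Fin n) ℝ), h0 ≠ 0 →
    h0 ^ 2 * (∑ i, X i ^ 2) = ∑ i, h i ^ 2 → n ≤ m := by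
  induction m with
  | zero =>
    intro n h0 h hne heq
    by_contra hn
    obtain ⟨n, rfl⟩ : ∃ k, n = k + 1 := ⟨n - 1, by omega⟩
    simp at heq
    rcases heq with h1 | h1
    · exact hne h1
    · exact X_ne_zero _ (FRl_mv (n + 1) (n + 1) (fun i => X i) h1 0)
  | succ m ih =>
    intro n h0 h hne heq
    rcases n with _ | n
    · omega
    obtain ⟨m', hm, k0, k, hk0, hk⟩ := mv_step n (m + 1) h0 h hne heq
    obtain rfl : m = m' := by omega
    have := ih n k0 k hk0 hk
    omega

def Pf (F : Type*) [Field F] (ι : Type) [Fintype ι] [DecidableEq ι] : Prop :=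
  ∀ v : ι → F, ∃ T : Matrix ι ι F, T.transpose * T = (∑ i, v i ^ 2) • (1 : Matrix ι ι F) ∧
    T * T.transpose = (∑ i, v i ^ 2) • (1 : Matrix ι ι F)

theorem Pf_equiv (F : Type*) [Field F] (ι κ : Type) [Fintype ι] [DecidableEq ι] [Fintype κ]
    [DecidableEq κ] (e : ι ≃ κ) (h : Pf F ι) : Pf F κ := by
  intro v
  obtain ⟨T, h1, h2⟩ := h (v ∘ e)
  have hs : ∑ i, (v ∘ e) i ^ 2 = ∑ i, v i ^ 2 := e.sum_comp (fun i => v i ^ 2)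
  rw [hs] at h1 h2
  refine ⟨T.submatrix e.symm e.symm, ?_, ?_⟩
  · rw [Matrix.transpose_submatrix, Matrix.submatrix_mul_equiv, h1]
    simp [Matrix.submatrix_smul]
  · rw [Matrix.transpose_submatrix, Matrix.submatrix_mul_equiv, h2]
    simp [Matrix.submatrix_smul]

theorem Pf_sum (F : Type*) [Field F] (ι : Type) [Fintype ι] [DecidableEq ι]
    (h : Pf F ι) (hF : ∀ v : ι ⊕ ι → F, ∑ i, v i ^ 2 = 0 → ∀ i, v i = 0) : Pf F (ι ⊕ ι) := by
  intro v
  obtain ⟨S, s1, s2⟩ := h (fun i => v (Sum.inl i))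
  obtain ⟨T, t1, t2⟩ := h (fun i => v (Sum.inr i))
  have hF := hF v
  rw [Fintype.sum_sum_type] at hF ⊢
  have hd0 : ∑ i, v (Sum.inl i) ^ 2 + ∑ i, v (Sum.inr i) ^ 2 = 0 →
      ∑ i, v (Sum.inr i) ^ 2 = 0 := by
    intro h
    simp [hF h]
  set c := ∑ i, v (Sum.inl i) ^ 2
  set d := ∑ i, v (Sum.inr i) ^ 2
  by_cases hd : d = 0
  · refine ⟨Matrix.fromBlocks S 0 0 S, ?_, ?_⟩
    · rw [Matrix.fromBlocks_transpose, Matrix.fromBlocks_multiply, hd, ← Matrix.fromBlocks_one,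
        Matrix.fromBlocks_smul]
      simp [s1]
    · rw [Matrix.fromBlocks_transpose, Matrix.fromBlocks_multiply, hd, ← Matrix.fromBlocks_one,
        Matrix.fromBlocks_smul]
      simp [s2]
  · have hcd : c + d ≠ 0 := fun h => hd (hd0 h)
    let Y : Matrix ι ι F := d⁻¹ • (T * S.transpose * T.transpose)
    have hY : Y.transpose = d⁻¹ • (T * S * T.transpose) := by
      simp [Y, Matrix.transpose_smul, Matrix.transpose_mul, Matrix.mul_assoc]
    have main : (Matrix.fromBlocks S (-T.transpose) T Y).transpose *
        (Matrix.fromBlocks S (-T.transpose) T Y) = (c + d) • (1 : Matrix (ι ⊕ ι) (ι ⊕ ι) F) := by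
      rw [Matrix.fromBlocks_transpose, Matrix.fromBlocks_multiply, ← Matrix.fromBlocks_one,
        Matrix.fromBlocks_smul]
      congr 1
      · rw [s1, t1, add_smul]
      · have : T.transpose * (T * S.transpose * T.transpose)
            = d • (S.transpose * T.transpose) := by
          rw [Matrix.mul_assoc, ← Matrix.mul_assoc, t1]; simp
        simp only [Y, Matrix.mul_smul, this, smul_smul, inv_mul_cancel₀ hd]
        simp
      · have : T * S * T.transpose * T = d • (T * S) := by
          rw [Matrix.mul_assoc (T * S), t1]; simp
        simp only [hY, Matrix.smul_mul, this, smul_smul, inv_mul_cancel₀ hd]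
        simp
      · have : (T * S * T.transpose) * (T * S.transpose * T.transpose)
            = (d * (c * d)) • (1 : Matrix ι ι F) := by
          calc _ = T * (S * ((T.transpose * T) * (S.transpose * T.transpose))) := by
                simp only [Matrix.mul_assoc]
            _ = d • (T * ((S * S.transpose) * T.transpose)) := by
                rw [t1]; simp [Matrix.mul_assoc]
            _ = _ := by
                rw [s2]; simp [smul_smul, t2]
        rw [hY]
        simp only [Y, Matrix.smul_mul, Matrix.mul_smul, this, smul_smul, Matrix.transpose_neg,
          Matrix.transpose_transpose, neg_mul_neg, t2]
        rw [← add_smul]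
        congr 1
        field_simp
        ring
    refine ⟨_, main, ?_⟩
    have h1 : ((c + d)⁻¹ • (Matrix.fromBlocks S (-T.transpose) T Y).transpose) *
        (Matrix.fromBlocks S (-T.transpose) T Y) = 1 := by
      rw [Matrix.smul_mul, main, smul_smul, inv_mul_cancel₀ hcd, one_smul]
    rw [mul_eq_one_comm, Matrix.mul_smul] at h1
    rw [← h1, smul_smul, mul_inv_cancel₀ hcd, one_smul]

theorem Pf_pow (F : Type*) [Field F] (hF : FRl F) (k : ℕ) : Pf F (Fin (2 ^ k)) := by
  induction k with
  | zero =>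
    refine Pf_equiv F (Fin 1) _ (finCongr (pow_zero 2).symm) ?_
    intro v
    refine ⟨Matrix.diagonal v, ?_, ?_⟩ <;>
    · ext i j
      have hi := Subsingleton.elim i (0 : Fin 1)
      have hj := Subsingleton.elim j (0 : Fin 1)
      subst hi hj
      simp [sq]
  | succ k ih =>
    have e : Fin (2 ^ k) ⊕ Fin (2 ^ k) ≃ Fin (2 ^ (k + 1)) :=
      finSumFinEquiv.trans (finCongr (by ring))
    refine Pf_equiv F _ _ e (Pf_sum F _ ih ?_)
    intro v hv i
    have := hF _ (v ∘ e.symm) (by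
      rw [← hv]; exact e.symm.sum_comp (fun i => v i ^ 2)) (e i)
    simpa using this

/-- The key algebraic fact. -/
theorem mv_pfister (n k : ℕ) (a b : Fin (2 ^ k) → MvPolynomial (Fin n) ℝ) (hb : b ≠ 0)
    (h : ∑ i, a i ^ 2 = (∑ i, X i ^ 2) * ∑ i, b i ^ 2) : n ≤ 2 ^ k := by
  let R := MvPolynomial (Fin n) ℝ
  let K := FractionRing R
  have hinj := IsFractionRing.injective R K
  obtain ⟨T, hT, -⟩ := Pf_pow K (FRl_frac R (FRl_mv n)) k (fun i => algebraMap R K (b i))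
  let w : Fin (2 ^ k) → K := T.mulVec (fun i => algebraMap R K (a i))
  have hw : ∑ i, w i ^ 2 = (∑ i, algebraMap R K (b i) ^ 2) * ∑ i, algebraMap R K (a i) ^ 2 := by
    have : ∑ i, w i ^ 2 = dotProduct w w := Finset.sum_congr rfl fun i _ => sq _
    rw [this]
    simp only [w]
    rw [Matrix.dotProduct_mulVec, Matrix.vecMul_mulVec, hT]
    simp only [dotProduct, Matrix.vecMul_smul, Matrix.vecMul_one, Pi.smul_apply, smul_eq_mul]
    rw [Finset.mul_sum]
    exact Finset.sum_congr rfl fun i _ => by ring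
  obtain ⟨c, u, hc, hu⟩ := clear_den R _ w
  have hu : ∀ i, algebraMap R K (u i) = algebraMap R K c * w i := hu
  have hB : ∑ i, b i ^ 2 ≠ 0 := fun h0 => hb (funext fun i => FRl_mv n _ b h0 i)
  refine mv_main (2 ^ k) n (c * ∑ i, b i ^ 2) u (mul_ne_zero hc hB) (hinj ?_)
  have h' := congrArg (algebraMap R K) h
  simp only [map_mul, map_sum, map_pow, hu, mul_pow] at h' ⊢
  rw [← Finset.mul_sum, hw, h']
  ring

theorem mv_pfister_le (n k r : ℕ) (hr : r ≤ 2 ^ k) (a b : Fin r → MvPolynomial (Fin n) ℝ)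
    (hb : b ≠ 0) (h : ∑ i, a i ^ 2 = (∑ i, X i ^ 2) * ∑ i, b i ^ 2) : n ≤ 2 ^ k := by
  obtain ⟨t, ht⟩ := Nat.exists_eq_add_of_le hr
  have aux : ∀ (m : ℕ) (e : m = r + t) (a : Fin r → MvPolynomial (Fin n) ℝ),
      ∃ a' : Fin m → MvPolynomial (Fin n) ℝ, ∑ i, a' i ^ 2 = ∑ i, a i ^ 2 := by
    rintro m rfl a
    refine ⟨Fin.append a 0, ?_⟩
    rw [Fin.sum_univ_add]
    simp
  obtain ⟨a', ha'⟩ := aux _ ht a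
  obtain ⟨b', hb'⟩ := aux _ ht b
  refine mv_pfister n k a' b' ?_ (by rw [ha', hb', h])
  rintro rfl
  apply hb
  funext i
  exact FRl_mv n _ b (by rw [← hb']; simp) i

/-- Linear symmetric families having eigenvalue `±|u|`. -/
theorem lin_main (n r k : ℕ) (hr : r ≤ 2 ^ k) (L : Fin n → Matrix (Fin r) (Fin r) ℝ)
    (hL : ∀ i, (L i).IsSymm)
    (h : ∀ u : Fin n → ℝ, ∃ v : Fin r → ℝ, v ≠ 0 ∧ ((∑ i, u i • L i) *
      (∑ i, u i • L i) - (∑ i, u i ^ 2) • (1 : Matrix (Fin r) (Fin r) ℝ)).mulVec v = 0) :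
    n ≤ 2 ^ k := by
  let P : Matrix (Fin r) (Fin r) (MvPolynomial (Fin n) ℝ) :=
    ∑ i, (X i : MvPolynomial (Fin n) ℝ) • (L i).map C
  let s : MvPolynomial (Fin n) ℝ := ∑ i, X i ^ 2
  have hdet : (P * P - s • (1 : Matrix (Fin r) (Fin r) (MvPolynomial (Fin n) ℝ))).det = 0 := by
    apply MvPolynomial.funext
    intro u
    rw [RingHom.map_det, map_zero]
    obtain ⟨v, hv, hv0⟩ := h u
    have hP : (eval u).mapMatrix P = ∑ i, u i • L i := by
      simp only [P, map_sum]
      refine Finset.sum_congr rfl fun i _ => ?_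
      ext a b
      simp
    have hs1 : (eval u).mapMatrix (s • (1 : Matrix (Fin r) (Fin r) (MvPolynomial (Fin n) ℝ)))
        = (∑ i, u i ^ 2) • (1 : Matrix (Fin r) (Fin r) ℝ) := by
      ext a b
      by_cases hab : a = b <;> simp [s, hab]
    rw [map_sub, map_mul, hP, hs1]
    exact Matrix.exists_mulVec_eq_zero_iff.1 ⟨v, hv, hv0⟩
  obtain ⟨b, hb, hb0⟩ := Matrix.exists_mulVec_eq_zero_iff.2 hdet
  have hPs : P.transpose = P := by
    simp only [P, Matrix.transpose_sum, Matrix.transpose_smul, ← Matrix.transpose_map, (hL _).eq]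
  refine mv_pfister_le n k r hr (P.mulVec b) b hb ?_
  rw [Matrix.sub_mulVec, sub_eq_zero, ← Matrix.mulVec_mulVec, Matrix.smul_mulVec,
    Matrix.one_mulVec] at hb0
  have e : ∀ w : Fin r → MvPolynomial (Fin n) ℝ, ∑ i, w i ^ 2 = dotProduct w w :=
    fun w => Finset.sum_congr rfl fun i _ => sq _
  rw [e (P.mulVec b), e b, Matrix.dotProduct_mulVec, Matrix.vecMul_mulVec, ← Matrix.mulVec_transpose]
  rw [Matrix.transpose_mul, Matrix.transpose_transpose, hPs, ← Matrix.mulVec_mulVec, hb0,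
    smul_dotProduct, smul_eq_mul]

theorem normal_form (r : ℕ) (A : Matrix (Fin r) (Fin r) ℝ) (hA : A.PosSemidef) :
    ∃ (G : Matrix (Fin r) (Fin r) ℝ) (e : Fin r → ℝ), IsUnit G ∧ (∀ i, e i = 0 ∨ e i = 1) ∧
      star G * A * G = Matrix.diagonal e := by
  have hH := hA.1
  let U : Matrix (Fin r) (Fin r) ℝ := hH.eigenvectorUnitary
  let l := hH.eigenvalues
  have hl : ∀ i, 0 ≤ l i := fun i => hA.eigenvalues_nonneg i
  have hU : star U * A * U = Matrix.diagonal l := by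
    have := hH.conjStarAlgAut_star_eigenvectorUnitary
    rw [Unitary.conjStarAlgAut_apply] at this
    simpa [U, l] using this
  let d : Fin r → ℝ := fun i => if l i = 0 then 1 else (Real.sqrt (l i))⁻¹
  have hd : ∀ i, d i ≠ 0 := by
    intro i
    by_cases h : l i = 0
    · simp [d, h]
    · have : 0 < l i := lt_of_le_of_ne (hl i) (Ne.symm h)
      simp only [d, h, if_false]
      positivity
  refine ⟨U * Matrix.diagonal d, fun i => d i * l i * d i, ?_, ?_, ?_⟩
  · refine IsUnit.mul ?_ ?_
    · exact Unitary.isUnit_coe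
    · rw [Matrix.isUnit_iff_isUnit_det, Matrix.det_diagonal, isUnit_iff_ne_zero]
      exact Finset.prod_ne_zero_iff.2 fun i _ => hd i
  · intro i
    by_cases h : l i = 0
    · simp [h]
    · right
      have : 0 < l i := lt_of_le_of_ne (hl i) (Ne.symm h)
      simp only [d, h, if_false]
      have h2 := Real.mul_self_sqrt (hl i)
      have h3 : Real.sqrt (l i) ≠ 0 := by positivity
      field_simp
      nlinarith
  · have hs : star (Matrix.diagonal d) = Matrix.diagonal d := by
      simp [Matrix.star_eq_conjTranspose]
    calc _ = Matrix.diagonal d * (star U * A * U) * Matrix.diagonal d := by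
          rw [star_mul, hs]; simp only [Matrix.mul_assoc]
      _ = _ := by rw [hU]; simp

theorem eig_neg_one (r : ℕ) (N : Matrix (Fin r) (Fin r) ℝ) (hN : N.IsHermitian)
    (h : ∀ t : ℝ, (1 + t • N).PosSemidef ↔ t ^ 2 ≤ 1) :
    ∃ v : Fin r → ℝ, v ≠ 0 ∧ N.mulVec v = -v := by
  let U : Matrix (Fin r) (Fin r) ℝ := hN.eigenvectorUnitary
  let l := hN.eigenvalues
  have hU : star U * N * U = Matrix.diagonal l := by
    have := hN.conjStarAlgAut_star_eigenvectorUnitary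
    rw [Unitary.conjStarAlgAut_apply] at this
    simpa [U, l] using this
  have hUU : star U * U = 1 := by simp [U]
  have hps : ∀ t : ℝ, (1 + t • N).PosSemidef ↔ ∀ i, 0 ≤ 1 + t * l i := by
    intro t
    have hu : IsUnit U := Unitary.isUnit_coe
    rw [← Matrix.IsUnit.posSemidef_star_left_conjugate_iff hu]
    have : star U * (1 + t • N) * U = Matrix.diagonal (fun i => 1 + t * l i) := by
      rw [Matrix.mul_add, Matrix.add_mul, Matrix.mul_one, hUU, Matrix.mul_smul, Matrix.smul_mul,
        hU, ← Matrix.diagonal_one, ← Matrix.diagonal_smul, Matrix.diagonal_add]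
      rfl
    rw [this, Matrix.posSemidef_diagonal_iff]
  have hex : ∃ i, l i = -1 := by
    by_contra hcon
    push Not at hcon
    have h1 := (hps 1).1 ((h 1).2 (by norm_num))
    have hev : ∀ᶠ t in nhdsWithin (1 : ℝ) (Set.Ioi 1), ∀ i, 0 < 1 + t * l i := by
      rw [Filter.eventually_all]
      intro i
      have hc : ContinuousAt (fun t : ℝ => 1 + t * l i) 1 := by fun_prop
      have hpos : 0 < 1 + 1 * l i := by
        rcases (h1 i).lt_or_eq with h2 | h2
        · exact h2
        · exact absurd (by linarith) (hcon i)
      exact (hc.eventually (lt_mem_nhds hpos)).filter_mono nhdsWithin_le_nhds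
    obtain ⟨t, ht, ht1⟩ := (hev.and self_mem_nhdsWithin).exists
    have := (h t).1 ((hps t).2 fun i => (ht i).le)
    have ht1 : 1 < t := ht1
    nlinarith
  obtain ⟨i, hi⟩ := hex
  refine ⟨(hN.eigenvectorBasis i).ofLp, ?_, ?_⟩
  · intro h0
    have := hN.eigenvectorBasis.orthonormal.ne_zero i
    apply this
    ext j
    exact congrFun h0 j
  · rw [hN.mulVec_eigenvectorBasis, show hN.eigenvalues i = -1 from hi]
    simp

theorem pencil (n r : ℕ) (hn : 0 < n) (A0 : Matrix (Fin r) (Fin r) ℝ)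
    (L : Fin n → Matrix (Fin r) (Fin r) ℝ) (hL : ∀ i, (L i).IsSymm)
    (h : ∀ u : Fin n → ℝ, ∑ i, u i ^ 2 ≤ 1 ↔ (A0 + ∑ i, u i • L i).PosSemidef) :
    ∃ L' : Fin n → Matrix (Fin r) (Fin r) ℝ, (∀ i, (L' i).IsSymm) ∧
     ∀ u : Fin n → ℝ, ∃ v : Fin r → ℝ, v ≠ 0 ∧ ((∑ i, u i • L' i) *
      (∑ i, u i • L' i) - (∑ i, u i ^ 2) • (1 : Matrix (Fin r) (Fin r) ℝ)).mulVec v = 0 := by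
  have hA0 : A0.PosSemidef := by simpa using (h 0).1 (by simp)
  obtain ⟨G, e, hG, he, hD⟩ := normal_form r A0 hA0
  let L' : Fin n → Matrix (Fin r) (Fin r) ℝ := fun i => star G * L i * G
  have hL' : ∀ i, (L' i).IsSymm := by
    intro i
    simp only [L', Matrix.IsSymm, Matrix.transpose_mul, (hL i).eq, Matrix.star_eq_conjTranspose,
      Matrix.conjTranspose_eq_transpose_of_trivial, Matrix.transpose_transpose, Matrix.mul_assoc]
  let M : (Fin n → ℝ) → Matrix (Fin r) (Fin r) ℝ := fun u => ∑ i, u i • L' i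
  have hMs : ∀ u, (M u).IsHermitian := by
    intro u
    simp only [M, Matrix.IsHermitian, Matrix.conjTranspose_eq_transpose_of_trivial,
      Matrix.transpose_sum, Matrix.transpose_smul, (hL' _).eq]
  have hMsmul : ∀ (t : ℝ) u, M (t • u) = t • M u := by
    intro t u
    simp only [M, Finset.smul_sum, smul_smul, Pi.smul_apply, smul_eq_mul]
  have h1 : ∀ u, (Matrix.diagonal e + M u).PosSemidef ↔ ∑ i, u i ^ 2 ≤ 1 := by
    intro u
    rw [h u, ← Matrix.IsUnit.posSemidef_star_left_conjugate_iff (x := A0 + _) hG, Matrix.mul_add,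
      Matrix.add_mul, hD, Matrix.mul_sum, Matrix.sum_mul]
    simp only [M, L', Matrix.mul_smul, Matrix.smul_mul]
  have hz : ∀ i k j, e i = 0 → L' k i j = 0 := by
    intro i k j hi
    have hM1 : M (Pi.single k 1) = L' k := by
      simp [M]
    have p1 : (Matrix.diagonal e + L' k).PosSemidef := by
      rw [← hM1, h1]
      simp [Pi.single_apply]
    have p2 : (Matrix.diagonal e + -L' k).PosSemidef := by
      have := (h1 ((-1 : ℝ) • Pi.single k 1)).2 (by simp [Pi.single_apply])
      rwa [hMsmul, hM1, neg_one_smul] at this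
    have q1 := p1.diag_nonneg (i := i)
    have q2 := p2.diag_nonneg (i := i)
    simp [hi] at q1 q2
    have q3 : L' k i i = 0 := le_antisymm q2 q1
    have q4 := (p1.dotProduct_mulVec_zero_iff (Pi.single i 1)).1 (by simp [q3, hi])
    have q5 := congrFun q4 j
    simp at q5
    by_cases hij : i = j
    · rw [← hij]; exact q3
    · rw [Matrix.diagonal_apply_ne _ (Ne.symm hij), zero_add] at q5
      rw [← (hL' k).apply]; exact q5
  have hDM : ∀ u, Matrix.diagonal e * M u = M u := by
    intro u
    ext i j
    rw [Matrix.diagonal_mul]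
    rcases he i with hi | hi
    · simp [M, Matrix.sum_apply, hz i _ j hi]
    · rw [hi, one_mul]
  have hMD : ∀ u, M u * Matrix.diagonal e = M u := by
    intro u
    have := congrArg Matrix.conjTranspose (hDM u)
    rw [Matrix.conjTranspose_mul, (hMs u).eq] at this
    simpa using this
  have hDD : Matrix.diagonal e * Matrix.diagonal e = Matrix.diagonal e := by
    rw [Matrix.diagonal_mul_diagonal]
    congr 1
    funext i
    rcases he i with hi | hi <;> simp [hi]
  have h2 : ∀ u, (1 + M u).PosSemidef ↔ ∑ i, u i ^ 2 ≤ 1 := by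
    intro u
    rw [← h1 u]
    constructor
    · intro hp
      have := hp.conjTranspose_mul_mul_same (Matrix.diagonal e)
      rw [Matrix.mul_add, Matrix.add_mul] at this
      have hs : (Matrix.diagonal e).conjTranspose = Matrix.diagonal e := by simp
      rwa [hs, Matrix.mul_one, hDD, hDM, hMD] at this
    · intro hp
      have hq : (Matrix.diagonal (fun i => 1 - e i)).PosSemidef := by
        rw [Matrix.posSemidef_diagonal_iff]
        intro i
        rcases he i with hi | hi <;> simp [hi]
      have := hp.add hq
      have e1 : Matrix.diagonal e + M u + Matrix.diagonal (fun i => 1 - e i) = 1 + M u := by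
        rw [add_right_comm, Matrix.diagonal_add]
        simp
      rwa [e1] at this
  have h3 : ∀ u : Fin n → ℝ, u ≠ 0 → ∃ v : Fin r → ℝ, v ≠ 0 ∧
      (M u * M u - (∑ i, u i ^ 2) • (1 : Matrix (Fin r) (Fin r) ℝ)).mulVec v = 0 := by
    intro u hu
    have hpos : 0 < ∑ i, u i ^ 2 := by
      obtain ⟨i, hi⟩ := Function.ne_iff.1 hu
      exact Finset.sum_pos' (fun i _ => sq_nonneg _) ⟨i, Finset.mem_univ _, by
        have : u i ≠ 0 := hi
        positivity⟩
    set s := ∑ i, u i ^ 2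
    have hss : Real.sqrt s * Real.sqrt s = s := Real.mul_self_sqrt hpos.le
    have hsp : 0 < Real.sqrt s := Real.sqrt_pos.2 hpos
    obtain ⟨v, hv, hNv⟩ := eig_neg_one r (M ((Real.sqrt s)⁻¹ • u)) (hMs _) (by
      intro t
      rw [← hMsmul, h2]
      have : ∑ i, (t • (Real.sqrt s)⁻¹ • u) i ^ 2 = t ^ 2 := by
        simp only [Pi.smul_apply, smul_eq_mul, mul_pow]
        rw [← Finset.mul_sum, ← Finset.mul_sum]
        change t ^ 2 * ((Real.sqrt s)⁻¹ ^ 2 * s) = t ^ 2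
        rw [inv_pow, Real.sq_sqrt hpos.le, inv_mul_cancel₀ hpos.ne', mul_one]
      rw [this])
    refine ⟨v, hv, ?_⟩
    have hMu : (M u).mulVec v = -(Real.sqrt s • v) := by
      have : M u = Real.sqrt s • M ((Real.sqrt s)⁻¹ • u) := by
        rw [← hMsmul, smul_smul, mul_inv_cancel₀ hsp.ne', one_smul]
      rw [this, Matrix.smul_mulVec, hNv, smul_neg]
    rw [Matrix.sub_mulVec, ← Matrix.mulVec_mulVec, hMu, Matrix.mulVec_neg, Matrix.mulVec_smul, hMu,
      Matrix.smul_mulVec, Matrix.one_mulVec, smul_neg, neg_neg, smul_smul, hss, sub_self]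
  refine ⟨L', hL', fun u => ?_⟩
  by_cases hu : u = 0
  · obtain ⟨v, hv, -⟩ := h3 (fun _ => 1) (by
      intro h
      have := congrFun h ⟨0, hn⟩
      simp at this)
    exact ⟨v, hv, by simp [hu]⟩
  · exact h3 u hu

theorem quad_form (n : ℕ) (f : MvPolynomial (Fin n) ℝ) (hf : f.totalDegree ≤ 2) :
    ∃ (c : ℝ) (b : Fin n → ℝ) (S : Matrix (Fin n) (Fin n) ℝ), S.IsSymm ∧
      ∀ p, eval p f = c + dotProduct b p + dotProduct p (S.mulVec p) := by
  have hmon : ∀ d : Fin n →₀ ℕ, d.degree ≤ 2 → ∀ a : ℝ,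
      ∃ (c : ℝ) (b : Fin n → ℝ) (S : Matrix (Fin n) (Fin n) ℝ),
      ∀ p, eval p (monomial d a) = c + dotProduct b p + dotProduct p (S.mulVec p) := by
    intro d hd a
    have hcard : (Finsupp.toMultiset d).card ≤ 2 := by
      rw [Finsupp.card_toMultiset]; exact hd
    have hev : ∀ p : Fin n → ℝ, eval p (monomial d a) = a * ((Finsupp.toMultiset d).map p).prod := by
      intro p
      rw [eval_monomial, Finsupp.toMultiset_map, Finsupp.prod_toMultiset,
        Finsupp.prod_mapDomain_index (by simp) (by intros; rw [pow_add])]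
    have h3 : (Finsupp.toMultiset d).card = 0 ∨ (Finsupp.toMultiset d).card = 1 ∨
      (Finsupp.toMultiset d).card = 2 := by omega
    rcases h3 with h | h | h
    · rw [Multiset.card_eq_zero] at h
      exact ⟨a, 0, 0, fun p => by rw [hev, h]; simp⟩
    · rw [Multiset.card_eq_one] at h
      obtain ⟨i, h⟩ := h
      exact ⟨0, Pi.single i a, 0, fun p => by rw [hev, h]; simp⟩
    · rw [Multiset.card_eq_two] at h
      obtain ⟨i, j, h⟩ := h
      refine ⟨0, 0, Matrix.single i j a, fun p => ?_⟩
      rw [hev, h]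
      simp [dotProduct, Matrix.mulVec, Matrix.single_apply, ite_and]
      ring
  have hall : ∀ s : Finset (Fin n →₀ ℕ), (∀ d ∈ s, d.degree ≤ 2) →
      ∃ (c : ℝ) (b : Fin n → ℝ) (S : Matrix (Fin n) (Fin n) ℝ),
      ∀ p, eval p (∑ d ∈ s, monomial d (f.coeff d))
        = c + dotProduct b p + dotProduct p (S.mulVec p) := by
    intro s
    induction s using Finset.induction_on with
    | empty => exact fun _ => ⟨0, 0, 0, fun p => by simp⟩
    | insert d s hds ih =>
      intro hs
      obtain ⟨c, b, S, h⟩ := ih fun d hd => hs d (Finset.mem_insert_of_mem hd)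
      obtain ⟨c', b', S', h'⟩ := hmon d (hs d (Finset.mem_insert_self _ _)) (f.coeff d)
      refine ⟨c' + c, b' + b, S' + S, fun p => ?_⟩
      rw [Finset.sum_insert hds, map_add, h, h', add_dotProduct, Matrix.add_mulVec,
        dotProduct_add]
      ring
  obtain ⟨c, b, S, h⟩ := hall f.support fun d hd => by
    have := le_totalDegree hd
    exact le_trans this hf
  rw [← MvPolynomial.as_sum] at h
  refine ⟨c, b, (1 / 2 : ℝ) • (S + S.transpose), ?_, fun p => ?_⟩
  · simp [Matrix.IsSymm, add_comm]
  · rw [h]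
    have : dotProduct p (S.transpose.mulVec p) = dotProduct p (S.mulVec p) := by
      rw [Matrix.mulVec_transpose, dotProduct_comm, ← Matrix.dotProduct_mulVec]
    rw [Matrix.smul_mulVec, Matrix.add_mulVec, dotProduct_smul, dotProduct_add, this, smul_eq_mul]
    ring

theorem ball_form (n : ℕ) (hn : 0 < n) (f : MvPolynomial (Fin n) ℝ) (hf : f.totalDegree = 2)
    (C : Set (Fin n → ℝ)) (hC : C = {p | 0 ≤ eval p f})
    (hcomp : IsCompact C) (hint : (interior C).Nonempty) :
    ∃ (p0 : Fin n → ℝ) (M : Matrix (Fin n) (Fin n) ℝ),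
      ∀ u : Fin n → ℝ, p0 + M.mulVec u ∈ C ↔ ∑ i, u i ^ 2 ≤ 1 := by
  obtain ⟨c, b, S, hS, hev⟩ := quad_form n f hf.le
  have hmem : ∀ p, p ∈ C ↔ 0 ≤ c + dotProduct b p + dotProduct p (S.mulVec p) := by
    intro p; rw [hC, Set.mem_ofPred_eq, hev]
  have hsym : ∀ x y : Fin n → ℝ, dotProduct x (S.mulVec y) = dotProduct y (S.mulVec x) := by
    intro x y
    rw [Matrix.dotProduct_mulVec, ← Matrix.mulVec_transpose, hS.eq, dotProduct_comm]
  have hexp : ∀ e x : Fin n → ℝ, c + dotProduct b (e + x) +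
      dotProduct (e + x) (S.mulVec (e + x)) = (c + dotProduct b e + dotProduct e (S.mulVec e))
        + (dotProduct b x + 2 * dotProduct x (S.mulVec e)) + dotProduct x (S.mulVec x) := by
    intro e x
    simp only [Matrix.mulVec_add, dotProduct_add, add_dotProduct]
    rw [hsym e x]
    ring
  obtain ⟨R, hR⟩ := hcomp.isBounded.exists_norm_le
  obtain ⟨e, heC⟩ : C.Nonempty := hint.mono interior_subset
  have hneg1 : ∀ x : Fin n → ℝ, x ≠ 0 → 0 ≤ dotProduct b x + 2 * dotProduct x (S.mulVec e) →
      dotProduct x (S.mulVec x) < 0 := by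
    intro x hx hb
    by_contra hq
    push Not at hq
    have hin : ∀ t : ℝ, 0 ≤ t → e + t • x ∈ C := by
      intro t ht
      rw [hmem, hexp]
      have h0 := (hmem e).1 heC
      have h1 := mul_nonneg ht hb
      have h2 := mul_nonneg (mul_nonneg ht ht) hq
      simp only [dotProduct_smul, smul_dotProduct, Matrix.mulVec_smul, smul_eq_mul]
      linarith
    have hxn : 0 < ‖x‖ := norm_pos_iff.2 hx
    have hR0 : 0 ≤ R := (norm_nonneg e).trans (hR e heC)
    have ht : 0 ≤ (R + ‖e‖ + 1) / ‖x‖ := by positivity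
    have h1 := hR _ (hin _ ht)
    have h2 := norm_sub_le (e + ((R + ‖e‖ + 1) / ‖x‖) • x) e
    rw [add_sub_cancel_left, norm_smul, Real.norm_of_nonneg ht, div_mul_cancel₀ _ hxn.ne'] at h2
    linarith
  have hneg : ∀ x : Fin n → ℝ, x ≠ 0 → dotProduct x (S.mulVec x) < 0 := by
    intro x hx
    rcases le_total 0 (dotProduct b x + 2 * dotProduct x (S.mulVec e)) with h | h
    · exact hneg1 x hx h
    · have := hneg1 (-x) (neg_ne_zero.2 hx) (by
        simp only [dotProduct_neg, neg_dotProduct]; linarith)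
      simpa [Matrix.mulVec_neg] using this
  have hPD : (-S).PosDef := by
    refine Matrix.PosDef.of_dotProduct_mulVec_pos ?_ ?_
    · simp [Matrix.IsHermitian, hS.eq]
    · intro x hx
      have := hneg x hx
      simpa [Matrix.neg_mulVec] using this
  obtain ⟨G, g, hG, hg, hD⟩ := normal_form n (-S) hPD.posSemidef
  have hg1 : g = 1 := by
    have h1 := (Matrix.IsUnit.posDef_star_left_conjugate_iff hG).2 hPD
    rw [hD, Matrix.posDef_diagonal_iff] at h1
    funext i
    rcases hg i with h | h
    · have := h1 i
      rw [h] at this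
      exact absurd this (lt_irrefl _)
    · exact h
  have hSu : IsUnit S.det := by
    have := hPD.isUnit
    rw [IsUnit.neg_iff, Matrix.isUnit_iff_isUnit_det] at this
    exact this
  let p0 : Fin n → ℝ := S⁻¹.mulVec (-(1 / 2 : ℝ) • b)
  have hp0 : S.mulVec p0 = -(1 / 2 : ℝ) • b := by
    simp only [p0]
    rw [Matrix.mulVec_mulVec, Matrix.mul_nonsing_inv _ hSu, Matrix.one_mulVec]
  set c' := c + dotProduct b p0 + dotProduct p0 (S.mulVec p0) with hc'
  have hmem2 : ∀ x, p0 + x ∈ C ↔ 0 ≤ c' + dotProduct x (S.mulVec x) := by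
    intro x
    rw [hmem, hexp, ← hc', hp0, dotProduct_smul, dotProduct_comm b x, smul_eq_mul]
    have : c' + (dotProduct x b + 2 * (-(1 / 2) * dotProduct x b)) = c' := by ring
    rw [this]
  have hcpos : 0 < c' := by
    have hnt : Nonempty (Fin n) := ⟨⟨0, hn⟩⟩
    obtain ⟨p, hpC, hp⟩ : ∃ p ∈ C, p ≠ p0 := by
      by_contra hcon
      push Not at hcon
      have : C ⊆ {p0} := fun p hp => hcon p hp
      have h2 := hint.mono (interior_mono this)
      rw [interior_singleton] at h2
      exact Set.not_nonempty_empty h2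
    have h1 := hneg (p - p0) (sub_ne_zero.2 hp)
    have h2 := (hmem2 (p - p0)).1 (by simpa using hpC)
    linarith
  refine ⟨p0, Real.sqrt c' • G, fun u => ?_⟩
  rw [hmem2]
  have hu : dotProduct (G.mulVec u) (S.mulVec (G.mulVec u)) = - ∑ i, u i ^ 2 := by
    have h1 : dotProduct u ((star G * -S * G).mulVec u) = ∑ i, u i ^ 2 := by
      rw [hD, hg1]
      simp [dotProduct, sq]
    rw [← Matrix.mulVec_mulVec, ← Matrix.mulVec_mulVec, Matrix.dotProduct_mulVec,
      Matrix.star_eq_conjTranspose, Matrix.conjTranspose_eq_transpose_of_trivial,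
      Matrix.vecMul_transpose, Matrix.neg_mulVec, dotProduct_neg] at h1
    linarith
  rw [Matrix.smul_mulVec, Matrix.mulVec_smul, dotProduct_smul, smul_dotProduct, hu, smul_eq_mul,
    smul_eq_mul, ← mul_assoc, Real.mul_self_sqrt hcpos.le]
  constructor
  · intro h
    by_contra h2
    push Not at h2
    nlinarith
  · intro h
    nlinarith

theorem core (n r : ℕ) (f : MvPolynomial (Fin n) ℝ) (hf : f.totalDegree = 2)
    (C : Set (Fin n → ℝ)) (hC : C = {p | 0 ≤ eval p f})
    (hcomp : IsCompact C) (hint : (interior C).Nonempty)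
    (A : Fin (n + 1) → Matrix (Fin r) (Fin r) ℝ) (hA : ∀ k, (A k).IsSymm)
    (hrep : ∀ p : Fin n → ℝ,
      p ∈ C ↔ (A 0 + ∑ i : Fin n, p i • A i.succ).PosSemidef) (hn : 0 < n) (k : ℕ)
    (hr : r ≤ 2 ^ k) : n ≤ 2 ^ k := by
  obtain ⟨p0, M, hM⟩ := ball_form n hn f hf C hC hcomp hint
  obtain ⟨Lp, hLp, hv⟩ := pencil n r hn (A 0 + ∑ i : Fin n, p0 i • A i.succ)
    (fun j => ∑ i, M i j • A i.succ)
    (by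
      intro j
      simp only [Matrix.IsSymm, Matrix.transpose_sum, Matrix.transpose_smul, (hA _).eq])
    (by
      intro u
      rw [← hM u, hrep]
      have : ∑ i : Fin n, (p0 + M.mulVec u) i • A i.succ = ∑ i : Fin n, p0 i • A i.succ
          + ∑ j, u j • ∑ i, M i j • A i.succ := by
        simp only [Pi.add_apply, add_smul, Finset.sum_add_distrib, Matrix.mulVec, dotProduct,
          Finset.sum_smul, Finset.smul_sum, smul_smul]
        congr 1
        rw [Finset.sum_comm]
        exact Finset.sum_congr rfl fun j _ => Finset.sum_congr rfl fun i _ => by rw [mul_comm]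
      rw [this, add_assoc])
  exact lin_main n r k hr Lp hLp hv



/-- lower bounds on the size of spectrahedral representations of
compact convex sets defined by a quadratic polynomial. -/
theorem stmt_6 (n r : ℕ) (f : MvPolynomial (Fin n) ℝ) (hf : f.totalDegree = 2)
    (C : Set (Fin n → ℝ)) (hC : C = {p | 0 ≤ eval p f})
    (hcomp : IsCompact C) (hconv : Convex ℝ C) (hint : (interior C).Nonempty)
    (A : Fin (n + 1) → Matrix (Fin r) (Fin r) ℝ) (hA : ∀ k, (A k).IsSymm)
    (hrep : ∀ p : Fin n → ℝ,
      p ∈ C ↔ (A 0 + ∑ i : Fin n, p i • A i.succ).PosSemidef) :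
    (∀ k : ℕ, 2 ^ k < n → 2 ^ k < r) ∧ n ≤ 2 * r ∧
      (∀ k : ℕ, n = 2 ^ k + 1 → n ≤ r) := by
  have h1 : ∀ k : ℕ, 2 ^ k < n → 2 ^ k < r := by
    intro k hk
    by_contra h
    have := core n r f hf C hC hcomp hint A hA hrep (by omega) k (by omega)
    omega
  refine ⟨h1, ?_, ?_⟩
  · by_contra hlt
    have hn : 0 < n := by omega
    by_cases hr : r = 0
    · have := core n r f hf C hC hcomp hint A hA hrep hn 0 (by simp [hr])
      have hn1 : n = 1 := by simp at this; omega
      obtain ⟨p0, M, hM⟩ := ball_form n hn f hf C hC hcomp hint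
      have hall : ∀ p, p ∈ C := by
        intro p
        rw [hrep]
        subst hr
        have : A 0 + ∑ i : Fin n, p i • A i.succ = 0 := Subsingleton.elim _ _
        rw [this]
        exact Matrix.PosSemidef.zero
      have h2 := (hM (fun _ => 2)).1 (hall _)
      subst hn1
      norm_num at h2
    · have h2 : 2 ^ Nat.log 2 r ≤ r := Nat.pow_log_le_self 2 hr
      have h3 : r < 2 ^ (Nat.log 2 r + 1) := Nat.lt_pow_succ_log_self (by norm_num) r
      rw [pow_succ] at h3
      have h4 := core n r f hf C hC hcomp hint A hA hrep hn (Nat.log 2 r + 1)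
        (by rw [pow_succ]; omega)
      rw [pow_succ] at h4
      omega
  · intro k hk
    have := h1 k (by omega)
    omega
end

section
/- Let A, B, C be real symmetric r×r matrices such that f(x,y,z) = det(I_r + Ax + By + Cz) is a polynomial of degree exactly 3. Then the projective surface in ℙ³(ℂ) defined by the homogenization of f is singular, i.e., there is a point of the complex projective surface where all four partial derivatives of the homogenization of f vanish. -/
open Matrix MvPolynomial

lemma binquad (A B C : ℂ) : ∃ s t : ℂ, (s ≠ 0 ∨ t ≠ 0) ∧ A*s^2 + B*(s*t) + C*t^2 = 0 := by
  by_cases hA : A = 0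
  · exact ⟨1, 0, by simp, by simp [hA]⟩
  · obtain ⟨d, hd⟩ := IsAlgClosed.exists_eq_mul_self (discrim A B C)
    obtain ⟨x, hx⟩ := exists_quadratic_eq_zero hA ⟨d, hd⟩
    exact ⟨x, 1, by simp, by linear_combination hx⟩

lemma binquad_vec (S : Matrix (Fin 3) (Fin 3) ℂ) (y z : Fin 3 → ℂ) :
    ∃ s t : ℂ, (s ≠ 0 ∨ t ≠ 0) ∧ (s • y + t • z) ⬝ᵥ S *ᵥ (s • y + t • z) = 0 := by
  obtain ⟨s, t, h, h2⟩ := binquad (y ⬝ᵥ S *ᵥ y) (y ⬝ᵥ S *ᵥ z + z ⬝ᵥ S *ᵥ y) (z ⬝ᵥ S *ᵥ z)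
  refine ⟨s, t, h, ?_⟩
  simp only [mulVec_add, mulVec_smul, add_dotProduct, dotProduct_add, smul_dotProduct,
    dotProduct_smul, smul_eq_mul]
  linear_combination h2

lemma conic_aux (S T : Matrix (Fin 3) (Fin 3) ℂ) (hS : S.IsSymm) (n : Fin 3 → ℂ) (hn : n ≠ 0)
    (h : S *ᵥ n = 0) : ∃ x : Fin 3 → ℂ, x ≠ 0 ∧ x ⬝ᵥ S *ᵥ x = 0 ∧ x ⬝ᵥ T *ᵥ x = 0 := by
  obtain ⟨i, hi⟩ := Function.ne_iff.mp hn
  have hi : n i ≠ 0 := hi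
  have key : ∃ w : Fin 3 → ℂ, w ≠ 0 ∧ w i = 0 ∧ w ⬝ᵥ S *ᵥ w = 0 := by
    obtain ⟨s, t, hst, h0⟩ := binquad_vec S (Pi.single (i+1) 1) (Pi.single (i+2) 1)
    refine ⟨_, ?_, ?_, h0⟩
    · intro h
      have h1 := congrFun h (i+1)
      have h2 := congrFun h (i+2)
      fin_cases i <;> simp_all
    · fin_cases i <;> simp
  obtain ⟨w, hw, hwi, hwS⟩ := key
  obtain ⟨s, t, hst, h0⟩ := binquad_vec T n w
  refine ⟨s • n + t • w, ?_, ?_, h0⟩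
  · intro h
    have h1 := congrFun h i
    simp [hwi, hi] at h1
    subst h1
    simp at hst h
    tauto
  · have h' : n ᵥ* S = 0 := by rw [← mulVec_transpose, hS.eq, h]
    have h'' : n ⬝ᵥ S *ᵥ w = 0 := by rw [dotProduct_mulVec, h']; simp
    simp [mulVec_add, mulVec_smul, h, h'', hwS]

lemma conics (S T : Matrix (Fin 3) (Fin 3) ℂ) (hS : S.IsSymm) (hT : T.IsSymm) :
    ∃ x : Fin 3 → ℂ, x ≠ 0 ∧ x ⬝ᵥ S *ᵥ x = 0 ∧ x ⬝ᵥ T *ᵥ x = 0 := by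
  by_cases hd : T.det = 0
  · obtain ⟨n, hn, h⟩ := exists_mulVec_eq_zero_iff.mpr hd
    obtain ⟨x, h1, h2, h3⟩ := conic_aux T S hT n hn h
    exact ⟨x, h1, h3, h2⟩
  · obtain ⟨μ, hμ⟩ := Module.End.exists_eigenvalue (Matrix.toLin' (T⁻¹ * S))
    obtain ⟨n, hn⟩ := hμ.exists_hasEigenvector
    have h1 := hn.apply_eq_smul
    have h2 : S *ᵥ n = μ • T *ᵥ n := by
      have := congrArg (fun y => T *ᵥ y) h1
      simp only [toLin'_apply, mulVec_mulVec, mulVec_smul] at this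
      rw [← Matrix.mul_assoc, Matrix.mul_nonsing_inv _ (by simpa using hd), Matrix.one_mul] at this
      exact this
    obtain ⟨x, h1, h3, h4⟩ := conic_aux (S - μ • T) T (by
      simp [IsSymm, transpose_sub, transpose_smul, hS.eq, hT.eq]) n hn.2 (by
      simp [sub_mulVec, smul_mulVec, h2])
    refine ⟨x, h1, ?_, h4⟩
    simpa [sub_mulVec, smul_mulVec, h4] using h3

/-- entries 00,11,22,12,02,01 -/
lemma rank_one_point (T : (Fin 4 → ℂ) →ₗ[ℂ] (Fin 6 → ℂ)) : ∃ p : Fin 4 → ℂ, p ≠ 0 ∧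
    ∃ x : Fin 3 → ℂ, T p = ![x 0 * x 0, x 1 * x 1, x 2 * x 2, x 1 * x 2, x 0 * x 2, x 0 * x 1] := by
  by_cases hinj : Function.Injective T
  · have hr : Module.finrank ℂ (LinearMap.range T) = 4 := by
      rw [LinearMap.finrank_range_of_inj hinj]; simp
    have hq : Module.finrank ℂ ((Fin 6 → ℂ) ⧸ LinearMap.range T) = Module.finrank ℂ (Fin 2 → ℂ) := by
      have := (LinearMap.range T).finrank_quotient_add_finrank
      rw [hr] at this
      simp at this ⊢
      omega
    let e := LinearEquiv.ofFinrankEq _ _ hq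
    let φ : (Fin 6 → ℂ) →ₗ[ℂ] (Fin 2 → ℂ) := e.toLinearMap ∘ₗ (LinearMap.range T).mkQ
    have hφ : ∀ y, φ y = 0 → y ∈ LinearMap.range T := by
      intro y hy
      simpa [φ] using hy
    have hexp : ∀ (y : Fin 6 → ℂ) (i), φ y i = ∑ k, y k * φ (Pi.single k 1) i := by
      intro y i
      conv_lhs => rw [LinearMap.pi_apply_eq_sum_univ φ y]
      simp only [Finset.sum_apply, Pi.smul_apply, smul_eq_mul]
      refine Finset.sum_congr rfl fun k _ => ?_
      have hk : (fun j => if k = j then (1 : ℂ) else 0) = Pi.single k 1 := by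
        ext j
        simp [Pi.single_apply, eq_comm]
      rw [hk]
    let S : Fin 2 → Matrix (Fin 3) (Fin 3) ℂ := fun i =>
      let c := fun k => φ (Pi.single k 1) i
      !![c 0, c 5 / 2, c 4 / 2; c 5 / 2, c 1, c 3 / 2; c 4 / 2, c 3 / 2, c 2]
    have hS : ∀ i, (S i).IsSymm := by
      intro i
      ext a b
      fin_cases a <;> fin_cases b <;> rfl
    obtain ⟨x, hx, h0, h1⟩ := conics (S 0) (S 1) (hS 0) (hS 1)
    have hz : φ ![x 0 * x 0, x 1 * x 1, x 2 * x 2, x 1 * x 2, x 0 * x 2, x 0 * x 1] = 0 := by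
      have hh : ∀ i, x ⬝ᵥ S i *ᵥ x = φ ![x 0 * x 0, x 1 * x 1, x 2 * x 2, x 1 * x 2, x 0 * x 2, x 0 * x 1] i := by
        intro i
        rw [hexp]
        simp [S, dotProduct, mulVec, Fin.sum_univ_succ]
        ring
      ext i
      rw [← hh]
      fin_cases i
      · exact h0
      · exact h1
    obtain ⟨p, hp⟩ := hφ _ hz
    refine ⟨p, ?_, x, hp⟩
    rintro rfl
    apply hx
    rw [map_zero] at hp
    ext i
    have h0 := congrFun hp 0
    have h1 := congrFun hp 1
    have h2 := congrFun hp 2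
    fin_cases i <;> simp_all
  · rw [← LinearMap.ker_eq_bot] at hinj
    obtain ⟨p, hp, hp0⟩ := Submodule.exists_mem_ne_zero_of_ne_bot hinj
    exact ⟨p, hp0, 0, by rw [LinearMap.mem_ker.mp hp]; ext i; fin_cases i <;> simp⟩

lemma hom_eval_smul {n : ℕ} {F : MvPolynomial (Fin 4) ℝ} (hF : F.IsHomogeneous n) (c : ℝ)
    (x : Fin 4 → ℝ) : eval (c • x) F = c ^ n * eval x F := by
  rw [eval_eq, eval_eq, Finset.mul_sum]
  refine Finset.sum_congr rfl fun d hd => ?_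
  have h1 : d.degree = n := by
    by_contra h
    exact (mem_support_iff.mp hd) (hF.coeff_eq_zero h)
  simp only [Pi.smul_apply, smul_eq_mul, mul_pow, Finset.prod_mul_distrib]
  rw [Finset.prod_pow_eq_pow_sum, ← Finsupp.degree_apply, h1]
  ring

lemma F_unique {F G : MvPolynomial (Fin 4) ℝ} (hF : F.IsHomogeneous 3) (hG : G.IsHomogeneous 3)
    (h : ∀ v : Fin 3 → ℝ, eval (vecCons 1 v) F = eval (vecCons 1 v) G) : F = G := by
  have h1 : X 0 * F = X 0 * G := by
    refine MvPolynomial.funext fun x => ?_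
    simp only [map_mul, eval_X]
    by_cases hx : x 0 = 0
    · simp [hx]
    · have h2 : x = x 0 • (vecCons 1 ((x 0)⁻¹ • vecTail x)) := by
        ext i
        refine Fin.cases ?_ (fun j => ?_) i
        · simp
        · simp [vecTail, hx]
      rw [h2, hom_eval_smul hF, hom_eval_smul hG, h]
  exact mul_left_cancel₀ (X_ne_zero 0) h1

/-- linear form in the last three variables -/
noncomputable def lf (l : (Fin 3 → ℝ) →ₗ[ℝ] ℝ) : MvPolynomial (Fin 4) ℝ :=
  ∑ i : Fin 3, C (l (Pi.single i 1)) * X i.succ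

lemma lf_hom (l) : (lf l).IsHomogeneous 1 := by
  refine IsHomogeneous.sum _ _ _ fun i _ => ?_
  simpa using (isHomogeneous_C _ _).mul (isHomogeneous_X ℝ i.succ)

lemma lf_eval (l) (w : ℝ) (v : Fin 3 → ℝ) : eval (vecCons w v) (lf l) = l v := by
  conv_rhs => rw [LinearMap.pi_apply_eq_sum_univ l v]
  simp only [lf, map_sum, map_mul, eval_C, eval_X, smul_eq_mul]
  refine Finset.sum_congr rfl fun k _ => ?_
  have hk : (fun j => if k = j then (1 : ℝ) else 0) = Pi.single k 1 := by
    ext j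
    simp [Pi.single_apply, eq_comm]
  rw [hk]
  simp [mul_comm]

/-- complex evaluation as a linear map -/
noncomputable def lfc (l : (Fin 3 → ℝ) →ₗ[ℝ] ℝ) : (Fin 4 → ℂ) →ₗ[ℂ] ℂ :=
  ∑ i : Fin 3, (l (Pi.single i 1) : ℂ) • LinearMap.proj i.succ

lemma lf_aeval (l) (p : Fin 4 → ℂ) : aeval p (lf l) = lfc l p := by
  simp [lf, lfc, LinearMap.sum_apply]

lemma final2 {κ : Type*} [Fintype κ] (F : MvPolynomial (Fin 4) ℝ) (hF : F.IsHomogeneous 3)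
    (p q s : (Fin 3 → ℝ) →ₗ[ℝ] ℝ) (c : κ → (Fin 3 → ℝ) →ₗ[ℝ] ℝ)
    (h : ∀ v : Fin 3 → ℝ, eval (vecCons 1 v) F
      = (1 + q v) * (1 + p v - ∑ j, (c j v) ^ 2) - (s v) ^ 2) :
    ∃ p : Fin 4 → ℂ, p ≠ 0 ∧ aeval p F = 0 ∧ ∀ i, aeval p (pderiv i F) = 0 := by
  set H : MvPolynomial (Fin 4) ℝ := X 0 * (X 0 + lf p) - ∑ j, lf (c j) * lf (c j) with hH
  have hX := isHomogeneous_X ℝ (0 : Fin 4)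
  have hHh : H.IsHomogeneous 2 := by
    refine (hX.mul (hX.add (lf_hom p))).sub ?_
    exact IsHomogeneous.sum _ _ _ fun j _ => (lf_hom (c j)).mul (lf_hom (c j))
  have hFG : F = (X 0 + lf q) * H - X 0 * (lf s * lf s) := by
    refine F_unique hF ?_ ?_
    · exact ((hX.add (lf_hom q)).mul hHh).sub (hX.mul ((lf_hom s).mul (lf_hom s)))
    · intro v
      rw [h]
      simp only [hH, map_sub, map_add, map_mul, map_sum, lf_eval, eval_X, cons_val_zero]
      simp only [pow_two]
      ring
  let W : (Fin 4 → ℂ) →ₗ[ℂ] ℂ := LinearMap.proj 0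
  let T : (Fin 4 → ℂ) →ₗ[ℂ] (Fin 2 → ℂ) := LinearMap.pi ![W + lfc q, lfc s]
  have hk : 1 < Module.finrank ℂ (LinearMap.ker T) := by
    have h1 := T.finrank_range_add_finrank_ker
    have h2 := (LinearMap.range T).finrank_le
    simp at h1 h2
    omega
  have : Nontrivial (LinearMap.ker T) := Module.nontrivial_of_finrank_pos (R := ℂ) (lt_trans zero_lt_one hk)
  obtain ⟨y, hy⟩ := exists_ne (0 : LinearMap.ker T)
  obtain ⟨z, hz⟩ := exists_linearIndependent_pair_of_one_lt_finrank hk hy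
  obtain ⟨α, β, hαβ, hq⟩ := binquad (W y * (W y + lfc p y) - ∑ j, lfc (c j) y * lfc (c j) y)
    (W y * (W z + lfc p z) + W z * (W y + lfc p y) - ∑ j, 2 * (lfc (c j) y * lfc (c j) z))
    (W z * (W z + lfc p z) - ∑ j, lfc (c j) z * lfc (c j) z)
  have hP0 : α • y + β • z ≠ 0 := by
    intro h0
    have := LinearIndependent.pair_iff.mp hz α β h0
    tauto
  have hTP : T ((α • y + β • z : LinearMap.ker T) : Fin 4 → ℂ) = 0 :=
    (α • y + β • z : LinearMap.ker T).2
  set P : Fin 4 → ℂ := ((α • y + β • z : LinearMap.ker T) : Fin 4 → ℂ) with hP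
  have e1 : aeval P (X 0 + lf q) = 0 := by
    have := congrFun hTP 0
    simpa [T, W, lf_aeval] using this
  have e2 : aeval P (lf s) = 0 := by
    have := congrFun hTP 1
    simpa [T, W, lf_aeval] using this
  have e3 : aeval P H = 0 := by
    have hX0 : aeval P (X 0 : MvPolynomial (Fin 4) ℝ) = W P := by simp [W]
    have hP' : P = α • (y : Fin 4 → ℂ) + β • (z : Fin 4 → ℂ) := by simp [hP]
    rw [hH]
    simp only [map_sub, map_add, map_mul, map_sum, lf_aeval]
    rw [hX0, hP']
    simp only [map_add, map_smul, smul_eq_mul]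
    rw [← hq]
    have : ∑ j, (α * lfc (c j) y + β * lfc (c j) z) * (α * lfc (c j) y + β * lfc (c j) z)
      = α ^ 2 * (∑ j, lfc (c j) y * lfc (c j) y) + α * β * (∑ j, 2 * (lfc (c j) y * lfc (c j) z))
        + β ^ 2 * ∑ j, lfc (c j) z * lfc (c j) z := by
      simp only [Finset.mul_sum, ← Finset.sum_add_distrib]
      refine Finset.sum_congr rfl fun j _ => by ring
    rw [this]
    ring
  refine ⟨P, ?_, ?_, fun i => ?_⟩
  · intro h0
    apply hP0
    exact Subtype.ext h0
  · rw [hFG]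
    simp only [map_sub, map_mul, e1, e2, e3]
    ring
  · rw [hFG]
    have e1' : P 0 + aeval P (lf q) = 0 := by simpa using e1
    simp [Derivation.leibniz, e1', e2, e3]

lemma final1 (F : MvPolynomial (Fin 4) ℝ) (hF : F.IsHomogeneous 3)
    (a : Fin 3 → Fin 3 → (Fin 3 → ℝ) →ₗ[ℝ] ℝ)
    (h : ∀ v : Fin 3 → ℝ, eval (vecCons 1 v) F
      = (1 + a 0 0 v) * (1 + a 1 1 v) * (1 + a 2 2 v) + 2 * (a 0 1 v * a 0 2 v * a 1 2 v)
        - (1 + a 0 0 v) * (a 1 2 v * a 1 2 v) - (1 + a 1 1 v) * (a 0 2 v * a 0 2 v)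
        - (1 + a 2 2 v) * (a 0 1 v * a 0 1 v)) :
    ∃ p : Fin 4 → ℂ, p ≠ 0 ∧ aeval p F = 0 ∧ ∀ i, aeval p (pderiv i F) = 0 := by
  have hX := isHomogeneous_X ℝ (0 : Fin 4)
  set A := X 0 + lf (a 0 0) with hA
  set B := X 0 + lf (a 1 1) with hB
  set D := X 0 + lf (a 2 2) with hD
  set f := lf (a 1 2) with hf
  set g := lf (a 0 2) with hg
  set k := lf (a 0 1) with hk
  have hA1 : A.IsHomogeneous 1 := hX.add (lf_hom _)
  have hB1 : B.IsHomogeneous 1 := hX.add (lf_hom _)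
  have hD1 : D.IsHomogeneous 1 := hX.add (lf_hom _)
  have hf1 : f.IsHomogeneous 1 := lf_hom _
  have hg1 : g.IsHomogeneous 1 := lf_hom _
  have hk1 : k.IsHomogeneous 1 := lf_hom _
  have hFG : F = A * B * D + (k * g * f + k * g * f) - A * (f * f) - B * (g * g) - D * (k * k) := by
    refine F_unique hF ?_ ?_
    · have t1 := (hA1.mul hB1).mul hD1
      have t2 := (hk1.mul hg1).mul hf1
      exact (((t1.add (t2.add t2)).sub (hA1.mul (hf1.mul hf1))).sub (hB1.mul (hg1.mul hg1))).sub
        (hD1.mul (hk1.mul hk1))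
    · intro v
      rw [h]
      simp only [hA, hB, hD, hf, hg, hk, map_sub, map_add, map_mul, lf_eval, eval_X, cons_val_zero]
      ring
  let W : (Fin 4 → ℂ) →ₗ[ℂ] ℂ := LinearMap.proj 0
  obtain ⟨p, hp, x, hx⟩ := rank_one_point (LinearMap.pi ![W + lfc (a 0 0), W + lfc (a 1 1),
    W + lfc (a 2 2), lfc (a 1 2), lfc (a 0 2), lfc (a 0 1)])
  have eA : aeval p A = x 0 * x 0 := by simpa [hA, lf_aeval, W] using congrFun hx 0
  have eB : aeval p B = x 1 * x 1 := by simpa [hB, lf_aeval, W] using congrFun hx 1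
  have eD : aeval p D = x 2 * x 2 := by simpa [hD, lf_aeval, W] using congrFun hx 2
  have ef : aeval p f = x 1 * x 2 := by simpa [hf, lf_aeval, W] using congrFun hx 3
  have eg : aeval p g = x 0 * x 2 := by simpa [hg, lf_aeval, W] using congrFun hx 4
  have ek : aeval p k = x 0 * x 1 := by simpa [hk, lf_aeval, W] using congrFun hx 5
  refine ⟨p, hp, ?_, fun i => ?_⟩
  · rw [hFG]
    simp only [map_sub, map_add, map_mul, eA, eB, eD, ef, eg, ek]
    ring
  · rw [hFG]
    simp only [map_sub, map_add, Derivation.leibniz, smul_eq_mul, map_mul, eA, eB, eD, ef, eg, ek]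
    ring

lemma det_one_add_smul {r : ℕ} {M : Matrix (Fin r) (Fin r) ℝ} (hM : M.IsHermitian) (t : ℝ) :
    det (1 + t • M) = ∏ i, (1 + t * hM.eigenvalues i) := by
  have h := hM.spectral_theorem
  rw [Unitary.conjStarAlgAut_apply] at h
  set U : Matrix (Fin r) (Fin r) ℝ := (hM.eigenvectorUnitary : Matrix (Fin r) (Fin r) ℝ) with hU
  have hUU : U * star U = 1 := Unitary.coe_mul_star_self hM.eigenvectorUnitary
  have h2 : 1 + t • M = U * diagonal (fun i => 1 + t * hM.eigenvalues i) * star U := by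
    have : diagonal (fun i => 1 + t * hM.eigenvalues i)
        = 1 + t • diagonal (RCLike.ofReal ∘ hM.eigenvalues : Fin r → ℝ) := by
      ext i j
      by_cases hij : i = j
      · subst hij; simp
      · simp [hij]
    rw [this, Matrix.mul_add, Matrix.add_mul, Matrix.mul_one, hUU, Matrix.mul_smul,
      Matrix.smul_mul]
    conv_lhs => rw [h]
  rw [h2, det_mul_right_comm, hUU]
  simp

lemma lineEval (f : MvPolynomial (Fin 3) ℝ) (v : Fin 3 → ℝ) (t : ℝ) :
    Polynomial.eval t (aeval (fun i => Polynomial.C (v i) * Polynomial.X) f)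
      = eval (t • v) f := by
  induction f using MvPolynomial.induction_on with
  | C a => simp
  | add p q hp hq => simp only [map_add, Polynomial.eval_add, hp, hq]
  | mul_X p i hp => simp only [map_mul, Polynomial.eval_mul, hp, aeval_X, eval_X]; simp [mul_comm]

lemma lineCoeff (f : MvPolynomial (Fin 3) ℝ) (v : Fin 3 → ℝ) (n : ℕ) :
    Polynomial.coeff (aeval (fun i => Polynomial.C (v i) * Polynomial.X) f) n
      = eval v (homogeneousComponent n f) := by
  induction f using MvPolynomial.induction_on' with
  | monomial u a =>
    have h1 : aeval (fun i => Polynomial.C (v i) * Polynomial.X) (monomial u a)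
        = Polynomial.C (a * u.prod fun i k => v i ^ k) * Polynomial.X ^ u.degree := by
      rw [aeval_monomial]
      simp only [mul_pow, Finsupp.prod_mul, map_mul, mul_assoc]
      simp only [Finsupp.prod, map_prod, map_pow, Finset.prod_pow_eq_pow_sum, Finsupp.degree_apply]
      rfl
    rw [h1, Polynomial.coeff_C_mul_X_pow]
    split_ifs with h
    · rw [homogeneousComponent_of_mem (isHomogeneous_monomial a h.symm)]
      simp [eval_monomial]
    · rw [homogeneousComponent_of_mem (isHomogeneous_monomial a rfl)]
      simp [h]
  | add p q hp hq => simp only [map_add, Polynomial.coeff_add, hp, hq]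

lemma rank_line {r : ℕ} (f : MvPolynomial (Fin 3) ℝ)
    (N : (Fin 3 → ℝ) →ₗ[ℝ] Matrix (Fin r) (Fin r) ℝ)
    (hN : ∀ v, (N v).IsHermitian) (hdet : ∀ v, eval v f = det (1 + N v)) (v : Fin 3 → ℝ) :
    (aeval (fun i => Polynomial.C (v i) * Polynomial.X) f : Polynomial ℝ).natDegree
      = (N v).rank := by
  have h1 : (aeval (fun i => Polynomial.C (v i) * Polynomial.X) f : Polynomial ℝ)
      = ∏ i, (1 + Polynomial.C ((hN v).eigenvalues i) * Polynomial.X) := by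
    refine Polynomial.funext fun t => ?_
    rw [lineEval, hdet, map_smul, det_one_add_smul (hN v), Polynomial.eval_prod]
    refine Finset.prod_congr rfl fun i _ => ?_
    simp only [Polynomial.eval_add, Polynomial.eval_one, Polynomial.eval_mul, Polynomial.eval_C,
      Polynomial.eval_X]
    ring
  have hne : ∀ c : ℝ, (1 + Polynomial.C c * Polynomial.X : Polynomial ℝ) ≠ 0 := by
    intro c h
    have := congrArg (Polynomial.eval 0) h
    simp at this
  have hnd : ∀ c : ℝ, (1 + Polynomial.C c * Polynomial.X : Polynomial ℝ).natDegree
      = if c ≠ 0 then 1 else 0 := by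
    intro c
    split_ifs with h
    · rw [add_comm]
      exact Polynomial.natDegree_linear (b := 1) h
    · simp only [ne_eq, not_not] at h
      simp [h]
  rw [h1, Polynomial.natDegree_prod _ _ (fun i _ => hne _), (hN v).rank_eq_card_non_zero_eigs,
    Fintype.card_subtype]
  simp only [hnd, Finset.sum_ite, Finset.sum_const_zero, add_zero, Finset.sum_const, smul_eq_mul,
    mul_one]

lemma rank_le_three {r : ℕ} (f : MvPolynomial (Fin 3) ℝ) (hdeg : f.totalDegree = 3)
    (N : (Fin 3 → ℝ) →ₗ[ℝ] Matrix (Fin r) (Fin r) ℝ)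
    (hN : ∀ v, (N v).IsHermitian) (hdet : ∀ v, eval v f = det (1 + N v)) (v : Fin 3 → ℝ) :
    (N v).rank ≤ 3 := by
  rw [← rank_line f N hN hdet]
  exact aeval_natDegree_le (n := 1) f hdeg.le _ fun i => (Polynomial.natDegree_C_mul_le _ _).trans Polynomial.natDegree_X_le

lemma rank_eq_three {r : ℕ} (f : MvPolynomial (Fin 3) ℝ) (hdeg : f.totalDegree = 3)
    (N : (Fin 3 → ℝ) →ₗ[ℝ] Matrix (Fin r) (Fin r) ℝ)
    (hN : ∀ v, (N v).IsHermitian) (hdet : ∀ v, eval v f = det (1 + N v)) :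
    ∃ v, (N v).rank = 3 := by
  have h1 : homogeneousComponent 3 f ≠ 0 := by
    intro h0
    have hs : f.support.Nonempty := by
      rw [support_nonempty]; rintro rfl; simp at hdeg
    obtain ⟨u, hu, hu3⟩ := Finset.exists_mem_eq_sup f.support hs (fun s => s.sum fun _ e => e)
    have h3 : u.degree = 3 := by
      exact hu3.symm.trans hdeg
    have := congrArg (coeff u) h0
    rw [coeff_homogeneousComponent, if_pos h3, coeff_zero] at this
    exact mem_support_iff.mp hu this
  have h2 : ∃ v, eval v (homogeneousComponent 3 f) ≠ 0 := by
    by_contra! hc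
    exact h1 (MvPolynomial.funext fun x => by simp [hc])
  obtain ⟨v, hv⟩ := h2
  refine ⟨v, le_antisymm (rank_le_three f hdeg N hN hdet v) ?_⟩
  rw [← rank_line f N hN hdet]
  rw [← lineCoeff] at hv
  exact Polynomial.le_natDegree_of_ne_zero hv

lemma stageB1 {r : ℕ} (N : (Fin 3 → ℝ) →ₗ[ℝ] Matrix (Fin r) (Fin r) ℝ)
    (hN : ∀ v, (N v).IsHermitian) (v0 : Fin 3 → ℝ) (h0 : (N v0).rank = 3) :
    ∃ (κ : Type) (_ : Fintype κ) (_ : DecidableEq κ)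
      (M : (Fin 3 → ℝ) →ₗ[ℝ] Matrix (Fin 3 ⊕ κ) (Fin 3 ⊕ κ) ℝ) (d : Fin 3 → ℝ),
      (∀ v, (M v).IsSymm) ∧ (∀ v, det (1 + N v) = det (1 + M v)) ∧
      (∀ v, (M v).rank ≤ (N v).rank) ∧ M v0 = fromBlocks (diagonal d) 0 0 0 ∧ ∀ i, d i ≠ 0 := by
  classical
  have hs := (hN v0).conjStarAlgAut_star_eigenvectorUnitary
  rw [Unitary.conjStarAlgAut_star_apply] at hs
  set U : Matrix (Fin r) (Fin r) ℝ := ((hN v0).eigenvectorUnitary : Matrix (Fin r) (Fin r) ℝ)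
    with hU
  have hUU : star U * U = 1 := Unitary.coe_star_mul_self (hN v0).eigenvectorUnitary
  have hUU' : U * star U = 1 := Unitary.coe_mul_star_self (hN v0).eigenvectorUnitary
  set ev := (hN v0).eigenvalues with hev
  have hcard : Fintype.card {i // ev i ≠ 0} = Fintype.card (Fin 3) := by
    rw [← (hN v0).rank_eq_card_non_zero_eigs, h0]; simp
  let e3 := Fintype.equivOfCardEq hcard
  let κ := {i // ¬ ev i ≠ 0}
  let e : Fin r ≃ Fin 3 ⊕ κ :=
    (Equiv.sumCompl (fun i => ev i ≠ 0)).symm.trans (Equiv.sumCongr e3 (Equiv.refl _))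
  let M : (Fin 3 → ℝ) →ₗ[ℝ] Matrix (Fin 3 ⊕ κ) (Fin 3 ⊕ κ) ℝ :=
    (Matrix.reindexLinearEquiv ℝ ℝ e e).toLinearMap ∘ₗ LinearMap.mulLeft ℝ (star U) ∘ₗ
      LinearMap.mulRight ℝ U ∘ₗ N
  have hM : ∀ v, M v = (star U * (N v * U)).submatrix e.symm e.symm := fun v => rfl
  refine ⟨κ, inferInstance, inferInstance, M, fun i => ev (e3.symm i), ?_, ?_, ?_, ?_, ?_⟩
  · intro v
    have h1 : (star U * (N v * U)).IsSymm := by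
      have := isHermitian_conjTranspose_mul_mul U (hN v)
      rw [Matrix.mul_assoc] at this
      rw [Matrix.IsSymm, ← conjTranspose_eq_transpose_of_trivial]
      exact this
    rw [hM]
    exact h1.submatrix _
  · intro v
    have h1 : 1 + M v = (star U * (1 + N v) * U).submatrix e.symm e.symm := by
      rw [hM, Matrix.mul_add, Matrix.add_mul, Matrix.mul_one, hUU, submatrix_add, Matrix.mul_assoc]
      simp
    rw [h1, det_submatrix_equiv_self, det_mul_right_comm, hUU]
    simp
  · intro v
    rw [hM]
    refine (rank_submatrix_le _ _ _).trans ?_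
    exact (rank_mul_le_right _ _).trans (rank_mul_le_left _ _)
  · rw [hM, ← Matrix.mul_assoc, hs]
    ext i j
    rcases i with i | i <;> rcases j with j | j
    · change diagonal ev (e3.symm i : Fin r) (e3.symm j : Fin r) = _
      by_cases hij : i = j
      · subst hij; simp
      · have : (e3.symm i : Fin r) ≠ e3.symm j := fun h => hij (e3.symm.injective (Subtype.ext h))
        simp [hij, this]
    · have : (e3.symm i : Fin r) ≠ j := fun h => j.2 (h ▸ (e3.symm i).2)
      change diagonal ev (e3.symm i : Fin r) (j : Fin r) = 0
      exact diagonal_apply_ne _ this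
    · have : (i : Fin r) ≠ e3.symm j := fun h => i.2 (h ▸ (e3.symm j).2)
      change diagonal ev (i : Fin r) (e3.symm j : Fin r) = 0
      exact diagonal_apply_ne _ this
    · have h2 : ev i = 0 := not_not.mp i.2
      change diagonal ev (i : Fin r) (j : Fin r) = 0
      simp [diagonal_apply, h2]
  · intro i
    exact (e3.symm i).2

lemma det4 (a : Matrix (Fin 4) (Fin 4) ℝ) (α : Matrix (Fin 3) (Fin 3) ℝ) (x y : Fin 3 → ℝ) (n : ℝ)
   (h : a = !![α 0 0, α 0 1, α 0 2, x 0; α 1 0, α 1 1, α 1 2, x 1; α 2 0, α 2 1, α 2 2, x 2;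
      y 0, y 1, y 2, n]) : det a = n * det α - y ⬝ᵥ adjugate α *ᵥ x := by
  subst h
  rw [det_succ_row_zero, adjugate_fin_three, det_fin_three]
  simp [Fin.sum_univ_succ, det_fin_three, mulVec, dotProduct, Fin.succAbove]
  ring

lemma adj_line (α : Matrix (Fin 3) (Fin 3) ℝ) (d x y : Fin 3 → ℝ) 
    (h : ∀ t : ℝ, y ⬝ᵥ adjugate (α + t • diagonal d) *ᵥ x = 0) :
    y 0 * x 0 * (d 1 * d 2) + y 1 * x 1 * (d 0 * d 2) + y 2 * x 2 * (d 0 * d 1) = 0 := by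
  have h0 := h 0
  have h1 := h 1
  have h2 := h (-1)
  simp [adjugate_fin_three, mulVec, dotProduct, Fin.sum_univ_succ] at h0 h1 h2
  linear_combination (1/2) * h1 + (1/2) * h2 - h0

lemma stageB2 {κ : Type} [Fintype κ] [DecidableEq κ]
    (M : (Fin 3 → ℝ) →ₗ[ℝ] Matrix (Fin 3 ⊕ κ) (Fin 3 ⊕ κ) ℝ) (d : Fin 3 → ℝ)
    (hs : ∀ v, (M v).IsSymm) (hr : ∀ v, (M v).rank ≤ 3) (v0 : Fin 3 → ℝ)
    (h0 : M v0 = fromBlocks (diagonal d) 0 0 0) (hd : ∀ i, d i ≠ 0) :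
    ∃ (a : (Fin 3 → ℝ) →ₗ[ℝ] Matrix (Fin 3) (Fin 3) ℝ)
      (b : (Fin 3 → ℝ) →ₗ[ℝ] Matrix (Fin 3) κ ℝ),
      (∀ v, (a v).IsSymm) ∧ (∀ v, det (1 + M v) = det (1 + a v - b v * (b v)ᵀ)) ∧
      (∀ v j k, (b v)ᵀ j ⬝ᵥ adjugate (a v) *ᵥ (b v)ᵀ k = 0) ∧
      a v0 = diagonal d ∧ b v0 = 0 := by
  let a : (Fin 3 → ℝ) →ₗ[ℝ] Matrix (Fin 3) (Fin 3) ℝ :=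
    { toFun := fun v => (M v).toBlocks₁₁
      map_add' := fun x y => by rw [map_add]; rfl
      map_smul' := fun x y => by rw [map_smul]; rfl }
  let b : (Fin 3 → ℝ) →ₗ[ℝ] Matrix (Fin 3) κ ℝ :=
    { toFun := fun v => (M v).toBlocks₁₂
      map_add' := fun x y => by rw [map_add]; rfl
      map_smul' := fun x y => by rw [map_smul]; rfl }
  have ha0 : a v0 = diagonal d := by
    change (M v0).toBlocks₁₁ = _
    rw [h0, toBlocks_fromBlocks₁₁]
  have hb0 : b v0 = 0 := by
    change (M v0).toBlocks₁₂ = _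
    rw [h0, toBlocks_fromBlocks₁₂]
  have hsym : ∀ v i j, M v i j = M v j i := fun v i j => (hs v).apply j i
  have hmin : ∀ v j k, M v (Sum.inr j) (Sum.inr k) * det (a v)
      - (b v)ᵀ j ⬝ᵥ adjugate (a v) *ᵥ (b v)ᵀ k = 0 := by
    intro v j k
    rw [← det4 ((M v).submatrix ![Sum.inl 0, Sum.inl 1, Sum.inl 2, Sum.inr j]
      ![Sum.inl 0, Sum.inl 1, Sum.inl 2, Sum.inr k])]
    · by_contra hne
      have h1 := rank_of_isUnit ((M v).submatrix ![Sum.inl 0, Sum.inl 1, Sum.inl 2, Sum.inr j]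
        ![Sum.inl 0, Sum.inl 1, Sum.inl 2, Sum.inr k])
        ((isUnit_iff_isUnit_det _).mpr (isUnit_iff_ne_zero.mpr hne))
      have h2 := rank_submatrix_le (M v) ![Sum.inl 0, Sum.inl 1, Sum.inl 2, Sum.inr j]
        ![Sum.inl 0, Sum.inl 1, Sum.inl 2, Sum.inr k]
      have h3 := hr v
      rw [h1] at h2
      simp at h2
      omega
    · ext i l
      fin_cases i <;> fin_cases l <;> first | rfl | exact hsym _ _ _
  have hD : ∀ v j k, M v (Sum.inr j) (Sum.inr k) = 0 := by
    intro v j k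
    have hl : ∀ t : ℝ, M v (Sum.inr j) (Sum.inr k) * det (a v + t • diagonal d)
      - (b v)ᵀ j ⬝ᵥ adjugate (a v + t • diagonal d) *ᵥ (b v)ᵀ k = 0 := by
      intro t
      have := hmin (v + t • v0) j k
      rw [map_add, map_add, map_add, map_smul, map_smul, map_smul, ha0, hb0, h0] at this
      simpa using this
    have e0 := hl 0
    have e1 := hl 1
    have e2 := hl (-1)
    have e3 := hl 2
    have hprod : M v (Sum.inr j) (Sum.inr k) * (d 0 * d 1 * d 2) = 0 := by
      generalize M v (Sum.inr j) (Sum.inr k) = n at *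
      generalize (b v)ᵀ j = y at *
      generalize (b v)ᵀ k = x at *
      generalize a v = α at *
      simp [adjugate_fin_three, det_fin_three, mulVec, dotProduct, Fin.sum_univ_succ] at e0 e1 e2 e3
      linear_combination (1/6) * (e3 - 3 * e1 + 3 * e0 - e2)
    have := hd 0
    have := hd 1
    have := hd 2
    simp_all
  refine ⟨a, b, ?_, ?_, ?_, ha0, hb0⟩
  · intro v
    ext i j
    exact hsym v _ _
  · intro v
    have h1 : 1 + M v = fromBlocks (1 + a v) (b v) (b v)ᵀ 1 := by
      rw [← fromBlocks_one]
      ext i j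
      rcases i with i | i <;> rcases j with j | j
      · rfl
      · simp [b, toBlocks₁₂]
      · simp [b, toBlocks₁₂, hsym v (Sum.inr i)]
      · simp [hD, one_apply]
    rw [h1, det_fromBlocks_one₂₂]
  · intro v j k
    have := hmin v j k
    rw [hD] at this
    simpa using this

lemma para (g x y : Fin 3 → ℝ) (hg : ∀ i, g i ≠ 0) (hxx : ∑ i, g i * x i * x i = 0)
    (hxy : ∑ i, g i * x i * y i = 0) (hyy : ∑ i, g i * y i * y i = 0) :
    x 1 * y 2 - x 2 * y 1 = 0 ∧ x 2 * y 0 - x 0 * y 2 = 0 ∧ x 0 * y 1 - x 1 * y 0 = 0 := by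
  simp only [Fin.sum_univ_three] at hxx hxy hyy
  have h0 := hg 0
  have h1 := hg 1
  have h2 := hg 2
  generalize g 0 = g0 at *
  generalize g 1 = g1 at *
  generalize g 2 = g2 at *
  generalize x 0 = x0 at *
  generalize x 1 = x1 at *
  generalize x 2 = x2 at *
  generalize y 0 = y0 at *
  generalize y 1 = y1 at *
  generalize y 2 = y2 at *
  set n0 := x1 * y2 - x2 * y1 with hn0
  set n1 := x2 * y0 - x0 * y2 with hn1
  set n2 := x0 * y1 - x1 * y0 with hn2
  -- n is parallel to (g x) and to (g y)
  have a0 : n1 * (g2 * x2) - n2 * (g1 * x1) = 0 := by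
    rw [hn1, hn2]; linear_combination y0 * hxx - x0 * hxy
  have a1 : n2 * (g0 * x0) - n0 * (g2 * x2) = 0 := by
    rw [hn0, hn2]; linear_combination y1 * hxx - x1 * hxy
  have a2 : n0 * (g1 * x1) - n1 * (g0 * x0) = 0 := by
    rw [hn1, hn0]; linear_combination y2 * hxx - x2 * hxy
  have b0 : n1 * (g2 * y2) - n2 * (g1 * y1) = 0 := by
    rw [hn1, hn2]; linear_combination y0 * hxy - x0 * hyy
  have b1 : n2 * (g0 * y0) - n0 * (g2 * y2) = 0 := by
    rw [hn0, hn2]; linear_combination y1 * hxy - x1 * hyy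
  have b2 : n0 * (g1 * y1) - n1 * (g0 * y0) = 0 := by
    rw [hn1, hn0]; linear_combination y2 * hxy - x2 * hyy
  -- n_i * (gx × gy) = 0
  have c0 : n0 * (g1 * g2 * n0) = 0 := by
    linear_combination (g2 * y2) * a2 + (g1 * y1) * a1 + (g0 * x0) * b0 + n0 * (g1 * g2) * hn0
  have c1 : n1 * (g0 * g2 * n1) = 0 := by
    linear_combination (g0 * y0) * a0 + (g2 * y2) * a2 + (g1 * x1) * b1 + n1 * (g0 * g2) * hn1
  have c2 : n2 * (g0 * g1 * n2) = 0 := by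
    linear_combination (g0 * y0) * a0 + (g1 * y1) * a1 + (g2 * x2) * b2 + n2 * (g0 * g1) * hn2
  simp_all

lemma frame (x e : Fin 3 → ℝ) (hx : ∑ i, x i * x i = 1) (he : ∑ i, e i * e i = 1)
    (hxe : ∑ i, x i * e i = 0) :
    ∃ O : Matrix (Fin 3) (Fin 3) ℝ, O * Oᵀ = 1 ∧ O 0 = x ∧ O 2 = e := by
  refine ⟨!![x 0, x 1, x 2; x 1 * e 2 - x 2 * e 1, x 2 * e 0 - x 0 * e 2, x 0 * e 1 - x 1 * e 0;
    e 0, e 1, e 2], ?_, ?_, ?_⟩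
  · simp only [Fin.sum_univ_three] at hx he hxe
    ext i j
    fin_cases i <;> fin_cases j <;> simp [Matrix.mul_apply, Fin.sum_univ_three]
    · linear_combination hx
    · ring
    · linear_combination hxe
    · ring
    · linear_combination (e 0 * e 0 + e 1 * e 1 + e 2 * e 2) * hx + he
        - (x 0 * e 0 + x 1 * e 1 + x 2 * e 2) * hxe
    · ring
    · linear_combination hxe
    · ring
    · linear_combination he
  · ext i; fin_cases i <;> rfl
  · ext i; fin_cases i <;> rfl

lemma adj_conj (O a : Matrix (Fin 3) (Fin 3) ℝ) (hO : O * Oᵀ = 1) :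
    adjugate (O * a * Oᵀ) = O * adjugate a * Oᵀ := by
  have hO' : Oᵀ * O = 1 := mul_eq_one_comm.mp hO
  have hd : O.det * O.det = 1 := by
    have := congrArg det hO
    simpa using this
  have h1 : adjugate O = O.det • Oᵀ := by
    calc adjugate O = adjugate O * (O * Oᵀ) := by rw [hO, Matrix.mul_one]
      _ = _ := by rw [← Matrix.mul_assoc, adjugate_mul]; simp
  have h2 : adjugate Oᵀ = O.det • O := by
    rw [← adjugate_transpose, h1, transpose_smul, transpose_transpose]
  rw [adjugate_mul_distrib, adjugate_mul_distrib, h1, h2]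
  simp [smul_smul, hd, Matrix.mul_assoc]

lemma stageC {κ : Type} [Fintype κ] 
    (F : MvPolynomial (Fin 4) ℝ) (hF : F.IsHomogeneous 3)
    (a : (Fin 3 → ℝ) →ₗ[ℝ] Matrix (Fin 3) (Fin 3) ℝ)
    (b : (Fin 3 → ℝ) →ₗ[ℝ] Matrix (Fin 3) κ ℝ) (d v0 : Fin 3 → ℝ)
    (hs : ∀ v, (a v).IsSymm)
    (h : ∀ v, eval (vecCons 1 v) F = det (1 + a v - b v * (b v)ᵀ))
    (hadj : ∀ v j k, (b v)ᵀ j ⬝ᵥ adjugate (a v) *ᵥ (b v)ᵀ k = 0)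
    (ha0 : a v0 = diagonal d) (hb0 : b v0 = 0) (hd : ∀ i, d i ≠ 0) :
    ∃ p : Fin 4 → ℂ, p ≠ 0 ∧ aeval p F = 0 ∧ ∀ i, aeval p (pderiv i F) = 0 := by
  by_cases hb : ∀ v, b v = 0
  · refine final1 F hF (fun i j => Matrix.entryLinearMap ℝ ℝ i j ∘ₗ a) fun v => ?_
    rw [h, hb, det_fin_three]
    simp only [LinearMap.comp_apply, entryLinearMap_apply]
    simp [(hs v).apply 0 1, (hs v).apply 0 2, (hs v).apply 1 2]
    ring
  push Not at hb
  obtain ⟨v1, hv1⟩ := hb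
  have : ∃ i j, b v1 i j ≠ 0 := by
    by_contra! hc
    exact hv1 (by ext i j; exact hc i j)
  obtain ⟨i1, j1, hij⟩ := this
  let g : Fin 3 → ℝ := ![d 1 * d 2, d 0 * d 2, d 0 * d 1]
  have hd0 := hd 0
  have hd1 := hd 1
  have hd2 := hd 2
  have hg : ∀ i, g i ≠ 0 := by
    intro i
    fin_cases i <;> simp [g, hd0, hd1, hd2]
  have hiso : ∀ v j k, ∑ i, g i * b v i j * b v i k = 0 := by
    intro v j k
    have := adj_line (a v) d ((b v)ᵀ k) ((b v)ᵀ j) (fun t => by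
      have := hadj (v + t • v0) j k
      rwa [map_add, map_add, map_smul, map_smul, ha0, hb0, smul_zero, add_zero] at this)
    simp only [Fin.sum_univ_three]
    simp [g]
    simp at this
    linear_combination this
  have hpol : ∀ v j k, ∑ i, g i * b v1 i j * b v i k + ∑ i, g i * b v i j * b v1 i k = 0 := by
    intro v j k
    have h1 := hiso (v1 + v) j k
    have h2 := hiso v1 j k
    have h3 := hiso v j k
    simp only [map_add, Matrix.add_apply, Fin.sum_univ_three] at h1 h2 h3 ⊢
    linear_combination h1 - h2 - h3
  -- the unit vector
  set x' : Fin 3 → ℝ := fun i => b v1 i j1 with hx'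
  have hn : 0 < ∑ i, x' i * x' i := by
    refine Finset.sum_pos' (fun i _ => mul_self_nonneg _) ⟨i1, Finset.mem_univ _, ?_⟩
    exact mul_self_pos.mpr hij
  set ρ := Real.sqrt (∑ i, x' i * x' i) with hρ
  have hρ2 : ρ * ρ = ∑ i, x' i * x' i := Real.mul_self_sqrt hn.le
  have hρ0 : ρ ≠ 0 := (Real.sqrt_pos.mpr hn).ne'
  have hpar : ∀ v k, x' 1 * b v 2 k - x' 2 * b v 1 k = 0 ∧ x' 2 * b v 0 k - x' 0 * b v 2 k = 0 ∧
      x' 0 * b v 1 k - x' 1 * b v 0 k = 0 := by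
    intro v k
    have hxx := hiso v1 j1 j1
    have hcomm : ∀ p q : Fin 3 → ℝ, ∑ i, g i * p i * q i = ∑ i, g i * q i * p i := by
      intro p q
      exact Finset.sum_congr rfl fun i _ => by ring
    have hxj : ∑ i, g i * x' i * b v i j1 = 0 := by
      have := hpol v j1 j1
      rw [hcomm (fun i => b v i j1) (fun i => b v1 i j1)] at this
      linarith
    have hp1 := para g x' (fun i => b v i j1) hg hxx hxj (hiso v j1 j1)
    obtain ⟨q0, q1, q2⟩ := hp1
    have hprop : ∀ i, (∑ l, x' l * x' l) * b v i j1 = (∑ l, x' l * b v l j1) * x' i := by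
      intro i
      simp only [Fin.sum_univ_three]
      fin_cases i <;> simp
      · linear_combination (-x' 1) * q2 + x' 2 * q1
      · linear_combination (x' 0) * q2 - x' 2 * q0
      · linear_combination (-x' 0) * q1 + x' 1 * q0
    have hx1 : ∑ i, g i * x' i * b v1 i k = 0 := hiso v1 j1 k
    have hsec : ∑ i, g i * b v i j1 * b v1 i k = 0 := by
      have : (∑ l, x' l * x' l) * ∑ i, g i * b v i j1 * b v1 i k
          = (∑ l, x' l * b v l j1) * ∑ i, g i * x' i * b v1 i k := by
        rw [Finset.mul_sum, Finset.mul_sum]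
        refine Finset.sum_congr rfl fun i _ => ?_
        linear_combination (g i * b v1 i k) * hprop i
      rw [hx1, mul_zero] at this
      exact (mul_eq_zero.mp this).resolve_left hn.ne'
    have hxk : ∑ i, g i * x' i * b v i k = 0 := by
      have := hpol v j1 k
      rw [hsec] at this
      simpa using this
    exact para g x' (fun i => b v i k) hg hxx hxk (hiso v k k)
  let x : Fin 3 → ℝ := fun i => x' i / ρ
  have hx : ∑ i, x i * x i = 1 := by
    have : ∑ i, x i * x i = (∑ i, x' i * x' i) / (ρ * ρ) := by
      rw [Finset.sum_div]
      exact Finset.sum_congr rfl fun i _ => by simp only [x]; field_simp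
    rw [this, hρ2, div_self hn.ne']
  have hgx : ∑ i, g i * x i * x i = 0 := by
    have : ∑ i, g i * x i * x i = (∑ i, g i * x' i * x' i) / (ρ * ρ) := by
      rw [Finset.sum_div]
      exact Finset.sum_congr rfl fun i _ => by simp only [x]; field_simp
    rw [this, hiso v1 j1 j1, zero_div]
  let c : κ → (Fin 3 → ℝ) →ₗ[ℝ] ℝ := fun k =>
    ∑ i, x i • (Matrix.entryLinearMap ℝ ℝ i k ∘ₗ b)
  have hc : ∀ k v, c k v = ∑ i, x i * b v i k := by
    intro k v
    simp [c, LinearMap.sum_apply]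
  have hbc : ∀ v i k, b v i k = x i * c k v := by
    intro v i k
    obtain ⟨q0, q1, q2⟩ := hpar v k
    have e0 : x 1 * b v 2 k - x 2 * b v 1 k = 0 := by
      have : x 1 * b v 2 k - x 2 * b v 1 k = (x' 1 * b v 2 k - x' 2 * b v 1 k) / ρ := by
        simp only [x]; ring
      rw [this, q0, zero_div]
    have e1 : x 2 * b v 0 k - x 0 * b v 2 k = 0 := by
      have : x 2 * b v 0 k - x 0 * b v 2 k = (x' 2 * b v 0 k - x' 0 * b v 2 k) / ρ := by
        simp only [x]; ring
      rw [this, q1, zero_div]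
    have e2 : x 0 * b v 1 k - x 1 * b v 0 k = 0 := by
      have : x 0 * b v 1 k - x 1 * b v 0 k = (x' 0 * b v 1 k - x' 1 * b v 0 k) / ρ := by
        simp only [x]; ring
      rw [this, q2, zero_div]
    rw [hc]
    simp only [Fin.sum_univ_three] at hx ⊢
    fin_cases i <;> simp
    · linear_combination (-x 1) * e2 + x 2 * e1 - b v 0 k * hx
    · linear_combination (x 0) * e2 - x 2 * e0 - b v 1 k * hx
    · linear_combination (-x 0) * e1 + x 1 * e0 - b v 2 k * hx
  have hcv0 : ∀ k, c k v0 = 0 := by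
    intro k; rw [hc, hb0]; simp
  have hcv1 : c j1 v1 ≠ 0 := by
    intro h0
    apply hij
    rw [hbc, h0, mul_zero]
  -- the isotropic direction
  have hm : 0 < ∑ i, (g i * x i) * (g i * x i) := by
    have : ∃ i, x i ≠ 0 := ⟨i1, div_ne_zero hij hρ0⟩
    obtain ⟨i, hi⟩ := this
    refine Finset.sum_pos' (fun i _ => mul_self_nonneg _) ⟨i, Finset.mem_univ _, ?_⟩
    exact mul_self_pos.mpr (mul_ne_zero (hg i) hi)
  set τ := Real.sqrt (∑ i, (g i * x i) * (g i * x i)) with hτ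
  have hτ2 : τ * τ = ∑ i, (g i * x i) * (g i * x i) := Real.mul_self_sqrt hm.le
  have hτ0 : τ ≠ 0 := (Real.sqrt_pos.mpr hm).ne'
  let e : Fin 3 → ℝ := fun i => g i * x i / τ
  have he : ∑ i, e i * e i = 1 := by
    have : ∑ i, e i * e i = (∑ i, (g i * x i) * (g i * x i)) / (τ * τ) := by
      rw [Finset.sum_div]
      exact Finset.sum_congr rfl fun i _ => by simp only [e]; field_simp
    rw [this, hτ2, div_self hm.ne']
  have hxe : ∑ i, x i * e i = 0 := by
    have : ∑ i, x i * e i = (∑ i, g i * x i * x i) / τ := by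
      rw [Finset.sum_div]
      exact Finset.sum_congr rfl fun i _ => by simp only [e]; ring
    rw [this, hgx, zero_div]
  obtain ⟨O, hO, hO0, hO2⟩ := frame x e hx he hxe
  let α : (Fin 3 → ℝ) →ₗ[ℝ] Matrix (Fin 3) (Fin 3) ℝ :=
    LinearMap.mulLeft ℝ O ∘ₗ LinearMap.mulRight ℝ Oᵀ ∘ₗ a
  have hα : ∀ v, α v = O * a v * Oᵀ := fun v => by simp [α, Matrix.mul_assoc]
  have hαs : ∀ v i j, α v i j = α v j i := by
    intro v i j
    have : (α v)ᵀ = α v := by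
      rw [hα]; simp [transpose_mul, (hs v).eq, Matrix.mul_assoc]
    exact (congrFun (congrFun this j) i)
  have hOe : ∀ i, ∑ l, O i l * O 0 l = if i = 0 then 1 else 0 := by
    intro i
    have := congrFun (congrFun hO i) 0
    simpa [Matrix.mul_apply, one_apply] using this
  have hα0 : ∀ i, α v0 i 2 = (d 0 * d 1 * d 2 / τ) * ∑ l, O i l * O 0 l := by
    intro i
    rw [hα, ha0, Matrix.mul_apply]
    simp only [mul_diagonal, transpose_apply, hO0, hO2, Fin.sum_univ_three, e, g]
    simp
    ring
  have hα12 : α v0 1 2 = 0 := by rw [hα0, hOe]; simp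
  have hα22 : α v0 2 2 = 0 := by rw [hα0, hOe]; simp
  have hα11 : α v0 1 1 ≠ 0 := by
    intro h0
    have h1 : det (α v0) = det (diagonal d) := by
      rw [hα, det_mul_right_comm, hO, ha0, Matrix.one_mul]
    have h21 : α v0 2 1 = 0 := by rw [hαs, hα12]
    rw [det_fin_three, h0, hα12, hα22, h21, det_diagonal, Fin.prod_univ_three] at h1
    simp at h1
    tauto
  have hadj' : ∀ v, (∃ k, c k v ≠ 0) → α v 1 1 * α v 2 2 - α v 1 2 * α v 1 2 = 0 := by
    rintro v ⟨k, hk⟩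
    have h1 := hadj v k k
    have h2 : (b v)ᵀ k = c k v • x := by
      ext i
      simp [hbc v i k, mul_comm]
    rw [h2] at h1
    simp only [mulVec_smul, smul_dotProduct, dotProduct_smul, smul_eq_mul] at h1
    have h3 : x ⬝ᵥ adjugate (a v) *ᵥ x = 0 := by simpa [hk] using h1
    have h4 : adjugate (α v) 0 0 = x ⬝ᵥ adjugate (a v) *ᵥ x := by
      rw [hα, adj_conj O _ hO, Matrix.mul_assoc, ← hO0]
      rfl
    rw [h3, adjugate_fin_three] at h4
    simp at h4
    rw [hαs v 2 1] at h4
    exact h4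
  have hvan1 : ∀ v, (∃ k, c k v ≠ 0) → α v 2 2 = 0 ∧ α v 1 2 = 0 := by
    rintro v hk
    have h1 := hadj' v hk
    have h2 := hadj' (v + v0) (by
      obtain ⟨k, hk⟩ := hk
      exact ⟨k, by rwa [map_add, hcv0, add_zero]⟩)
    simp only [map_add, Matrix.add_apply, hα12, hα22] at h2
    have h3 : α v0 1 1 * α v 2 2 = 0 := by linear_combination h2 - h1
    have h4 : α v 2 2 = 0 := (mul_eq_zero.mp h3).resolve_left hα11
    refine ⟨h4, ?_⟩
    rw [h4] at h1
    simpa using h1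
  have hvan : ∀ v, α v 2 2 = 0 ∧ α v 1 2 = 0 := by
    intro v
    by_cases hk : ∃ k, c k v ≠ 0
    · exact hvan1 v hk
    · push Not at hk
      have h1 := hvan1 v1 ⟨j1, hcv1⟩
      have h2 := hvan1 (v + v1) ⟨j1, by rwa [map_add, hk, zero_add]⟩
      simpa [h1.1, h1.2] using h2
  let c' : Option κ → (Fin 3 → ℝ) →ₗ[ℝ] ℝ := fun o =>
    o.elim (Matrix.entryLinearMap ℝ ℝ 0 2 ∘ₗ α) c
  refine final2 F hF (Matrix.entryLinearMap ℝ ℝ 0 0 ∘ₗ α) (Matrix.entryLinearMap ℝ ℝ 1 1 ∘ₗ α)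
    (Matrix.entryLinearMap ℝ ℝ 0 1 ∘ₗ α) c' fun v => ?_
  rw [h]
  have hbb : O * (b v * (b v)ᵀ) * Oᵀ = (∑ k, c k v ^ 2) • Matrix.single 0 0 1 := by
    have h1 : b v * (b v)ᵀ = (∑ k, c k v ^ 2) • vecMulVec x x := by
      ext i j
      simp only [Matrix.mul_apply, transpose_apply, hbc, Matrix.smul_apply, vecMulVec_apply,
        smul_eq_mul, Finset.sum_mul]
      exact Finset.sum_congr rfl fun k _ => by ring
    have h2 : O *ᵥ x = Pi.single 0 1 := by
      ext i
      rw [← hO0]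
      simp only [mulVec, dotProduct, hOe i, Pi.single_apply]
    rw [h1, Matrix.mul_smul, Matrix.smul_mul, mul_vecMulVec, vecMulVec_mul, vecMul_transpose, h2]
    congr 1
    ext i j
    fin_cases i <;> fin_cases j <;> simp [vecMulVec_apply, Matrix.single]
  have hdet : det (1 + a v - b v * (b v)ᵀ) = det (1 + α v - (∑ k, c k v ^ 2) • Matrix.single 0 0 1) := by
    have : 1 + α v - (∑ k, c k v ^ 2) • Matrix.single 0 0 1
        = O * (1 + a v - b v * (b v)ᵀ) * Oᵀ := by
      rw [Matrix.mul_sub, Matrix.sub_mul, hbb, Matrix.mul_add, Matrix.add_mul, Matrix.mul_one, hO,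
        hα]
    rw [this, det_mul_right_comm, hO, Matrix.one_mul]
  rw [hdet, det_fin_three]
  have h10 := hαs v 1 0
  have h20 := hαs v 2 0
  have h21 := hαs v 2 1
  obtain ⟨h22, h12⟩ := hvan v
  simp [c', Fintype.sum_option, h10, h20, h21, h22, h12, Matrix.single]
  ring

theorem stmt_14 (r : ℕ) (A B C' : Matrix (Fin r) (Fin r) ℝ)
    (hA : A.IsSymm) (hB : B.IsSymm) (hC : C'.IsSymm)
    (f : MvPolynomial (Fin 3) ℝ)
    (hf : f = ((1 : Matrix (Fin r) (Fin r) (MvPolynomial (Fin 3) ℝ))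
        + (X 0 : MvPolynomial (Fin 3) ℝ) • A.map C + (X 1 : MvPolynomial (Fin 3) ℝ) • B.map C + (X 2 : MvPolynomial (Fin 3) ℝ) • C'.map C).det)
    (hdeg : f.totalDegree = 3)
    (F : MvPolynomial (Fin 4) ℝ) (hFhom : F.IsHomogeneous 3)
    (hFdehom : ∀ x y z : ℝ, eval ![(1 : ℝ), x, y, z] F = eval ![x, y, z] f) :
    ∃ p : Fin 4 → ℂ, p ≠ 0 ∧ aeval p F = 0 ∧ ∀ i, aeval p (pderiv i F) = 0 := by
  let N : (Fin 3 → ℝ) →ₗ[ℝ] Matrix (Fin r) (Fin r) ℝ :=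
    (LinearMap.proj 0 : (Fin 3 → ℝ) →ₗ[ℝ] ℝ).smulRight A
      + (LinearMap.proj 1 : (Fin 3 → ℝ) →ₗ[ℝ] ℝ).smulRight B
      + (LinearMap.proj 2 : (Fin 3 → ℝ) →ₗ[ℝ] ℝ).smulRight C'
  have hNv : ∀ v, N v = v 0 • A + v 1 • B + v 2 • C' := fun v => rfl
  have hN : ∀ v, (N v).IsHermitian := by
    intro v
    rw [Matrix.IsHermitian, conjTranspose_eq_transpose_of_trivial, hNv]
    simp [hA.eq, hB.eq, hC.eq]
  have hdet : ∀ v, eval v f = det (1 + N v) := by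
    intro v
    rw [hf, RingHom.map_det]
    congr 1
    ext i j
    simp [hNv, Matrix.one_apply, apply_ite (eval v), add_assoc]
  obtain ⟨v0, hv0⟩ := rank_eq_three f hdeg N hN hdet
  obtain ⟨κ, _, _, M, d, hMs, hMdet, hMr, hM0, hd⟩ := stageB1 N hN v0 hv0
  obtain ⟨a, b, has, hab, hadj, ha0, hb0⟩ := stageB2 M d hMs
    (fun v => (hMr v).trans (rank_le_three f hdeg N hN hdet v)) v0 hM0 hd
  refine stageC F hFhom a b d v0 has (fun v => ?_) hadj ha0 hb0 hd
  rw [← hab, ← hMdet, ← hdet]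
  have hv : v = ![v 0, v 1, v 2] := by
    ext i; fin_cases i <;> rfl
  rw [hv]
  exact hFdehom _ _ _
end

section
/- Let C ⊆ ℝ³ be a convex region with nonempty interior whose algebraic boundary is defined by a cubic polynomial f ∈ ℝ[x,y,z] such that the projective surface {f^h = 0} ⊂ ℙ³(ℂ) is smooth. Then there do not exist real symmetric 4×4 matrices A₀, A₁, A₂, A₃ with C = {(x,y,z) ∈ ℝ³ : A₀ + A₁x + A₂y + A₃z ⪰ 0}. -/
open MvPolynomial

namespace S15

/-- `F` has a complex projective singular point. -/
def Sing (F : MvPolynomial (Fin 4) ℝ) : Prop :=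
  ∃ p : Fin 4 → ℂ, p ≠ 0 ∧ aeval p F = 0 ∧ ∀ i, aeval p (pderiv i F) = 0

/-- Restriction of a polynomial to the line `y + t u`. -/
noncomputable def line {S : Type*} [CommRing S] [Algebra ℝ S] (y u : Fin 4 → S)
    (G : MvPolynomial (Fin 4) ℝ) : Polynomial S :=
  aeval (fun i => Polynomial.C (y i) + Polynomial.C (u i) * Polynomial.X) G

lemma line_eval {S : Type*} [CommRing S] [Algebra ℝ S] (y u : Fin 4 → S)
    (G : MvPolynomial (Fin 4) ℝ) (t : S) :
    (line y u G).eval t = aeval (fun i => y i + u i * t) G := by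
  have h : (Polynomial.aeval t : Polynomial S →ₐ[S] S).restrictScalars ℝ (line y u G)
      = aeval (fun i => y i + u i * t) G := by
    unfold line
    rw [← AlgHom.comp_apply, comp_aeval]
    simp
  simpa [Polynomial.aeval_def] using h

lemma line_deg {S : Type*} [CommRing S] [Algebra ℝ S] (y u : Fin 4 → S)
    (G : MvPolynomial (Fin 4) ℝ) (n : ℕ) (hG : G.IsHomogeneous n) :
    (line y u G).natDegree ≤ n ∧ (line y u G).coeff n = aeval u G := by
  have key : ∀ d : Fin 4 →₀ ℕ, d.degree = n → ∀ a : ℝ,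
      (line y u (monomial d a)).natDegree ≤ n ∧
      (line y u (monomial d a)).coeff n = aeval u (monomial d a) := by
    intro d hd a
    have h1 : ∀ i, (Polynomial.C (y i) + Polynomial.C (u i) * Polynomial.X).natDegree ≤ 1 := by
      intro i
      compute_degree
    have h2 : ∀ i, ((Polynomial.C (y i) + Polynomial.C (u i) * Polynomial.X) ^ d i).natDegree
        ≤ d i := by
      intro i
      simpa using Polynomial.natDegree_pow_le_of_le (d i) (h1 i)
    have h3 : ∀ i, ((Polynomial.C (y i) + Polynomial.C (u i) * Polynomial.X) ^ d i).coeff (d i)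
        = u i ^ d i := by
      intro i
      have := Polynomial.coeff_pow_of_natDegree_le (m := d i) (h1 i)
      simp at this
      exact this
    have hn : n = d 0 + d 1 + d 2 + d 3 := by
      rw [← hd, Finsupp.degree_eq_sum, Fin.sum_univ_four]
    unfold line
    rw [aeval_monomial, aeval_monomial, Finsupp.prod_fintype _ _ (by simp),
      Finsupp.prod_fintype _ _ (by simp), Fin.prod_univ_four, Fin.prod_univ_four, hn]
    have m1 := Polynomial.natDegree_mul_le_of_le (h2 0) (h2 1)
    have m2 := Polynomial.natDegree_mul_le_of_le m1 (h2 2)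
    have m3 := Polynomial.natDegree_mul_le_of_le m2 (h2 3)
    have hC : (algebraMap ℝ (Polynomial S) a) = Polynomial.C (algebraMap ℝ S a) := rfl
    constructor
    · rw [hC]
      exact (Polynomial.natDegree_C_mul_le _ _).trans m3
    · rw [hC, Polynomial.coeff_C_mul, Polynomial.coeff_mul_add_eq_of_natDegree_le m2 (h2 3),
        Polynomial.coeff_mul_add_eq_of_natDegree_le m1 (h2 2),
        Polynomial.coeff_mul_add_eq_of_natDegree_le (h2 0) (h2 1), h3, h3, h3, h3]
  have hsum : line y u G = ∑ d ∈ G.support, line y u (monomial d (coeff d G)) := by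
    conv_lhs => rw [G.as_sum]
    unfold line
    rw [map_sum]
  have hdeg : ∀ d ∈ G.support, d.degree = n := by
    intro d hd
    by_contra hne
    exact (mem_support_iff.mp hd) (hG.coeff_eq_zero hne)
  constructor
  · rw [hsum]
    exact Polynomial.natDegree_sum_le_of_forall_le _ _ fun d hd => (key d (hdeg d hd) _).1
  · rw [hsum, Polynomial.finsetSum_coeff]
    conv_rhs => rw [G.as_sum, map_sum]
    exact Finset.sum_congr rfl fun d hd => (key d (hdeg d hd) _).2

/-- The substitution `x ↦ s x`. -/
noncomputable def scal (G : MvPolynomial (Fin 4) ℝ) : Polynomial (MvPolynomial (Fin 4) ℝ) :=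
  aeval (fun i => Polynomial.C (X i) * Polynomial.X) G

lemma scal_coeff (G : MvPolynomial (Fin 4) ℝ) (k : ℕ) :
    (scal G).coeff k = homogeneousComponent k G := by
  induction G using MvPolynomial.induction_on' with
  | monomial d a =>
    unfold scal
    have : (aeval (fun i => Polynomial.C (X i : MvPolynomial (Fin 4) ℝ) * Polynomial.X))
        (monomial d a) = Polynomial.C (monomial d a) * Polynomial.X ^ d.degree := by
      rw [aeval_monomial, Finsupp.prod_fintype _ _ (by simp), monomial_eq,
        Finsupp.prod_fintype _ _ (by simp), Finsupp.degree_eq_sum]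
      simp only [mul_pow, Finset.prod_mul_distrib, Finset.prod_pow_eq_pow_sum, map_mul, map_prod,
        map_pow]
      rw [mul_assoc]
      rfl
    rw [this, Polynomial.coeff_C_mul, Polynomial.coeff_X_pow]
    by_cases h : k = d.degree
    · rw [if_pos h, mul_one, homogeneousComponent_of_mem (isHomogeneous_monomial a h.symm), if_pos rfl]
    · rw [if_neg h, mul_zero, homogeneousComponent_of_mem (isHomogeneous_monomial a rfl), if_neg h]
  | add p q hp hq =>
    have : scal (p + q) = scal p + scal q := map_add _ _ _
    rw [this, Polynomial.coeff_add, hp, hq, map_add]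

lemma scal_mul (G H : MvPolynomial (Fin 4) ℝ) : scal (G * H) = scal G * scal H := map_mul _ _ _

lemma hc_eq {G : MvPolynomial (Fin 4) ℝ} {n : ℕ} (h : G.IsHomogeneous n) (k : ℕ) :
    homogeneousComponent k G = if k = n then G else 0 :=
  homogeneousComponent_of_mem h

/-- cofactor of a homogeneous factor -/
lemma lin_cofactor {F Q D : MvPolynomial (Fin 4) ℝ} (hF : F.IsHomogeneous 3)
    (hD : D.IsHomogeneous 4) (h : D = F * Q) : D = F * homogeneousComponent 1 Q := by
  have h1 : (scal D).coeff 4 = (scal F * scal Q).coeff 4 := by rw [h, scal_mul]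
  rw [scal_coeff, hc_eq hD, Polynomial.coeff_mul] at h1
  simp only [Finset.Nat.antidiagonal_succ] at h1
  simpa [scal_coeff, hc_eq hF] using h1

/-- Two linear forms and a quadric in `ℙ³` have a common point. -/
lemma common_zero (l₁ l₂ q : MvPolynomial (Fin 4) ℝ) (h₁ : l₁.IsHomogeneous 1)
    (h₂ : l₂.IsHomogeneous 1) (hq : q.IsHomogeneous 2) :
    ∃ p : Fin 4 → ℂ, p ≠ 0 ∧ aeval p l₁ = 0 ∧ aeval p l₂ = 0 ∧ aeval p q = 0 := by
  have lin : ∀ l : MvPolynomial (Fin 4) ℝ, l.IsHomogeneous 1 →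
      ∃ φ : (Fin 4 → ℂ) →ₗ[ℂ] ℂ, ∀ p, aeval p l = φ p := by
    intro l hl
    have : l ∈ Submodule.span ℝ (Set.range (X : Fin 4 → MvPolynomial (Fin 4) ℝ)) := by
      rw [← homogeneousSubmodule_one_eq_span_X]; exact hl
    obtain ⟨c, rfl⟩ := (Submodule.mem_span_range_iff_exists_fun ℝ).1 this
    refine ⟨∑ i, (c i : ℂ) • LinearMap.proj i, fun p => ?_⟩
    simp
  obtain ⟨φ₁, hφ₁⟩ := lin l₁ h₁
  obtain ⟨φ₂, hφ₂⟩ := lin l₂ h₂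
  let Φ := φ₁.prod φ₂
  have hr := Φ.finrank_range_add_finrank_ker
  have hle : Module.finrank ℂ (LinearMap.range Φ) ≤ 2 := by
    have := Submodule.finrank_le (LinearMap.range Φ)
    simpa using this
  have hk : 2 ≤ Module.finrank ℂ (LinearMap.ker Φ) := by
    simp at hr; omega
  obtain ⟨b, hb⟩ := exists_linearIndependent_of_le_finrank hk
  have hb' : LinearIndependent ℂ (fun i => (b i : Fin 4 → ℂ)) :=
    hb.map' (LinearMap.ker Φ).subtype (Submodule.ker_subtype _)
  have hz : ∀ v : LinearMap.ker Φ, aeval (v : Fin 4 → ℂ) l₁ = 0 ∧ aeval (v : Fin 4 → ℂ) l₂ = 0 := by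
    intro v
    have := v.2
    rw [LinearMap.mem_ker] at this
    rw [hφ₁, hφ₂]
    exact ⟨congrArg Prod.fst this, congrArg Prod.snd this⟩
  by_cases hq1 : aeval (b 1 : Fin 4 → ℂ) q = 0
  · exact ⟨b 1, hb'.ne_zero 1, (hz _).1, (hz _).2, hq1⟩
  · obtain ⟨hd, hc⟩ := line_deg (b 0 : Fin 4 → ℂ) (b 1 : Fin 4 → ℂ) q 2 hq
    have hne : (line (b 0 : Fin 4 → ℂ) (b 1 : Fin 4 → ℂ) q).coeff 2 ≠ 0 := by rwa [hc]
    have hdeg : (line (b 0 : Fin 4 → ℂ) (b 1 : Fin 4 → ℂ) q).degree ≠ 0 := by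
      intro h0
      have := Polynomial.natDegree_eq_zero_iff_degree_le_zero.2 h0.le
      exact hne (Polynomial.coeff_eq_zero_of_natDegree_lt (by omega))
    obtain ⟨t, ht⟩ := IsAlgClosed.exists_root _ hdeg
    have ht' := line_eval (b 0 : Fin 4 → ℂ) (b 1 : Fin 4 → ℂ) q t
    rw [ht.eq_zero] at ht'
    have e : (fun i => (b 0 : Fin 4 → ℂ) i + (b 1 : Fin 4 → ℂ) i * t) =
        ((b 0 + t • b 1 : LinearMap.ker Φ) : Fin 4 → ℂ) := by
      ext i; simp [mul_comm]
    rw [e] at ht'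
    refine ⟨_, ?_, (hz (b 0 + t • b 1)).1, (hz (b 0 + t • b 1)).2, ht'.symm⟩
    intro h0
    have := LinearIndependent.pair_iff.1 (by
      have := hb'
      rw [show (fun i => (b i : Fin 4 → ℂ)) = ![(b 0 : Fin 4 → ℂ), b 1] by
        ext i; fin_cases i <;> rfl] at this
      exact this) 1 t (by simpa using h0)
    exact one_ne_zero this.1

end S15

namespace S15

lemma sing_of_factor {F r g : MvPolynomial (Fin 4) ℝ} (hr : r.IsHomogeneous 1)
    (hg : g.IsHomogeneous 2) (h : F = r * g) : Sing F := by
  obtain ⟨p, hp, h1, -, h2⟩ := common_zero r r g hr hr hg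
  refine ⟨p, hp, by simp [h, h1], fun i => ?_⟩
  simp [h, h1, h2, Derivation.leibniz]

lemma scal_eval (G : MvPolynomial (Fin 4) ℝ) (p : Fin 4 → ℝ) (s : ℝ) :
    ((scal G).map (eval p)).eval s = eval (s • p) G := by
  induction G using MvPolynomial.induction_on with
  | C a =>
    have : scal (C a) = Polynomial.C (C a) := by
      unfold scal; rw [aeval_C]; rfl
    rw [this, Polynomial.map_C, Polynomial.eval_C, eval_C, eval_C]
  | add p q hp hq =>
    have : scal (p + q) = scal p + scal q := map_add _ _ _
    rw [this, Polynomial.map_add, Polynomial.eval_add, hp, hq, map_add]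
  | mul_X p i hp =>
    have : scal (X i) = Polynomial.C (X i) * Polynomial.X := by
      unfold scal; rw [aeval_X]
    rw [scal_mul, this, Polynomial.map_mul, Polynomial.eval_mul, hp, map_mul, Polynomial.map_mul,
      Polynomial.map_C, Polynomial.map_X, Polynomial.eval_mul, Polynomial.eval_C, Polynomial.eval_X,
      eval_X, eval_X, Pi.smul_apply, smul_eq_mul, mul_comm s]

lemma hom_smul {F : MvPolynomial (Fin 4) ℝ} {n : ℕ} (hF : F.IsHomogeneous n)
    (c : ℝ) (p : Fin 4 → ℝ) : eval (c • p) F = c ^ n * eval p F := by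
  have : scal F = Polynomial.C F * Polynomial.X ^ n := by
    ext1 k
    rw [scal_coeff, hc_eq hF, Polynomial.coeff_C_mul, Polynomial.coeff_X_pow]
    split_ifs <;> simp
  rw [← scal_eval, this, Polynomial.map_mul, Polynomial.map_C, Polynomial.map_pow,
    Polynomial.map_X, Polynomial.eval_mul, Polynomial.eval_pow, Polynomial.eval_C,
    Polynomial.eval_X, mul_comm]

lemma irred (F : MvPolynomial (Fin 4) ℝ) (hF : F.IsHomogeneous 3) (e : Fin 4 → ℝ)
    (he : eval e F = 1) (hs : ¬ Sing F) :
    (line (S := MvPolynomial (Fin 4) ℝ) X (fun i => C (e i)) F).Monic ∧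
    (line (S := MvPolynomial (Fin 4) ℝ) X (fun i => C (e i)) F).natDegree = 3 ∧
    Irreducible (line (S := MvPolynomial (Fin 4) ℝ) X (fun i => C (e i)) F) := by
  obtain ⟨hd, hc⟩ := line_deg (S := MvPolynomial (Fin 4) ℝ) X (fun i => C (e i)) F 3 hF
  have hc1 : (aeval (fun i => (C (e i) : MvPolynomial (Fin 4) ℝ))) F = 1 := by
    have : (fun i => (C (e i) : MvPolynomial (Fin 4) ℝ)) =
      fun i => Algebra.ofId ℝ (MvPolynomial (Fin 4) ℝ) (e i) := rfl
    rw [this, ← comp_aeval_apply]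
    simp [aeval_eq_eval, he]
  rw [hc1] at hc
  have hmon := Polynomial.monic_of_natDegree_le_of_coeff_eq_one 3 hd hc
  have hnd : (line (S := MvPolynomial (Fin 4) ℝ) X (fun i => C (e i)) F).natDegree = 3 := by
    refine le_antisymm hd (Polynomial.le_natDegree_of_ne_zero ?_)
    rw [hc]; exact one_ne_zero
  refine ⟨hmon, hnd, ?_⟩
  rw [hmon.irreducible_iff_roots_eq_zero_of_degree_le_three (by omega) (by omega)]
  rw [Multiset.eq_zero_iff_forall_notMem]
  intro r hr
  rw [Polynomial.mem_roots hmon.ne_zero] at hr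
  apply hs
  -- `F = r * g`
  obtain ⟨G, hG⟩ := Polynomial.dvd_iff_isRoot.2 hr
  have h0 := congrArg (Polynomial.eval 0) hG
  rw [line_eval] at h0
  have hX : (aeval (fun i => (X i : MvPolynomial (Fin 4) ℝ) + C (e i) * 0)) F = F := by
    simp
  rw [hX] at h0
  simp only [Polynomial.eval_mul, Polynomial.eval_sub, Polynomial.eval_X, Polynomial.eval_C,
    zero_sub] at h0
  set g := Polynomial.eval 0 G with hg
  -- `r (s e) = - s`
  have hre : ∀ s : ℝ, eval (s • e) r = - s := by
    intro s
    have h1 := hr.eq_zero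
    rw [line_eval] at h1
    have h2 := congrArg (eval (s • e)) h1
    rw [← aeval_eq_eval, map_zero, comp_aeval_apply] at h2
    have h3 : (fun i => (aeval (s • e)) (X i + C (e i) * r)) = (s + eval (s • e) r) • e := by
      ext i; simp [aeval_eq_eval]; ring
    rw [h3, aeval_eq_eval, hom_smul hF, he] at h2
    simp at h2
    linarith
  have hr0 : homogeneousComponent 0 r = 0 := by
    have h1 := hre 0
    rw [homogeneousComponent_zero]
    simp at h1
    have h2 : constantCoeff r = 0 := by
      rw [← h1]
    rw [← constantCoeff_eq, h2, map_zero]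
  have hr1 : homogeneousComponent 1 r ≠ 0 := by
    intro h
    have h1 : (scal r).map (eval e) = - Polynomial.X := by
      apply Polynomial.funext
      intro s
      rw [scal_eval, hre]; simp
    have h2 := congrArg (fun P => Polynomial.coeff P 1) h1
    simp [Polynomial.coeff_map, scal_coeff, h] at h2
  have hsc : scal F = scal (-r) * scal g := by rw [← scal_mul, ← h0]
  have hneg : scal (-r) = - scal r := map_neg _ _
  rw [hneg] at hsc
  have c1 := congrArg (fun P => Polynomial.coeff P 1) hsc
  have c2 := congrArg (fun P => Polynomial.coeff P 2) hsc
  have c3 := congrArg (fun P => Polynomial.coeff P 3) hsc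
  simp only [Polynomial.coeff_mul, Finset.Nat.antidiagonal_succ, Polynomial.coeff_neg] at c1 c2 c3
  simp [scal_coeff, hc_eq hF] at c1 c2 c3
  rw [homogeneousComponent_zero] at hr0
  rw [hr0] at c1 c2 c3
  have g0 : (C (coeff 0 g) : MvPolynomial (Fin 4) ℝ) = 0 := by
    refine (mul_eq_zero.1 ?_).resolve_left hr1
    linear_combination c1
  rw [g0] at c2 c3
  have g1 : homogeneousComponent 1 g = 0 := by
    refine (mul_eq_zero.1 ?_).resolve_left hr1
    linear_combination c2
  rw [g1] at c3
  exact sing_of_factor (r := homogeneousComponent 1 r) (g := -homogeneousComponent 2 g)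
    (homogeneousComponent_isHomogeneous _ _) (homogeneousComponent_isHomogeneous _ _).neg
    (by linear_combination c3)

lemma line_eval_real (D : MvPolynomial (Fin 4) ℝ) (e y : Fin 4 → ℝ) (t : ℝ) :
    eval y ((line (S := MvPolynomial (Fin 4) ℝ) X (fun i => C (e i)) D).eval (C t)) =
      eval (fun i => y i + e i * t) D := by
  rw [line_eval, ← aeval_eq_eval, comp_aeval_apply]
  simp [aeval_eq_eval]

lemma line_eval_zero (D : MvPolynomial (Fin 4) ℝ) (e : Fin 4 → ℝ) :
    (line (S := MvPolynomial (Fin 4) ℝ) X (fun i => C (e i)) D).eval 0 = D := by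
  rw [line_eval]; simp

lemma div_of_roots (F D H : MvPolynomial (Fin 4) ℝ) (hF : F.IsHomogeneous 3) (e : Fin 4 → ℝ)
    (he : eval e F = 1) (hs : ¬ Sing F) (hH : H ≠ 0)
    (hroot : ∀ y : Fin 4 → ℝ, eval y H ≠ 0 → ∃ t : ℝ, eval (fun i => y i + e i * t) F = 0 ∧
      eval (fun i => y i + e i * t) D = 0) : F ∣ D := by
  obtain ⟨hmon, hnd, hirr⟩ := irred F hF e he hs
  set P := line (S := MvPolynomial (Fin 4) ℝ) X (fun i => C (e i)) F with hP
  set E := line (S := MvPolynomial (Fin 4) ℝ) X (fun i => C (e i)) D with hE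
  suffices hdvd : P ∣ E by
    obtain ⟨Q, hQ⟩ := hdvd
    refine ⟨Q.eval 0, ?_⟩
    have := congrArg (Polynomial.eval 0) hQ
    rwa [Polynomial.eval_mul, hP, hE, line_eval_zero, line_eval_zero] at this
  by_contra hnd
  have : IsDomain (AdjoinRoot P) := AdjoinRoot.isDomain_of_prime hirr.prime
  have : Module.Finite (MvPolynomial (Fin 4) ℝ) (AdjoinRoot P) := hmon.finite_adjoinRoot
  have hne : AdjoinRoot.mk P E ≠ 0 := by rwa [Ne, AdjoinRoot.mk_eq_zero]
  have hbot := Ideal.comap_ne_bot_of_integral_mem hne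
    (Ideal.mem_span_singleton_self (AdjoinRoot.mk P E))
    (Algebra.IsIntegral.isIntegral (R := MvPolynomial (Fin 4) ℝ) _)
  obtain ⟨h, hmem, hh⟩ := Submodule.exists_mem_ne_zero_of_ne_bot hbot
  rw [Ideal.mem_comap, Ideal.mem_span_singleton] at hmem
  obtain ⟨b, hb⟩ := hmem
  obtain ⟨b, rfl⟩ := AdjoinRoot.mk_surjective b
  rw [AdjoinRoot.algebraMap_eq, ← AdjoinRoot.mk_C, ← map_mul, AdjoinRoot.mk_eq_mk] at hb
  obtain ⟨a, ha⟩ := hb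
  have : h * H = 0 := by
    apply MvPolynomial.funext
    intro y
    rw [map_mul, map_zero]
    by_cases hy : eval y H = 0
    · rw [hy, mul_zero]
    obtain ⟨t, h1, h2⟩ := hroot y hy
    have h3 := congrArg (fun P => eval y (Polynomial.eval (C t) P)) ha
    simp only [Polynomial.eval_sub, Polynomial.eval_mul, Polynomial.eval_C, map_sub, map_mul] at h3
    rw [hP, hE, line_eval_real, line_eval_real, h1, h2] at h3
    have : eval y h = 0 := by linear_combination h3
    rw [this, zero_mul]
  exact (mul_ne_zero hh hH) this

end S15

namespace S15

lemma binary_zero (a b c : ℂ) : ∃ s t : ℂ, (s ≠ 0 ∨ t ≠ 0) ∧ a * s ^ 2 + b * (s * t) + c * t ^ 2 = 0 := by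
  by_cases ha : a = 0
  · exact ⟨1, 0, Or.inl one_ne_zero, by simp [ha]⟩
  · obtain ⟨w, hw⟩ := IsAlgClosed.exists_pow_nat_eq (discrim a b c) (n := 2) (by norm_num)
    obtain ⟨s, hs⟩ := exists_quadratic_eq_zero ha ⟨w, by rw [← hw]; ring⟩
    exact ⟨s, 1, Or.inr one_ne_zero, by linear_combination hs⟩

open Matrix in
lemma conics (P Q : Matrix (Fin 3) (Fin 3) ℂ) (hP : P.IsSymm) (hQ : Q.IsSymm) :
    ∃ v : Fin 3 → ℂ, v ≠ 0 ∧ v ⬝ᵥ P *ᵥ v = 0 ∧ v ⬝ᵥ Q *ᵥ v = 0 := by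
  obtain ⟨s, t, hst, hdet⟩ : ∃ s t : ℂ, (s ≠ 0 ∨ t ≠ 0) ∧ (s • P + t • Q).det = 0 := by
    by_cases h : Q.det = 0
    · exact ⟨0, 1, Or.inr one_ne_zero, by simpa using h⟩
    · obtain ⟨μ, hμ⟩ := IsAlgClosed.exists_root (Q⁻¹ * P).charpoly (by
        rw [Matrix.charpoly_degree_eq_dim]; simp)
      refine ⟨-1, μ, Or.inl (by norm_num), ?_⟩
      have h1 := hμ.eq_zero
      rw [Matrix.eval_charpoly] at h1
      have h2 : (-1 : ℂ) • P + μ • Q = Q * (Matrix.scalar (Fin 3) μ - Q⁻¹ * P) := by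
        rw [mul_sub, ← mul_assoc, Matrix.mul_nonsing_inv _ (Ne.isUnit h), one_mul]
        simp [sub_eq_neg_add, Matrix.scalar_apply, ← Matrix.smul_eq_mul_diagonal]
      rw [h2, Matrix.det_mul, h1, mul_zero]
  set R := s • P + t • Q with hR
  have hRs : R.IsSymm := (hP.smul s).add (hQ.smul t)
  obtain ⟨k, hk, hRk⟩ := Matrix.exists_mulVec_eq_zero_iff.2 hdet
  obtain ⟨i, hi⟩ := Function.ne_iff.1 hk
  obtain ⟨u, hui, hu, hRu⟩ : ∃ u : Fin 3 → ℂ, u i = 0 ∧ u ≠ 0 ∧ u ⬝ᵥ R *ᵥ u = 0 := by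
    fin_cases i
    · obtain ⟨a, b, hab, h⟩ := binary_zero (R 1 1) (R 1 2 + R 2 1) (R 2 2)
      refine ⟨![0, a, b], rfl, ?_, ?_⟩
      · intro h0
        rcases hab with h1 | h1
        · exact h1 (congrFun h0 1)
        · exact h1 (congrFun h0 2)
      · simp [dotProduct, mulVec, Fin.sum_univ_three]; linear_combination h
    · obtain ⟨a, b, hab, h⟩ := binary_zero (R 0 0) (R 0 2 + R 2 0) (R 2 2)
      refine ⟨![a, 0, b], rfl, ?_, ?_⟩
      · intro h0
        rcases hab with h1 | h1
        · exact h1 (congrFun h0 0)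
        · exact h1 (congrFun h0 2)
      · simp [dotProduct, mulVec, Fin.sum_univ_three]; linear_combination h
    · obtain ⟨a, b, hab, h⟩ := binary_zero (R 0 0) (R 0 1 + R 1 0) (R 1 1)
      refine ⟨![a, b, 0], rfl, ?_, ?_⟩
      · intro h0
        rcases hab with h1 | h1
        · exact h1 (congrFun h0 0)
        · exact h1 (congrFun h0 1)
      · simp [dotProduct, mulVec, Fin.sum_univ_three]; linear_combination h
  have expand : ∀ (S : Matrix (Fin 3) (Fin 3) ℂ) (a b : ℂ),
      (a • k + b • u) ⬝ᵥ S *ᵥ (a • k + b • u) = (k ⬝ᵥ S *ᵥ k) * a ^ 2 +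
        (k ⬝ᵥ S *ᵥ u + u ⬝ᵥ S *ᵥ k) * (a * b) + (u ⬝ᵥ S *ᵥ u) * b ^ 2 := by
    intro S a b
    simp [mulVec_add, mulVec_smul, dotProduct_add, add_dotProduct]
    ring
  have hsym : k ⬝ᵥ R *ᵥ u = u ⬝ᵥ R *ᵥ k := by
    rw [dotProduct_comm, dotProduct_mulVec, ← mulVec_transpose, hRs.eq, dotProduct_comm,
      dotProduct_comm]
  have hne : ∀ a b : ℂ, (a ≠ 0 ∨ b ≠ 0) → a • k + b • u ≠ 0 := by
    intro a b hab h0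
    have h1 := congrFun h0 i
    simp [hui] at h1
    have ha := h1.resolve_right hi
    rw [ha] at h0
    simp [hu] at h0
    rcases hab with h | h <;> contradiction
  have hRv : ∀ a b : ℂ, (a • k + b • u) ⬝ᵥ R *ᵥ (a • k + b • u) = 0 := by
    intro a b
    rw [expand, hsym, hRk, hRu]; simp
  have hsplit : ∀ v, v ⬝ᵥ R *ᵥ v = s * (v ⬝ᵥ P *ᵥ v) + t * (v ⬝ᵥ Q *ᵥ v) := by
    intro v
    simp [hR, add_mulVec, smul_mulVec, dotProduct_add]
  rcases hst with h | h
  · obtain ⟨a, b, hab, h0⟩ := binary_zero _ _ _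
    rw [← expand Q] at h0
    refine ⟨_, hne a b hab, ?_, h0⟩
    have := hRv a b
    rw [hsplit, h0] at this
    simpa [h] using this
  · obtain ⟨a, b, hab, h0⟩ := binary_zero _ _ _
    rw [← expand P] at h0
    refine ⟨_, hne a b hab, h0, ?_⟩
    have := hRv a b
    rw [hsplit, h0] at this
    simpa [h] using this

lemma sing_ii {F L e a d b₁ b₂ : MvPolynomial (Fin 4) ℝ} (hL : L.IsHomogeneous 1)
    (he : e.IsHomogeneous 1) (ha : a.IsHomogeneous 1) (hd : d.IsHomogeneous 1)
    (hb₁ : b₁.IsHomogeneous 1) (hb₂ : b₂.IsHomogeneous 1)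
    (hF : F = L * ((L + e) * (L + a) - d ^ 2) - (b₁ ^ 2 + b₂ ^ 2) * (L + e)) : Sing F := by
  obtain ⟨p, hp, h1, h2, h3⟩ := common_zero (L + e) d (L * (L + a) - (b₁ ^ 2 + b₂ ^ 2))
    (hL.add he) hd ((hL.mul (hL.add ha)).sub ((hb₁.pow 2).add (hb₂.pow 2)))
  simp only [map_add, map_mul, map_sub, map_pow] at h1 h2 h3
  refine ⟨p, hp, ?_, fun i => ?_⟩
  · simp only [hF, map_add, map_mul, map_sub, map_pow, h1, h2]
    ring
  · simp only [hF, Derivation.leibniz, Derivation.leibniz_pow, map_add, map_mul, map_sub, map_pow,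
      smul_eq_mul, nsmul_eq_mul, map_natCast, h1, h2]
    linear_combination (aeval p (pderiv i L) + aeval p (pderiv i e)) * h3

lemma lin_form (l : MvPolynomial (Fin 4) ℝ) (hl : l.IsHomogeneous 1) :
    ∃ c : Fin 4 → ℝ, l = ∑ i, C (c i) * X i := by
  have : l ∈ Submodule.span ℝ (Set.range (X : Fin 4 → MvPolynomial (Fin 4) ℝ)) := by
    rw [← homogeneousSubmodule_one_eq_span_X]; exact hl
  obtain ⟨c, rfl⟩ := (Submodule.mem_span_range_iff_exists_fun ℝ).1 this
  exact ⟨c, by simp [smul_eq_C_mul]⟩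

open Matrix in
lemma sing_i {F : MvPolynomial (Fin 4) ℝ} (m : Fin 6 → MvPolynomial (Fin 4) ℝ)
    (hm : ∀ j, (m j).IsHomogeneous 1)
    (hF : F = m 0 * m 1 * m 2 + 2 * (m 3 * m 4 * m 5) - m 0 * m 5 ^ 2 - m 1 * m 4 ^ 2
      - m 2 * m 3 ^ 2) : Sing F := by
  have fin : ∀ p : Fin 4 → ℂ, p ≠ 0 → (∃ x y z : ℂ, aeval p (m 0) = x * x ∧ aeval p (m 1) = y * y ∧
      aeval p (m 2) = z * z ∧ aeval p (m 3) = x * y ∧ aeval p (m 4) = x * z ∧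
      aeval p (m 5) = y * z) → Sing F := by
    rintro p hp ⟨x, y, z, h0, h1, h2, h3, h4, h5⟩
    refine ⟨p, hp, ?_, fun i => ?_⟩
    · simp only [hF, map_add, map_mul, map_sub, map_pow, h0, h1, h2, h3, h4, h5, map_ofNat]
      ring
    · have h22 : pderiv i (2 : MvPolynomial (Fin 4) ℝ) = 0 := by
        have : (2 : MvPolynomial (Fin 4) ℝ) = C 2 := (map_ofNat C 2).symm
        rw [this, pderiv_C]
      simp only [hF, Derivation.leibniz, Derivation.leibniz_pow, map_add, map_mul, map_sub, map_pow,
        smul_eq_mul, nsmul_eq_mul, map_natCast, h0, h1, h2, h3, h4, h5, map_ofNat, h22, map_zero]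
      push_cast
      ring
  choose c hc using fun j => lin_form (m j) (hm j)
  let Φ : (Fin 4 → ℂ) →ₗ[ℂ] (Fin 6 → ℂ) :=
    LinearMap.pi fun j => ∑ i, (c j i : ℂ) • LinearMap.proj i
  have hΦ : ∀ p j, aeval p (m j) = Φ p j := by
    intro p j
    rw [hc]
    simp [Φ]
  by_cases hinj : Function.Injective Φ
  · have hr : Module.finrank ℂ (LinearMap.range Φ) = 4 := by
      rw [LinearMap.finrank_range_of_inj hinj]; simp
    have hq := Submodule.finrank_quotient_add_finrank (LinearMap.range Φ)
    rw [hr] at hq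
    have hq2 : Module.finrank ℂ ((Fin 6 → ℂ) ⧸ LinearMap.range Φ) = Module.finrank ℂ (Fin 2 → ℂ) := by
      simp at hq ⊢; omega
    let ε := LinearEquiv.ofFinrankEq _ _ hq2
    let π : (Fin 6 → ℂ) →ₗ[ℂ] (Fin 2 → ℂ) := ε.toLinearMap ∘ₗ (LinearMap.range Φ).mkQ
    have hπ : ∀ x, π x = 0 → ∃ p, Φ p = x := by
      intro x hx
      have : (LinearMap.range Φ).mkQ x = 0 := by
        simpa [π] using hx
      simpa using this
    let M : Fin 2 → Matrix (Fin 3) (Fin 3) ℂ := fun k =>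
      let φ := fun j : Fin 6 => π (Pi.single j 1) k
      !![φ 0, φ 3 / 2, φ 4 / 2; φ 3 / 2, φ 1, φ 5 / 2; φ 4 / 2, φ 5 / 2, φ 2]
    have hM : ∀ k, (M k).IsSymm := by
      intro k
      ext i j
      fin_cases i <;> fin_cases j <;> rfl
    obtain ⟨v, hv, h0, h1⟩ := conics (M 0) (M 1) (hM 0) (hM 1)
    let x : Fin 6 → ℂ := ![v 0 * v 0, v 1 * v 1, v 2 * v 2, v 0 * v 1, v 0 * v 2, v 1 * v 2]
    have hx : ∀ k, π x k = v ⬝ᵥ M k *ᵥ v := by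
      intro k
      have : x = ∑ j, x j • Pi.single j (1 : ℂ) := by
        ext j; simp [Finset.sum_apply, Pi.single_apply]
      rw [this, map_sum, Finset.sum_apply]
      simp [Fin.sum_univ_six, x, M, dotProduct, mulVec, Fin.sum_univ_three]
      ring
    obtain ⟨p, hp⟩ := hπ x (by
      ext k
      rw [hx]
      fin_cases k
      · exact h0
      · exact h1)
    refine fin p ?_ ⟨v 0, v 1, v 2, ?_⟩
    · rintro rfl
      apply hv
      rw [map_zero] at hp
      ext i
      fin_cases i
      · have := congrFun hp 0; simpa [x] using this.symm
      · have := congrFun hp 1; simpa [x] using this.symm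
      · have := congrFun hp 2; simpa [x] using this.symm
    · simp only [hΦ, hp]
      exact ⟨rfl, rfl, rfl, rfl, rfl, rfl⟩
  · rw [injective_iff_map_eq_zero] at hinj
    push Not at hinj
    obtain ⟨p, hp, hp0⟩ := hinj
    exact fin p hp0 ⟨0, 0, 0, by simp [hΦ, hp]⟩
end S15

namespace S15

/-- Determinant of a symmetric 4×4 matrix. -/
def sd {R : Type*} [CommRing R] (a00 a01 a02 a03 a11 a12 a13 a22 a23 a33 : R) : R :=
  a33 * (a00 * a11 * a22 + 2 * (a01 * a02 * a12) - a00 * a12 ^ 2 - a11 * a02 ^ 2 - a22 * a01 ^ 2)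
  - (a03 ^ 2 * (a11 * a22 - a12 ^ 2) + a13 ^ 2 * (a00 * a22 - a02 ^ 2)
    + a23 ^ 2 * (a00 * a11 - a01 ^ 2) + 2 * (a03 * a13 * (a02 * a12 - a01 * a22))
    + 2 * (a03 * a23 * (a01 * a12 - a02 * a11)) + 2 * (a13 * a23 * (a01 * a02 - a00 * a12)))

lemma det_sym (M : Matrix (Fin 4) (Fin 4) ℝ) (h : ∀ a b, M a b = M b a) :
    M.det = sd (M 0 0) (M 0 1) (M 0 2) (M 0 3) (M 1 1) (M 1 2) (M 1 3) (M 2 2) (M 2 3) (M 3 3) := by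
  have e : M = !![M 0 0, M 0 1, M 0 2, M 0 3; M 0 1, M 1 1, M 1 2, M 1 3;
      M 0 2, M 1 2, M 2 2, M 2 3; M 0 3, M 1 3, M 2 3, M 3 3] := by
    ext i j
    fin_cases i <;> fin_cases j <;> simp <;> exact h _ _
  generalize M 0 0 = a00, M 0 1 = a01, M 0 2 = a02, M 0 3 = a03, M 1 1 = a11, M 1 2 = a12,
    M 1 3 = a13, M 2 2 = a22, M 2 3 = a23, M 3 3 = a33 at e ⊢
  subst e
  simp [Matrix.det_succ_row_zero, Fin.sum_univ_succ, sd, Fin.succAbove]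
  ring

/-- Linear pencil. -/
def pen (N : Fin 4 → Matrix (Fin 4) (Fin 4) ℝ) (p : Fin 4 → ℝ) : Matrix (Fin 4) (Fin 4) ℝ :=
  ∑ i, p i • N i

lemma pen_add (N p q) : pen N (p + q) = pen N p + pen N q := by
  simp [pen, add_smul, Finset.sum_add_distrib]

lemma pen_smul (N p) (t : ℝ) : pen N (t • p) = t • pen N p := by
  simp [pen, mul_smul, Finset.smul_sum]

/-- Normalized determinantal data. -/
structure Dat (N : Fin 4 → Matrix (Fin 4) (Fin 4) ℝ) (L F : MvPolynomial (Fin 4) ℝ) : Prop where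
  sym : ∀ i a b, N i a b = N i b a
  hL : L.IsHomogeneous 1
  hL0 : L ≠ 0
  h0 : ∀ p, (pen N p).det = 0
  h1 : ∀ p, eval p L * eval p F = (eval p L • (1 : Matrix (Fin 4) (Fin 4) ℝ) + pen N p).det

/-- Entries as linear forms. -/
noncomputable def ent (N : Fin 4 → Matrix (Fin 4) (Fin 4) ℝ) (a b : Fin 4) : MvPolynomial (Fin 4) ℝ :=
  ∑ i, C (N i a b) * X i

lemma ent_hom (N a b) : (ent N a b).IsHomogeneous 1 := by
  unfold ent
  refine IsHomogeneous.sum _ _ _ fun i _ => ?_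
  simpa using (isHomogeneous_C (Fin 4) (N i a b)).mul (isHomogeneous_X ℝ i)

lemma ent_eval (N a b p) : eval p (ent N a b) = pen N p a b := by
  simp [ent, pen, Matrix.sum_apply, mul_comm]

variable {N : Fin 4 → Matrix (Fin 4) (Fin 4) ℝ} {L F : MvPolynomial (Fin 4) ℝ}

lemma Dat.psym (D : Dat N L F) (p a b) : pen N p a b = pen N p b a := by
  simp [pen, Matrix.sum_apply, D.sym _ a b]

lemma Dat.p0 (D : Dat N L F) : sd (ent N 0 0) (ent N 0 1) (ent N 0 2) (ent N 0 3) (ent N 1 1)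
    (ent N 1 2) (ent N 1 3) (ent N 2 2) (ent N 2 3) (ent N 3 3) = 0 := by
  apply MvPolynomial.funext
  intro p
  have := D.h0 p
  rw [det_sym _ (D.psym p)] at this
  simpa [sd, ent_eval] using this

lemma Dat.p1 (D : Dat N L F) : L * F = sd (L + ent N 0 0) (ent N 0 1) (ent N 0 2) (ent N 0 3)
    (L + ent N 1 1) (ent N 1 2) (ent N 1 3) (L + ent N 2 2) (ent N 2 3) (L + ent N 3 3) := by
  apply MvPolynomial.funext
  intro p
  have := D.h1 p
  rw [det_sym _ ?_] at this
  · simpa [sd, ent_eval] using this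
  · intro a b
    simp [D.psym p a b, Matrix.one_apply, eq_comm]

lemma Dat.conj (D : Dat N L F) (Q : Matrix (Fin 4) (Fin 4) ℝ) (hQ : Q.transpose * Q = 1) :
    Dat (fun i => Q.transpose * N i * Q) L F := by
  have hp : ∀ p, pen (fun i => Q.transpose * N i * Q) p = Q.transpose * pen N p * Q := by
    intro p
    simp [pen, Matrix.mul_sum, Matrix.sum_mul]
  have hd : Q.transpose.det * Q.det = 1 := by rw [← Matrix.det_mul, hQ, Matrix.det_one]
  refine ⟨fun i a b => ?_, D.hL, D.hL0, fun p => ?_, fun p => ?_⟩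
  · have hs : (N i).transpose = N i := by ext a b; exact D.sym i b a
    have : (Q.transpose * N i * Q).transpose = Q.transpose * N i * Q := by
      simp [Matrix.transpose_mul, hs, Matrix.mul_assoc]
    exact congrFun (congrFun this.symm a) b
  · rw [hp, Matrix.det_mul, Matrix.det_mul, D.h0]; simp
  · rw [hp, D.h1]
    have : eval p L • (1 : Matrix (Fin 4) (Fin 4) ℝ) + Q.transpose * pen N p * Q
        = Q.transpose * (eval p L • (1 : Matrix (Fin 4) (Fin 4) ℝ) + pen N p) * Q := by
      simp [mul_add, add_mul, hQ]
    rw [this, Matrix.det_mul, Matrix.det_mul]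
    linear_combination (-(eval p L • (1 : Matrix (Fin 4) (Fin 4) ℝ) + pen N p).det) * hd

lemma exists_orth (s : Set (Fin 4)) (v : Fin 4 → Fin 4 → ℝ)
    (h : ∀ i ∈ s, ∀ j ∈ s, v i ⬝ᵥ v j = if i = j then 1 else 0) :
    ∃ Q : Matrix (Fin 4) (Fin 4) ℝ, Q.transpose * Q = 1 ∧ ∀ i ∈ s, ∀ a, Q a i = v i a := by
  let w : Fin 4 → EuclideanSpace ℝ (Fin 4) := fun i => WithLp.toLp 2 (v i)
  have hw : Orthonormal ℝ (s.domRestrict w) := by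
    rw [orthonormal_iff_ite]
    rintro ⟨i, hi⟩ ⟨j, hj⟩
    have := h j hj i hi
    simp only [Set.domRestrict_apply, w, EuclideanSpace.inner_toLp_toLp, star_trivial]
    rw [this]
    simp [eq_comm]
  obtain ⟨b, hb⟩ := hw.exists_orthonormalBasis_extension_of_card_eq (by simp)
  refine ⟨Matrix.of fun a i => b i a, ?_, ?_⟩
  · ext i j
    have := orthonormal_iff_ite.1 b.orthonormal i j
    rw [Matrix.mul_apply, Matrix.one_apply, ← this]
    simp [PiLp.inner_apply, Matrix.transpose_apply, mul_comm]
  · intro i hi a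
    show b i a = v i a
    rw [hb i hi]

end S15

namespace S15

variable {N : Fin 4 → Matrix (Fin 4) (Fin 4) ℝ} {L F : MvPolynomial (Fin 4) ℝ}

/-- Symmetric rank-one factorization of a linear family of 2×2 singular symmetric matrices. -/
lemma rank_one (α β γ : MvPolynomial (Fin 4) ℝ) (hα : α.IsHomogeneous 1) (hβ : β.IsHomogeneous 1)
    (hγ : γ.IsHomogeneous 1) (h : α * β = γ ^ 2) :
    ∃ c s : ℝ, c ^ 2 + s ^ 2 = 1 ∧ α = C (c ^ 2) * (α + β) ∧ γ = C (c * s) * (α + β) ∧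
      β = C (s ^ 2) * (α + β) := by
  have lin : ∀ l : MvPolynomial (Fin 4) ℝ, l.IsHomogeneous 1 → ∀ p q,
      eval (p + q) l = eval p l + eval q l := by
    intro l hl p q
    obtain ⟨c, rfl⟩ := lin_form l hl
    simp [mul_add, Finset.sum_add_distrib]
  have hev : ∀ p, eval p α * eval p β = eval p γ ^ 2 := fun p => by
    have := congrArg (eval p) h
    simpa using this
  by_cases h0 : α + β = 0
  · have hb : β = -α := by linear_combination h0
    have hz : ∀ p, eval p α = 0 ∧ eval p γ = 0 := fun p => by
      have h1 := hev p
      rw [hb] at h1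
      simp only [map_neg] at h1
      have h2 : eval p α ^ 2 + eval p γ ^ 2 = 0 := by linear_combination -h1
      constructor
      · have := sq_nonneg (eval p γ)
        have := sq_nonneg (eval p α)
        exact pow_eq_zero_iff (two_ne_zero) |>.1 (by linarith)
      · have := sq_nonneg (eval p γ)
        have := sq_nonneg (eval p α)
        exact pow_eq_zero_iff (two_ne_zero) |>.1 (by linarith)
    have ha : α = 0 := MvPolynomial.funext fun p => by simpa using (hz p).1
    have hg : γ = 0 := MvPolynomial.funext fun p => by simpa using (hz p).2
    refine ⟨1, 0, by norm_num, ?_, ?_, ?_⟩ <;> simp [hb, ha, hg]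
  · obtain ⟨p0, hp0⟩ : ∃ p, eval p (α + β) ≠ 0 := by
      by_contra hc
      push Not at hc
      exact h0 (MvPolynomial.funext fun p => by simpa using hc p)
    rw [map_add] at hp0
    -- the unit vector
    obtain ⟨c, s, hcs, e1, e2, e3⟩ : ∃ c s : ℝ, c ^ 2 + s ^ 2 = 1 ∧
        eval p0 α = c ^ 2 * (eval p0 α + eval p0 β) ∧
        eval p0 γ = c * s * (eval p0 α + eval p0 β) ∧
        eval p0 β = s ^ 2 * (eval p0 α + eval p0 β) := by
      have h1 := hev p0
      generalize eval p0 α = a, eval p0 β = b, eval p0 γ = g at *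
      -- vector (a, g) or (g, b)
      by_cases ha : a = 0
      · have hg : g = 0 := by subst ha; simpa using h1.symm
        subst ha hg
        refine ⟨0, 1, by norm_num, ?_, ?_, ?_⟩ <;> ring
      · have hpos : 0 < a ^ 2 + g ^ 2 := by positivity
        have hr := Real.sq_sqrt hpos.le
        have hr0 : Real.sqrt (a ^ 2 + g ^ 2) ≠ 0 := (Real.sqrt_pos.2 hpos).ne'
        generalize Real.sqrt (a ^ 2 + g ^ 2) = r at *
        refine ⟨a / r, g / r, ?_, ?_, ?_, ?_⟩
        · field_simp; linarith
        · field_simp; rw [hr]; linear_combination -h1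
        · field_simp; rw [hr]; linear_combination (-g) * h1
        · field_simp; rw [hr]
          linear_combination a * h1
    have key : ∀ p, eval p α = c ^ 2 * (eval p α + eval p β) ∧
        eval p γ = c * s * (eval p α + eval p β) ∧
        eval p β = s ^ 2 * (eval p α + eval p β) := by
      intro p
      have hp := hev p
      have h1 := hev p0
      have h2 := hev (p + p0)
      simp only [lin _ hα, lin _ hβ, lin _ hγ] at h2
      generalize eval p0 α = a0, eval p0 β = b0, eval p0 γ = g0, eval p α = a, eval p β = b,
        eval p γ = g at *
      -- uᵀ M u = 0
      have pol : a0 * b + b0 * a - 2 * g0 * g = 0 := by linear_combination h2 - hp - h1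
      have hu : s ^ 2 * a - 2 * (c * s) * g + c ^ 2 * b = 0 := by
        apply mul_left_cancel₀ hp0
        linear_combination pol - b * e1 - a * e3 + 2 * g * e2
      -- M u = 0
      have m1 : a * s - g * c = 0 := by
        have : (a * s - g * c) ^ 2 = 0 := by
          linear_combination a * hu - c ^ 2 * hp
        exact pow_eq_zero_iff two_ne_zero |>.1 this
      have m2 : g * s - b * c = 0 := by
        have : (g * s - b * c) ^ 2 = 0 := by
          linear_combination b * hu - s ^ 2 * hp
        exact pow_eq_zero_iff two_ne_zero |>.1 this
      refine ⟨?_, ?_, ?_⟩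
      · linear_combination (-a) * hcs + s * m1 + c * m2
      · linear_combination (-g) * hcs - c * m1 + s * m2
      · linear_combination (-b) * hcs - c * m2 - s * m1
    refine ⟨c, s, hcs, ?_, ?_, ?_⟩ <;> apply MvPolynomial.funext <;> intro p
    · simpa using (key p).1
    · simpa using (key p).2.1
    · simpa using (key p).2.2

lemma core_a (D : Dat N L F) (z1 : ent N 1 3 = 0) (z2 : ent N 2 3 = 0) (z3 : ent N 3 3 = 0) :
    Sing F := by
  have p0 := D.p0
  have p1 := D.p1
  rw [z1, z2, z3] at p0 p1
  by_cases hr : ent N 0 3 = 0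
  · have hF : F = sd (L + ent N 0 0) (ent N 0 1) (ent N 0 2) 0
        (L + ent N 1 1) (ent N 1 2) 0 (L + ent N 2 2) 0 1 := by
      apply mul_left_cancel₀ D.hL0
      rw [p1, hr]; simp only [sd]; ring
    refine sing_i ![L + ent N 0 0, L + ent N 1 1, L + ent N 2 2, ent N 0 1, ent N 0 2, ent N 1 2]
      ?_ ?_
    · intro j
      fin_cases j <;> simp [ent_hom, D.hL, IsHomogeneous.add]
    · rw [hF]; simp [sd, Fin.isValue]
  · have hab : ent N 1 1 * ent N 2 2 = ent N 1 2 ^ 2 := by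
      have : ent N 0 3 ^ 2 * (ent N 1 1 * ent N 2 2 - ent N 1 2 ^ 2) = 0 := by
        simp only [sd] at p0
        linear_combination -p0
      rcases mul_eq_zero.1 this with h | h
      · exact absurd (pow_eq_zero_iff two_ne_zero |>.1 h) hr
      · linear_combination h
    obtain ⟨c, s, hcs, ha, hg, hb⟩ := rank_one _ _ _ (ent_hom N 1 1) (ent_hom N 2 2)
      (ent_hom N 1 2) hab
    have hC : ∀ (r : ℝ) {l : MvPolynomial (Fin 4) ℝ}, l.IsHomogeneous 1 →
        (C r * l).IsHomogeneous 1 := fun r l hl => by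
      simpa using (isHomogeneous_C (Fin 4) r).mul hl
    refine sing_ii (L := L) (e := ent N 1 1 + ent N 2 2) (a := ent N 0 0)
      (d := C c * ent N 0 1 + C s * ent N 0 2) (b₁ := C (-s) * ent N 0 1 + C c * ent N 0 2)
      (b₂ := ent N 0 3) D.hL ((ent_hom _ _ _).add (ent_hom _ _ _)) (ent_hom _ _ _)
      ((hC _ (ent_hom _ _ _)).add (hC _ (ent_hom _ _ _)))
      ((hC _ (ent_hom _ _ _)).add (hC _ (ent_hom _ _ _))) (ent_hom _ _ _) ?_
    apply mul_left_cancel₀ D.hL0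
    rw [p1]
    have hCs : (C c : MvPolynomial (Fin 4) ℝ) ^ 2 + C s ^ 2 = 1 := by
      rw [← C_pow, ← C_pow, ← C_add, hcs, C_1]
    generalize ent N 1 1 + ent N 2 2 = e at *
    rw [ha, hg, hb]
    simp only [sd, C_pow, C_mul, C_neg]
    generalize (C c : MvPolynomial (Fin 4) ℝ) = c at *
    generalize (C s : MvPolynomial (Fin 4) ℝ) = s at *
    generalize ent N 0 0 = a, ent N 0 1 = n1, ent N 0 2 = n2, ent N 0 3 = r
    grind

end S15

namespace S15

variable {N : Fin 4 → Matrix (Fin 4) (Fin 4) ℝ} {L F : MvPolynomial (Fin 4) ℝ}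

/-- Sum of principal 3-minors. -/
def e3 {R : Type*} [CommRing R] (a00 a01 a02 a03 a11 a12 a13 a22 a23 a33 : R) : R :=
  (a00 * a11 * a22 + 2 * (a01 * a02 * a12) - a00 * a12 ^ 2 - a11 * a02 ^ 2 - a22 * a01 ^ 2)
  + (a00 * a11 * a33 + 2 * (a01 * a03 * a13) - a00 * a13 ^ 2 - a11 * a03 ^ 2 - a33 * a01 ^ 2)
  + (a00 * a22 * a33 + 2 * (a02 * a03 * a23) - a00 * a23 ^ 2 - a22 * a03 ^ 2 - a33 * a02 ^ 2)
  + (a11 * a22 * a33 + 2 * (a12 * a13 * a23) - a11 * a23 ^ 2 - a22 * a13 ^ 2 - a33 * a12 ^ 2)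

lemma cross_par {u0 u1 u2 v1 v2 c0 c1 c2 : ℝ} (uc0 : u1 * c2 - u2 * c1 = 0)
    (uc1 : u2 * c0 - u0 * c2 = 0) (uc2 : u0 * c1 - u1 * c0 = 0) (vc0 : v1 * c2 - v2 * c1 = 0)
    (hc : c0 ^ 2 + c1 ^ 2 + c2 ^ 2 ≠ 0) : u1 * v2 - u2 * v1 = 0 := by
  apply (mul_eq_zero.1 (_ : _ * _ = (0 : ℝ))).resolve_right hc
  linear_combination c2 * (v2 * uc0 - u2 * vc0) + c1 * (v1 * uc0 - u1 * vc0)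
    + c0 * (-v2 * uc2 - v1 * uc1 - u0 * vc0)

lemma sumsq {a b c : ℝ} (h : a ^ 2 + b ^ 2 + c ^ 2 ≤ 0) : a = 0 ∧ b = 0 ∧ c = 0 := by
  have := sq_nonneg a
  have := sq_nonneg b
  have := sq_nonneg c
  refine ⟨?_, ?_, ?_⟩ <;> exact (pow_eq_zero_iff two_ne_zero).1 (by linarith)

set_option maxHeartbeats 1600000 in
/-- Case where the last row of the pencil at one point vanishes. -/
lemma core_b (D : Dat N L F) (p1 : Fin 4 → ℝ) (hz : ∀ a, pen N p1 a 3 = 0)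
    (hd : e3 (pen N p1 0 0) (pen N p1 0 1) (pen N p1 0 2) 0 (pen N p1 1 1) (pen N p1 1 2) 0
      (pen N p1 2 2) 0 0 ≠ 0) : Sing F := by
  have hdet : ∀ p (t : ℝ), sd (pen N p 0 0 + t * pen N p1 0 0) (pen N p 0 1 + t * pen N p1 0 1)
      (pen N p 0 2 + t * pen N p1 0 2) (pen N p 0 3) (pen N p 1 1 + t * pen N p1 1 1)
      (pen N p 1 2 + t * pen N p1 1 2) (pen N p 1 3) (pen N p 2 2 + t * pen N p1 2 2)
      (pen N p 2 3) (pen N p 3 3) = 0 := by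
    intro p t
    have := D.h0 (p + t • p1)
    rw [det_sym _ (D.psym _)] at this
    simpa [pen_add, pen_smul, hz] using this
  have h33 : ∀ p, pen N p 3 3 = 0 := by
    intro p
    have a0 := hdet p 0
    have a1 := hdet p 1
    have a2 := hdet p 2
    have a3 := hdet p (-1)
    simp only [sd] at a0 a1 a2 a3
    simp only [e3] at hd
    apply (mul_eq_zero.1 (_ : _ * _ = (0 : ℝ))).resolve_right hd
    linear_combination (a2 - 3 * a1 + 3 * a0 - a3) / 6
  -- quadratic form on z
  have hq : ∀ p, pen N p 0 3 ^ 2 * (pen N p1 1 1 * pen N p1 2 2 - pen N p1 1 2 ^ 2)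
      + pen N p 1 3 ^ 2 * (pen N p1 0 0 * pen N p1 2 2 - pen N p1 0 2 ^ 2)
      + pen N p 2 3 ^ 2 * (pen N p1 0 0 * pen N p1 1 1 - pen N p1 0 1 ^ 2)
      + 2 * (pen N p 0 3 * pen N p 1 3 * (pen N p1 0 2 * pen N p1 1 2 - pen N p1 0 1 * pen N p1 2 2))
      + 2 * (pen N p 0 3 * pen N p 2 3 * (pen N p1 0 1 * pen N p1 1 2 - pen N p1 0 2 * pen N p1 1 1))
      + 2 * (pen N p 1 3 * pen N p 2 3 * (pen N p1 0 1 * pen N p1 0 2 - pen N p1 0 0 * pen N p1 1 2))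
      = 0 := by
    intro p
    have a0 := hdet p 0
    have a1 := hdet p 1
    have a3 := hdet p (-1)
    simp only [sd, h33] at a0 a1 a3
    linear_combination a0 - (a1 + a3) / 2
  -- all z parallel
  have hpar : ∀ p q, pen N p 1 3 * pen N q 2 3 - pen N p 2 3 * pen N q 1 3 = 0 ∧
      pen N p 2 3 * pen N q 0 3 - pen N p 0 3 * pen N q 2 3 = 0 ∧
      pen N p 0 3 * pen N q 1 3 - pen N p 1 3 * pen N q 0 3 = 0 := by
    intro p q
    have b1 := hq p
    have b2 := hq q
    have b3 := hq (p + q)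
    simp only [pen_add, Matrix.add_apply] at b3
    simp only [e3] at hd
    generalize pen N p 0 3 = x0, pen N p 1 3 = x1, pen N p 2 3 = x2, pen N q 0 3 = y0,
      pen N q 1 3 = y1, pen N q 2 3 = y2, pen N p1 0 0 = s00, pen N p1 0 1 = s01,
      pen N p1 0 2 = s02, pen N p1 1 1 = s11, pen N p1 1 2 = s12, pen N p1 2 2 = s22 at *
    obtain ⟨P00, hP00⟩ : ∃ P, P = s11 * s22 - s12 ^ 2 := ⟨_, rfl⟩
    obtain ⟨P11, hP11⟩ : ∃ P, P = s00 * s22 - s02 ^ 2 := ⟨_, rfl⟩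
    obtain ⟨P22, hP22⟩ : ∃ P, P = s00 * s11 - s01 ^ 2 := ⟨_, rfl⟩
    obtain ⟨P01, hP01⟩ : ∃ P, P = s02 * s12 - s01 * s22 := ⟨_, rfl⟩
    obtain ⟨P02, hP02⟩ : ∃ P, P = s01 * s12 - s02 * s11 := ⟨_, rfl⟩
    obtain ⟨P12, hP12⟩ : ∃ P, P = s01 * s02 - s00 * s12 := ⟨_, rfl⟩
    simp only [← hP00, ← hP11, ← hP22, ← hP01, ← hP02, ← hP12] at b1 b2 b3
    -- images
    obtain ⟨u0, hu0⟩ : ∃ u, u = P00 * x0 + P01 * x1 + P02 * x2 := ⟨_, rfl⟩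
    obtain ⟨u1, hu1⟩ : ∃ u, u = P01 * x0 + P11 * x1 + P12 * x2 := ⟨_, rfl⟩
    obtain ⟨u2, hu2⟩ : ∃ u, u = P02 * x0 + P12 * x1 + P22 * x2 := ⟨_, rfl⟩
    obtain ⟨v0, hv0⟩ : ∃ u, u = P00 * y0 + P01 * y1 + P02 * y2 := ⟨_, rfl⟩
    obtain ⟨v1, hv1⟩ : ∃ u, u = P01 * y0 + P11 * y1 + P12 * y2 := ⟨_, rfl⟩
    obtain ⟨v2, hv2⟩ : ∃ u, u = P02 * y0 + P12 * y1 + P22 * y2 := ⟨_, rfl⟩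
    have xu : x0 * u0 + x1 * u1 + x2 * u2 = 0 := by subst u0 u1 u2; linear_combination b1
    have yv : y0 * v0 + y1 * v1 + y2 * v2 = 0 := by subst v0 v1 v2; linear_combination b2
    have xv : x0 * v0 + x1 * v1 + x2 * v2 = 0 := by
      subst v0 v1 v2; linear_combination (b3 - b1 - b2) / 2
    have yu : y0 * u0 + y1 * u1 + y2 * u2 = 0 := by
      subst u0 u1 u2; linear_combination (b3 - b1 - b2) / 2
    obtain ⟨c0, hc0⟩ : ∃ c, c = x1 * y2 - x2 * y1 := ⟨_, rfl⟩
    obtain ⟨c1, hc1⟩ : ∃ c, c = x2 * y0 - x0 * y2 := ⟨_, rfl⟩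
    obtain ⟨c2, hc2⟩ : ∃ c, c = x0 * y1 - x1 * y0 := ⟨_, rfl⟩
    rw [← hc0, ← hc1, ← hc2]
    -- u × c = 0
    have uc0 : u1 * c2 - u2 * c1 = 0 := by subst c1 c2; linear_combination x0 * yu - y0 * xu
    have uc1 : u2 * c0 - u0 * c2 = 0 := by subst c0 c2; linear_combination x1 * yu - y1 * xu
    have uc2 : u0 * c1 - u1 * c0 = 0 := by subst c1 c0; linear_combination x2 * yu - y2 * xu
    have vc0 : v1 * c2 - v2 * c1 = 0 := by subst c1 c2; linear_combination x0 * yv - y0 * xv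
    have vc1 : v2 * c0 - v0 * c2 = 0 := by subst c0 c2; linear_combination x1 * yv - y1 * xv
    have vc2 : v0 * c1 - v1 * c0 = 0 := by subst c1 c0; linear_combination x2 * yv - y2 * xv
    by_contra hne
    have hcpos : c0 ^ 2 + c1 ^ 2 + c2 ^ 2 ≠ 0 := fun h => hne (sumsq h.le)
    have w0 : u1 * v2 - u2 * v1 = 0 := cross_par uc0 uc1 uc2 vc0 hcpos
    have w1 : u2 * v0 - u0 * v2 = 0 := cross_par uc1 uc2 uc0 vc1 (by convert hcpos using 1; ring)
    have w2 : u0 * v1 - u1 * v0 = 0 := cross_par uc2 uc0 uc1 vc2 (by convert hcpos using 1; ring)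
    obtain ⟨Δ, hΔ⟩ : ∃ Δ, Δ = s00 * s11 * s22 + 2 * (s01 * s02 * s12) - s00 * s12 ^ 2
      - s11 * s02 ^ 2 - s22 * s01 ^ 2 := ⟨_, rfl⟩
    have hΔ0 : Δ ≠ 0 := by
      rw [hΔ]; intro h; apply hd; linear_combination h
    have k0 : s00 * c0 + s01 * c1 + s02 * c2 = 0 := by
      apply (mul_eq_zero.1 (_ : _ * _ = (0 : ℝ))).resolve_left hΔ0
      rw [← w0]; subst u0 u1 u2 v0 v1 v2 c0 c1 c2 P00 P01 P02 P11 P12 P22 Δ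
      ring
    have k1 : s01 * c0 + s11 * c1 + s12 * c2 = 0 := by
      apply (mul_eq_zero.1 (_ : _ * _ = (0 : ℝ))).resolve_left hΔ0
      rw [← w1]; subst u0 u1 u2 v0 v1 v2 c0 c1 c2 P00 P01 P02 P11 P12 P22 Δ
      ring
    have k2 : s02 * c0 + s12 * c1 + s22 * c2 = 0 := by
      apply (mul_eq_zero.1 (_ : _ * _ = (0 : ℝ))).resolve_left hΔ0
      rw [← w2]; subst u0 u1 u2 v0 v1 v2 c0 c1 c2 P00 P01 P02 P11 P12 P22 Δ
      ring
    apply hne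
    refine ⟨?_, ?_, ?_⟩
    · apply (mul_eq_zero.1 (_ : _ * _ = (0 : ℝ))).resolve_left hΔ0
      rw [hΔ]
      linear_combination (s11 * s22 - s12 ^ 2) * k0 + (s02 * s12 - s01 * s22) * k1 +
        (s01 * s12 - s02 * s11) * k2
    · apply (mul_eq_zero.1 (_ : _ * _ = (0 : ℝ))).resolve_left hΔ0
      rw [hΔ]
      linear_combination (s02 * s12 - s01 * s22) * k0 + (s00 * s22 - s02 ^ 2) * k1 +
        (s01 * s02 - s00 * s12) * k2
    · apply (mul_eq_zero.1 (_ : _ * _ = (0 : ℝ))).resolve_left hΔ0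
      rw [hΔ]
      linear_combination (s01 * s12 - s02 * s11) * k0 + (s01 * s02 - s00 * s12) * k1 +
        (s00 * s11 - s01 ^ 2) * k2
  have toent : ∀ (N' : Fin 4 → Matrix (Fin 4) (Fin 4) ℝ) a b, (∀ p, pen N' p a b = 0) →
      ent N' a b = 0 := fun N' a b h =>
    MvPolynomial.funext fun p => by rw [ent_eval, h p, map_zero]
  by_cases hall : ∀ p, pen N p 0 3 = 0 ∧ pen N p 1 3 = 0 ∧ pen N p 2 3 = 0
  · exact core_a D (toent _ _ _ fun p => (hall p).2.1) (toent _ _ _ fun p => (hall p).2.2)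
      (toent _ _ _ h33)
  push Not at hall
  obtain ⟨p0, hp0⟩ := hall
  have hpos : 0 < pen N p0 0 3 ^ 2 + pen N p0 1 3 ^ 2 + pen N p0 2 3 ^ 2 := by
    by_contra h
    obtain ⟨e0, e1, e2⟩ := sumsq (not_lt.1 h)
    exact hp0 e0 e1 e2
  have hr := Real.sq_sqrt hpos.le
  have hr0 := (Real.sqrt_pos.2 hpos).ne'
  set r := Real.sqrt (pen N p0 0 3 ^ 2 + pen N p0 1 3 ^ 2 + pen N p0 2 3 ^ 2) with hrdef
  let ζ : Fin 4 → ℝ := ![pen N p0 0 3 / r, pen N p0 1 3 / r, pen N p0 2 3 / r, 0]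
  obtain ⟨Q, hQ, hQv⟩ := exists_orth {0, 3} ![ζ, 0, 0, ![0, 0, 0, 1]] (by
    have hn : ζ ⬝ᵥ ζ = 1 := by
      simp [ζ, dotProduct, Fin.sum_univ_four]
      field_simp
      linarith
    intro i hi j hj
    simp only [Set.mem_insert_iff, Set.mem_singleton_iff] at hi hj
    rcases hi with rfl | rfl <;> rcases hj with rfl | rfl <;>
      simp [hn] <;> simp [ζ])
  have q0 := hQv 0 (by simp)
  have q3 := hQv 3 (by simp)
  have D' := D.conj Q hQ
  have hpen : ∀ p, pen (fun i => Q.transpose * N i * Q) p = Q.transpose * pen N p * Q := by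
    intro p
    simp [pen, Matrix.mul_sum, Matrix.sum_mul]
  have Q03 : Q 0 3 = 0 := by simpa using q3 0
  have Q13 : Q 1 3 = 0 := by simpa using q3 1
  have Q23 : Q 2 3 = 0 := by simpa using q3 2
  have Q33 : Q 3 3 = 1 := by simpa using q3 3
  have Q00 : Q 0 0 = pen N p0 0 3 / r := by simpa [ζ] using q0 0
  have Q10 : Q 1 0 = pen N p0 1 3 / r := by simpa [ζ] using q0 1
  have Q20 : Q 2 0 = pen N p0 2 3 / r := by simpa [ζ] using q0 2
  have Q30 : Q 3 0 = 0 := by simpa [ζ] using q0 3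
  have horth : ∀ j, Q 0 0 * Q 0 j + Q 1 0 * Q 1 j + Q 2 0 * Q 2 j = (1 : Matrix (Fin 4) (Fin 4) ℝ) 0 j := by
    intro j
    rw [← hQ]
    simp [Matrix.mul_apply, Fin.sum_univ_four, Q30]
  have h3j : ∀ j, Q 3 j = (1 : Matrix (Fin 4) (Fin 4) ℝ) 3 j := by
    intro j
    rw [← hQ]
    simp [Matrix.mul_apply, Fin.sum_univ_four, Q03, Q13, Q23, Q33]
  have hent : ∀ j p, pen (fun i => Q.transpose * N i * Q) p j 3 =
      Q 0 j * pen N p 0 3 + Q 1 j * pen N p 1 3 + Q 2 j * pen N p 2 3 := by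
    intro j p
    rw [hpen]
    simp [Matrix.mul_apply, Fin.sum_univ_four, Q03, Q13, Q23, Q33, h33]
  have hzero : ∀ j, (1 : Matrix (Fin 4) (Fin 4) ℝ) 0 j = 0 → ∀ p,
      pen (fun i => Q.transpose * N i * Q) p j 3 = 0 := by
    intro j hj p
    rw [hent]
    have ho := horth j
    rw [hj, Q00, Q10, Q20] at ho
    obtain ⟨k0, k1, k2⟩ := hpar p0 p
    have ho' : pen N p0 0 3 * Q 0 j + pen N p0 1 3 * Q 1 j + pen N p0 2 3 * Q 2 j = 0 := by
      field_simp at ho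
      linarith
    apply (mul_eq_zero.1 (_ : _ * _ = (0 : ℝ))).resolve_left hpos.ne'
    generalize pen N p0 0 3 = x0, pen N p0 1 3 = x1, pen N p0 2 3 = x2, pen N p 0 3 = y0,
      pen N p 1 3 = y1, pen N p 2 3 = y2 at *
    linear_combination (x0 * y0 + x1 * y1 + x2 * y2) * ho' + (x1 * Q 2 j - x2 * Q 1 j) * k0
      + (x2 * Q 0 j - x0 * Q 2 j) * k1 + (x0 * Q 1 j - x1 * Q 0 j) * k2
  exact core_a D' (toent _ _ _ (hzero 1 (by simp))) (toent _ _ _ (hzero 2 (by simp)))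
    (toent _ _ _ (hzero 3 (by simp)))

lemma core2 (D : Dat N L F) : Sing F := by
  by_cases hall : ∀ p, e3 (pen N p 0 0) (pen N p 0 1) (pen N p 0 2) (pen N p 0 3) (pen N p 1 1)
      (pen N p 1 2) (pen N p 1 3) (pen N p 2 2) (pen N p 2 3) (pen N p 3 3) = 0
  · have h3 : e3 (ent N 0 0) (ent N 0 1) (ent N 0 2) (ent N 0 3) (ent N 1 1)
      (ent N 1 2) (ent N 1 3) (ent N 2 2) (ent N 2 3) (ent N 3 3) = 0 := by
      apply MvPolynomial.funext
      intro p
      simpa [e3, ent_eval] using hall p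
    have p0 := D.p0
    have p1 := D.p1
    simp only [e3, sd] at h3 p0 p1
    refine sing_of_factor (r := L) (g := L ^ 2 + L * (ent N 0 0 + ent N 1 1 + ent N 2 2 + ent N 3 3)
      + ((ent N 0 0 * ent N 1 1 - ent N 0 1 ^ 2) + (ent N 0 0 * ent N 2 2 - ent N 0 2 ^ 2)
      + (ent N 0 0 * ent N 3 3 - ent N 0 3 ^ 2) + (ent N 1 1 * ent N 2 2 - ent N 1 2 ^ 2)
      + (ent N 1 1 * ent N 3 3 - ent N 1 3 ^ 2) + (ent N 2 2 * ent N 3 3 - ent N 2 3 ^ 2)))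
      D.hL ?_ ?_
    · have h2 : ∀ a b c d, (ent N a b * ent N c d).IsHomogeneous 2 := fun a b c d =>
        (ent_hom N a b).mul (ent_hom N c d)
      have h2' : ∀ a b, (ent N a b ^ 2).IsHomogeneous 2 := fun a b => by
        rw [sq]; exact h2 _ _ _ _
      have hm := fun a b => ((h2 a a b b).sub (h2' a b))
      refine IsHomogeneous.add (IsHomogeneous.add (D.hL.pow 2) (IsHomogeneous.mul (m := 1) (n := 1) D.hL ?_)) ?_
      · exact (((ent_hom _ _ _).add (ent_hom _ _ _)).add (ent_hom _ _ _)).add (ent_hom _ _ _)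
      · exact (((((hm 0 1).add (hm 0 2)).add (hm 0 3)).add (hm 1 2)).add (hm 1 3)).add (hm 2 3)
    · apply mul_left_cancel₀ D.hL0
      rw [p1]
      linear_combination p0 + L * h3
  push Not at hall
  obtain ⟨p1, hp1⟩ := hall
  obtain ⟨v, hv0, hv⟩ := Matrix.exists_mulVec_eq_zero_iff.2 (D.h0 p1)
  have hpos : 0 < v ⬝ᵥ v := by
    refine lt_of_le_of_ne (Finset.sum_nonneg fun i _ => mul_self_nonneg _) fun h => hv0 ?_
    exact dotProduct_self_eq_zero.1 h.symm
  have hr := Real.sq_sqrt hpos.le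
  have hr0 := (Real.sqrt_pos.2 hpos).ne'
  set r := Real.sqrt (v ⬝ᵥ v) with hrdef
  obtain ⟨Q, hQ, hQv⟩ := exists_orth {3} (fun _ => r⁻¹ • v) (by
    intro i hi j hj
    simp only [Set.mem_singleton_iff] at hi hj
    subst hi hj
    simp only [smul_dotProduct, dotProduct_smul, smul_eq_mul, if_true]
    rw [← hr]
    field_simp)
  have q3 := hQv 3 (by simp)
  have D' := D.conj Q hQ
  have hpen : pen (fun i => Q.transpose * N i * Q) p1 = Q.transpose * pen N p1 * Q := by
    simp [pen, Matrix.mul_sum, Matrix.sum_mul]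
  have hz : ∀ a, pen (fun i => Q.transpose * N i * Q) p1 a 3 = 0 := by
    intro a
    have hcol : ∀ b, (pen N p1 * Q) b 3 = 0 := by
      intro b
      have h1 := congrFun hv b
      rw [Matrix.mul_apply]
      simp only [q3, Pi.smul_apply, smul_eq_mul]
      have h2 : ∑ j, pen N p1 b j * v j = 0 := h1
      calc _ = r⁻¹ * ∑ j, pen N p1 b j * v j := by
            rw [Finset.mul_sum]; exact Finset.sum_congr rfl fun j _ => by ring
        _ = 0 := by rw [h2, mul_zero]
    rw [hpen, Matrix.mul_assoc, Matrix.mul_apply]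
    simp [hcol]
  refine core_b D' p1 hz ?_
  -- invariance of `e3` under orthogonal conjugation, via the characteristic polynomial
  have hdQ : Q.transpose.det * Q.det = 1 := by rw [← Matrix.det_mul, hQ, Matrix.det_one]
  have inv : ∀ t : ℝ, (t • (1 : Matrix (Fin 4) (Fin 4) ℝ) + pen (fun i => Q.transpose * N i * Q) p1).det
      = (t • (1 : Matrix (Fin 4) (Fin 4) ℝ) + pen N p1).det := by
    intro t
    have : t • (1 : Matrix (Fin 4) (Fin 4) ℝ) + Q.transpose * pen N p1 * Q
        = Q.transpose * (t • (1 : Matrix (Fin 4) (Fin 4) ℝ) + pen N p1) * Q := by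
      simp [mul_add, add_mul, hQ]
    rw [hpen, this, Matrix.det_mul, Matrix.det_mul]
    linear_combination ((t • (1 : Matrix (Fin 4) (Fin 4) ℝ) + pen N p1).det) * hdQ
  have d1 : ∀ {N : Fin 4 → Matrix (Fin 4) (Fin 4) ℝ} (D : Dat N L F) (t : ℝ),
      (t • (1 : Matrix (Fin 4) (Fin 4) ℝ) + pen N p1).det = sd (t + pen N p1 0 0) (pen N p1 0 1)
      (pen N p1 0 2) (pen N p1 0 3) (t + pen N p1 1 1) (pen N p1 1 2) (pen N p1 1 3)
      (t + pen N p1 2 2) (pen N p1 2 3) (t + pen N p1 3 3) := by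
    intro N D t
    rw [det_sym]
    · simp
    · intro a b
      simp [D.psym p1 a b, Matrix.one_apply, eq_comm]
  intro hcon
  apply hp1
  have i0 := inv 0
  have i1 := inv 1
  have i2 := inv (-1)
  have i3 := inv 2
  have i4 := inv (-2)
  rw [d1 D', d1 D] at i0 i1 i2 i3 i4
  simp only [hz] at i0 i1 i2 i3 i4
  simp only [sd] at i0 i1 i2 i3 i4
  simp only [e3] at hcon ⊢
  linear_combination hcon - (8 * (i1 - i2) - (i3 - i4)) / 12

end S15

namespace S15

lemma sing_smul {F : MvPolynomial (Fin 4) ℝ} (κ : ℝ) (hκ : κ ≠ 0) (h : Sing (C κ * F)) : Sing F := by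
  obtain ⟨p, hp, h1, h2⟩ := h
  refine ⟨p, hp, ?_, fun i => ?_⟩
  · simpa [hκ] using h1
  · simpa [hκ, pderiv_C_mul, smul_eq_C_mul] using h2 i

open scoped MatrixOrder in
lemma core (A : Fin 4 → Matrix (Fin 4) (Fin 4) ℝ) (hA : ∀ i, (A i).IsSymm) (e : Fin 4 → ℝ)
    (hpd : (pen A e).PosDef) (L F : MvPolynomial (Fin 4) ℝ) (hL : L.IsHomogeneous 1)
    (h : ∀ p, (pen A p).det = eval p F * eval p L) : Sing F := by
  obtain ⟨B, hB⟩ := CStarAlgebra.nonneg_iff_eq_star_mul_self.mp hpd.posSemidef.nonneg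
  rw [Matrix.star_eq_conjTranspose, Matrix.conjTranspose_eq_transpose_of_trivial] at hB
  have hdet := hpd.det_pos.ne'
  have hBd : B.det ≠ 0 := by
    intro h0
    apply hdet
    rw [hB, Matrix.det_mul, h0, mul_zero]
  have hBu : IsUnit B.det := isUnit_iff_ne_zero.2 hBd
  obtain ⟨G, hG1, hG2⟩ : ∃ G : Matrix (Fin 4) (Fin 4) ℝ, B * G = 1 ∧ G * B = 1 :=
    ⟨B⁻¹, Matrix.mul_nonsing_inv _ hBu, Matrix.nonsing_inv_mul _ hBu⟩
  have hGM : G.transpose * pen A e * G = 1 := by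
    rw [hB, Matrix.mul_assoc, Matrix.mul_assoc, hG1, Matrix.mul_one, ← Matrix.transpose_mul, hG1,
      Matrix.transpose_one]
  have hGd : G.det ≠ 0 := by
    intro h0
    have := congrArg Matrix.det hG1
    rw [Matrix.det_mul, h0] at this
    simp at this
  have hl : eval e L ≠ 0 := by
    intro h0
    apply hdet
    rw [h, h0, mul_zero]
  set l := eval e L with hldef
  have hL' : (C l⁻¹ * L).IsHomogeneous 1 := by
    simpa using (isHomogeneous_C (Fin 4) l⁻¹).mul hL
  obtain ⟨c, hc⟩ := lin_form _ hL'
  have hcev : ∀ p, l⁻¹ * eval p L = ∑ i, c i * p i := fun p => by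
    have := congrArg (eval p) hc
    simpa using this
  have hce : ∑ i, c i * e i = 1 := by
    rw [← hcev]; exact inv_mul_cancel₀ hl
  let N : Fin 4 → Matrix (Fin 4) (Fin 4) ℝ := fun i => G.transpose * A i * G - c i • 1
  have hpen : ∀ p, pen N p = G.transpose * pen A p * G - (∑ i, c i * p i) • (1 : Matrix (Fin 4) (Fin 4) ℝ) := by
    intro p
    simp only [pen, N, smul_sub, Finset.sum_sub_distrib, Matrix.mul_sum, Matrix.sum_mul,
      Finset.sum_smul, smul_smul, Matrix.mul_smul, Matrix.smul_mul]
    congr 1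
    exact Finset.sum_congr rfl fun i _ => by rw [mul_comm]
  have D : Dat N (C l⁻¹ * L) (C (G.det ^ 2 * l) * F) := by
    refine ⟨fun i a b => ?_, hL', ?_, fun p => ?_, fun p => ?_⟩
    · have : (N i).transpose = N i := by
        simp [N, Matrix.transpose_mul, (hA i).eq, Matrix.mul_assoc]
      exact congrFun (congrFun this.symm a) b
    · intro h0
      have := congrArg (eval e) h0
      simp [← hldef, hl] at this
    · have he : pen N e = 0 := by rw [hpen, hce, hGM]; simp
      have : pen N p = pen N (p + (-(∑ i, c i * p i)) • e) := by
        rw [pen_add, pen_smul, he]; simp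
      have hz : ∑ i, c i * (p + (-(∑ i, c i * p i)) • e) i = 0 := by
        simp only [Pi.add_apply, Pi.smul_apply, smul_eq_mul, mul_add, Finset.sum_add_distrib]
        have : ∑ x, c x * (-(∑ i, c i * p i) * e x) = -(∑ i, c i * p i) * ∑ x, c x * e x := by
          rw [Finset.mul_sum]; exact Finset.sum_congr rfl fun i _ => by ring
        rw [this, hce]; ring
      rw [this, hpen, hz, zero_smul, sub_zero, Matrix.det_mul, Matrix.det_mul, h]
      have h1 := hcev (p + (-(∑ i, c i * p i)) • e)
      rw [hz] at h1
      have h2 := (mul_eq_zero.1 h1).resolve_left (inv_ne_zero hl)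
      rw [h2]; ring
    · rw [hpen]
      simp only [map_mul, eval_C]
      rw [hcev, add_sub_cancel, Matrix.det_mul, Matrix.det_mul, h, Matrix.det_transpose, ← hcev]
      field_simp
  exact sing_smul _ (mul_ne_zero (pow_ne_zero _ hGd) hl) (core2 D)

end S15

namespace S15

lemma cubic_root (a b c : ℝ) : ∃ t : ℝ, t ^ 3 + a * t ^ 2 + b * t + c = 0 := by
  set M := 1 + |a| + |b| + |c| with hM
  have ha := abs_nonneg a
  have hb := abs_nonneg b
  have hc := abs_nonneg c
  have hM1 : 1 ≤ M := by linarith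
  have hMM : M ≤ M ^ 2 := by nlinarith
  have hM2 : 1 ≤ M ^ 2 := by linarith
  have e1 : |a| * M ^ 2 + |b| * M + |c| ≤ M ^ 3 := by
    have h1 : |b| * M ≤ |b| * M ^ 2 := mul_le_mul_of_nonneg_left hMM hb
    have h2 : |c| * 1 ≤ |c| * M ^ 2 := mul_le_mul_of_nonneg_left hM2 hc
    have h3 : M ^ 3 = (1 + |a| + |b| + |c|) * M ^ 2 := by rw [← hM]; ring
    nlinarith
  have hcont : ContinuousOn (fun t : ℝ => t ^ 3 + a * t ^ 2 + b * t + c) (Set.Icc (-M) M) := by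
    fun_prop
  have hmem := intermediate_value_Icc (by linarith) hcont
  have h0 : (0 : ℝ) ∈ Set.Icc ((-M) ^ 3 + a * (-M) ^ 2 + b * (-M) + c)
      (M ^ 3 + a * M ^ 2 + b * M + c) := by
    have b1 := mul_le_mul_of_nonneg_right (neg_abs_le a) (by linarith : 0 ≤ M ^ 2)
    have b2 := mul_le_mul_of_nonneg_right (le_abs_self a) (by linarith : 0 ≤ M ^ 2)
    have b3 := mul_le_mul_of_nonneg_right (neg_abs_le b) (by linarith : 0 ≤ M)
    have b5 := neg_abs_le c
    have b6 := le_abs_self c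
    constructor <;> nlinarith
  obtain ⟨t, -, ht⟩ := hmem h0
  exact ⟨t, ht⟩

lemma real_root (F : MvPolynomial (Fin 4) ℝ) (hF : F.IsHomogeneous 3) (e y : Fin 4 → ℝ)
    (he : eval e F = 1) : ∃ t : ℝ, eval (fun i => y i + e i * t) F = 0 := by
  obtain ⟨h1, h2⟩ := line_deg (S := ℝ) y e F 3 hF
  rw [aeval_eq_eval] at h2
  have h3 : (line (S := ℝ) y e F).coeff 3 = 1 := by rw [h2]; exact he
  obtain ⟨t, ht⟩ := cubic_root ((line (S := ℝ) y e F).coeff 2) ((line (S := ℝ) y e F).coeff 1)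
    ((line (S := ℝ) y e F).coeff 0)
  refine ⟨t, ?_⟩
  have := line_eval (S := ℝ) y e F t
  rw [Polynomial.eval_eq_sum_range' (n := 4) (by omega)] at this
  simp only [Finset.sum_range_succ, Finset.sum_range_zero, h3] at this
  rw [aeval_eq_eval] at this
  refine Eq.trans this.symm ?_
  linear_combination ht

lemma inf_ne (F : MvPolynomial (Fin 4) ℝ) (hF : F.IsHomogeneous 3) (hs : ¬ Sing F)
    (h : ∀ x : Fin 4 → ℝ, x 0 = 0 → eval x F = 0) : False := by
  have hX : (X 0 : MvPolynomial (Fin 4) ℝ) ∣ F := by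
    have h0 : (finSuccEquiv ℝ 3 F).coeff 0 = 0 := by
      apply MvPolynomial.funext
      intro s
      have := eval_eq_eval_mv_eval' s (0 : ℝ) F
      rw [h _ (by simp)] at this
      rw [map_zero, ← Polynomial.coeff_map, Polynomial.coeff_zero_eq_eval_zero]
      exact this.symm
    obtain ⟨G, hG⟩ := Polynomial.X_dvd_iff.2 h0
    refine ⟨(finSuccEquiv ℝ 3).symm G, ?_⟩
    apply (finSuccEquiv ℝ 3).injective
    rw [map_mul, finSuccEquiv_X_zero, AlgEquiv.apply_symm_apply, hG]
  obtain ⟨Q, hQ⟩ := hX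
  have hX1 : (X 0 : MvPolynomial (Fin 4) ℝ).IsHomogeneous 1 := isHomogeneous_X ℝ 0
  have key : F = X 0 * homogeneousComponent 2 Q := by
    have h1 : (scal F).coeff 3 = (scal (X 0) * scal Q).coeff 3 := by rw [hQ, scal_mul]
    rw [scal_coeff, hc_eq hF, Polynomial.coeff_mul] at h1
    simp only [Finset.Nat.antidiagonal_succ] at h1
    simpa [scal_coeff, hc_eq hX1] using h1
  exact hs (sing_of_factor hX1 (homogeneousComponent_isHomogeneous 2 Q) key)

/-- Projection onto the kernel of a PSD matrix. -/
lemma ker_proj (P : Matrix (Fin 4) (Fin 4) ℝ) (hP : P.PosSemidef) :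
    ∃ K : Matrix (Fin 4) (Fin 4) ℝ, K.PosSemidef ∧ K * K = K ∧ P * K = 0 ∧ (P + K).PosDef := by
  set φ := Unitary.conjStarAlgAut ℝ (Matrix (Fin 4) (Fin 4) ℝ) hP.1.eigenvectorUnitary with hφ
  have hsp : P = φ (Matrix.diagonal hP.1.eigenvalues) := hP.1.spectral_theorem
  have hev := hP.eigenvalues_nonneg
  set lam := hP.1.eigenvalues with hlam
  clear_value lam
  have hpsd : ∀ d : Fin 4 → ℝ, (∀ i, 0 ≤ d i) → (φ (Matrix.diagonal d)).PosSemidef := by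
    intro d hd
    rw [hφ, Unitary.conjStarAlgAut_apply]
    exact (Matrix.PosSemidef.diagonal hd).mul_mul_conjTranspose_same _
  let χ : Fin 4 → ℝ := fun i => if lam i = 0 then 1 else 0
  have hsum : P + φ (Matrix.diagonal χ) = φ (Matrix.diagonal (fun i => lam i + χ i)) := by
    rw [hsp, ← map_add, Matrix.diagonal_add]
  have hpos : ∀ i, 0 < lam i + χ i := by
    intro i
    simp only [χ]
    split_ifs with h
    · rw [h]; norm_num
    · have := lt_of_le_of_ne (hev i) (Ne.symm h)
      linarith
  refine ⟨φ (Matrix.diagonal χ), hpsd _ ?_, ?_, ?_, ?_⟩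
  · intro i; simp only [χ]; split_ifs <;> norm_num
  · rw [← map_mul, Matrix.diagonal_mul_diagonal]
    congr 2; ext i; simp [χ]
  · rw [hsp, ← map_mul, Matrix.diagonal_mul_diagonal]
    have : (fun i => lam i * χ i) = 0 := by ext i; simp [χ]
    rw [this]; simp
  · rw [hsum]
    refine (hpsd _ fun i => (hpos i).le).posDef_iff_det_ne_zero.2 ?_
    rw [hφ, Unitary.conjStarAlgAut_apply, Matrix.det_mul_right_comm]
    simp
    exact Finset.prod_ne_zero_iff.2 fun i _ => (hpos i).ne'

end S15

namespace S15

/-- The determinant polynomial. -/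
noncomputable def dpoly (A : Fin 4 → Matrix (Fin 4) (Fin 4) ℝ) : MvPolynomial (Fin 4) ℝ :=
  (Matrix.of fun a b => ent A a b).det

lemma dpoly_hom (A) : (dpoly A).IsHomogeneous 4 := by
  unfold dpoly
  rw [Matrix.det_apply]
  refine IsHomogeneous.sum _ _ _ fun σ _ => ?_
  have h : (∏ i, (Matrix.of fun a b => ent A a b) (σ i) i).IsHomogeneous (∑ i : Fin 4, 1) :=
    IsHomogeneous.prod _ _ _ fun i _ => ent_hom A _ _
  have h' : (∏ i, (Matrix.of fun a b => ent A a b) (σ i) i).IsHomogeneous 4 := by simpa using h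
  rcases Int.units_eq_one_or (Equiv.Perm.sign σ) with hs | hs <;> rw [hs]
  · simpa using h'
  · simpa using h'.neg

lemma dpoly_eval (A p) : eval p (dpoly A) = (pen A p).det := by
  unfold dpoly
  rw [RingHom.map_det]
  congr 1
  ext a b
  simp [ent_eval]

lemma pen_cons (A : Fin 4 → Matrix (Fin 4) (Fin 4) ℝ) (p : Fin 3 → ℝ) :
    A 0 + ∑ i : Fin 3, p i • A i.succ = pen A (Fin.cons 1 p) := by
  simp [pen, Fin.sum_univ_succ]

lemma pen_comb (A : Fin 4 → Matrix (Fin 4) (Fin 4) ℝ) (e x : Fin 3 → ℝ) (t : ℝ) :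
    pen A (Fin.cons 1 (e + t • (x - e))) = (1 - t) • pen A (Fin.cons 1 e) + t • pen A (Fin.cons 1 x) := by
  rw [← pen_smul, ← pen_smul, ← pen_add]
  congr 1
  ext i
  refine Fin.cases ?_ (fun j => ?_) i
  · simp
  · simp; ring

lemma near (s : Set (Fin 3 → ℝ)) (e : Fin 3 → ℝ) (he : e ∈ interior s) (x : Fin 3 → ℝ) :
    ∃ t : ℝ, 0 < t ∧ e + t • (x - e) ∈ s ∧ e + (-t) • (x - e) ∈ s := by
  have hc : Continuous fun t : ℝ => e + t • (x - e) := by fun_prop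
  have h1 : ∀ᶠ t : ℝ in nhds 0, e + t • (x - e) ∈ s := by
    apply hc.continuousAt.eventually
    simpa using mem_interior_iff_mem_nhds.1 he
  obtain ⟨ε, hε, hb⟩ := Metric.eventually_nhds_iff.1 h1
  refine ⟨ε / 2, by linarith, hb ?_, hb ?_⟩
  · rw [Real.dist_eq, sub_zero, abs_of_pos] <;> linarith
  · rw [Real.dist_eq, sub_zero, abs_neg, abs_of_pos] <;> linarith

/-- The kernel at an interior point is contained in all kernels. -/
lemma ker_all (A : Fin 4 → Matrix (Fin 4) (Fin 4) ℝ) (s : Set (Fin 3 → ℝ))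
    (hs : ∀ p, p ∈ s ↔ (pen A (Fin.cons 1 p)).PosSemidef) (e) (he : e ∈ interior s)
    (v : Fin 4 → ℝ) (hv : (pen A (Fin.cons 1 e)).mulVec v = 0) (x : Fin 3 → ℝ) :
    (pen A (Fin.cons 1 x)).mulVec v = 0 := by
  obtain ⟨t, ht, h1, h2⟩ := near s e he x
  rw [hs] at h1 h2
  have q1 := h1.dotProduct_mulVec_nonneg v
  have q2 := h2.dotProduct_mulVec_nonneg v
  have z1 := h1.dotProduct_mulVec_zero_iff v
  rw [pen_comb] at q1 q2 z1
  simp only [Matrix.add_mulVec, Matrix.smul_mulVec, hv, smul_zero, zero_add, dotProduct_smul,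
    smul_eq_mul, star_trivial] at q1 q2 z1
  have hq : v ⬝ᵥ (pen A (Fin.cons 1 x)).mulVec v = 0 := by nlinarith
  have := z1.1 (by rw [hq, mul_zero])
  exact (smul_eq_zero.1 this).resolve_left ht.ne'

lemma posDef_open (A : Fin 4 → Matrix (Fin 4) (Fin 4) ℝ) (hA : ∀ i, (A i).IsSymm) (x : Fin 3 → ℝ)
    (hx : (pen A (Fin.cons 1 x)).PosDef) :
    ∀ᶠ y in nhds x, (pen A (Fin.cons 1 y)).PosSemidef := by
  have hcont : Continuous fun z : (Fin 3 → ℝ) × (Fin 4 → ℝ) =>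
      z.2 ⬝ᵥ (pen A (Fin.cons 1 z.1)).mulVec z.2 := by
    have : (fun z : (Fin 3 → ℝ) × (Fin 4 → ℝ) => z.2 ⬝ᵥ (pen A (Fin.cons 1 z.1)).mulVec z.2)
      = fun z => ∑ a, z.2 a * ∑ b, (A 0 a b + ∑ i : Fin 3, z.1 i * A i.succ a b) * z.2 b := by
      ext z
      simp [dotProduct, Matrix.mulVec, ← pen_cons, Matrix.sum_apply]
    rw [this]
    fun_prop
  have hcomp : IsCompact (Metric.sphere (0 : Fin 4 → ℝ) 1) := isCompact_sphere _ _
  have hev : ∀ᶠ y in nhds x, ∀ v ∈ Metric.sphere (0 : Fin 4 → ℝ) 1,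
      0 < v ⬝ᵥ (pen A (Fin.cons 1 y)).mulVec v := by
    apply hcomp.eventually_forall_of_forall_eventually
    intro v hv
    have hv0 : v ≠ 0 := by
      rintro rfl; simp at hv
    have hpos : 0 < v ⬝ᵥ (pen A (Fin.cons 1 x)).mulVec v := by
      simpa using hx.dotProduct_mulVec_pos hv0
    exact hcont.continuousAt.eventually (lt_mem_nhds hpos)
  filter_upwards [hev] with y hy
  refine Matrix.PosSemidef.of_dotProduct_mulVec_nonneg ?_ fun v => ?_
  · ext a b
    have : ∀ i, A i b a = A i a b := fun i => (hA i).apply a b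
    simp [pen, Matrix.sum_apply, this]
  · by_cases hv : v = 0
    · simp [hv]
    · have hn : 0 < ‖v‖ := norm_pos_iff.2 hv
      have := hy (‖v‖⁻¹ • v) (by simp [norm_smul, hn.ne'])
      simp only [Matrix.mulVec_smul, dotProduct_smul, smul_dotProduct, smul_eq_mul] at this
      have h1 : 0 < ‖v‖⁻¹ := inv_pos.2 hn
      rw [star_trivial]
      by_contra hneg
      push Not at hneg
      have h2 := mul_neg_of_pos_of_neg h1 hneg
      have h3 := mul_neg_of_pos_of_neg h1 h2
      linarith

lemma regularize (A : Fin 4 → Matrix (Fin 4) (Fin 4) ℝ) (hA : ∀ i, (A i).IsSymm)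
    (s : Set (Fin 3 → ℝ)) (hs : ∀ p, p ∈ s ↔ (pen A (Fin.cons 1 p)).PosSemidef)
    (e) (he : e ∈ interior s) :
    ∃ B : Fin 4 → Matrix (Fin 4) (Fin 4) ℝ, (∀ i, (B i).IsSymm) ∧
      (∀ p, p ∈ s ↔ (pen B (Fin.cons 1 p)).PosSemidef) ∧ (pen B (Fin.cons 1 e)).PosDef := by
  obtain ⟨K, hK, hKK, hPK, hpd⟩ := ker_proj _ ((hs e).1 (interior_subset he))
  have hKs : K.transpose = K := by
    have := hK.1.eq
    rwa [Matrix.conjTranspose_eq_transpose_of_trivial] at this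
  have hAK : ∀ x, pen A (Fin.cons 1 x) * K = 0 := by
    intro x
    ext a b
    have h1 : (pen A (Fin.cons 1 e)).mulVec (fun c => K c b) = 0 := by
      ext c
      exact congrFun (congrFun hPK c) b
    exact congrFun (ker_all A s hs e he _ h1 x) a
  have hpen : ∀ x : Fin 3 → ℝ, pen (Fin.cons (A 0 + K) fun i => A i.succ) (Fin.cons 1 x)
      = pen A (Fin.cons 1 x) + K := by
    intro x
    rw [← pen_cons, ← pen_cons]
    simp only [Fin.cons_zero, Fin.cons_succ]
    abel
  have hsymp : ∀ x, (pen A (Fin.cons 1 x)).transpose = pen A (Fin.cons 1 x) := by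
    intro x
    simp [pen, Matrix.transpose_sum, (hA _).eq]
  refine ⟨Fin.cons (A 0 + K) fun i => A i.succ, ?_, fun p => ?_, ?_⟩
  · intro i
    refine Fin.cases ?_ (fun j => ?_) i
    · simp only [Fin.cons_zero, Matrix.IsSymm, Matrix.transpose_add, hKs, (hA 0).eq]
    · simpa using hA j.succ
  · rw [hs, hpen]
    constructor
    · exact fun h => h.add hK
    · intro h
      have h2 := h.conjTranspose_mul_mul_same (1 - K)
      have hKA : K * pen A (Fin.cons 1 p) = 0 := by
        have := congrArg Matrix.transpose (hAK p)
        rwa [Matrix.transpose_mul, hKs, hsymp, Matrix.transpose_zero] at this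
      have : (1 - K).conjTranspose * (pen A (Fin.cons 1 p) + K) * (1 - K) = pen A (Fin.cons 1 p) := by
        rw [Matrix.conjTranspose_eq_transpose_of_trivial, Matrix.transpose_sub, hKs,
          Matrix.transpose_one]
        simp only [sub_mul, mul_sub, mul_add, add_mul, one_mul, mul_one, hKA, hAK, hKK, zero_mul]
        simp
      rwa [this] at h2
  · rw [hpen]; exact hpd

end S15

open S15 in
theorem stmt_15 (C : Set (Fin 3 → ℝ)) (hconv : Convex ℝ C)
    (hint : (interior C).Nonempty)
    (f : MvPolynomial (Fin 3) ℝ) (hdeg : f.totalDegree = 3)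
    -- the zero set of `f` is the Zariski closure of the Euclidean boundary of `C`:
    (hbd : ∀ p : Fin 3 → ℝ, eval p f = 0 ↔
      ∀ g : MvPolynomial (Fin 3) ℝ, (∀ q ∈ frontier C, eval q g = 0) → eval p g = 0)
    (F : MvPolynomial (Fin 4) ℝ) (hFhom : F.IsHomogeneous 3)
    (hFdehom : ∀ x y z : ℝ, eval ![(1 : ℝ), x, y, z] F = eval ![x, y, z] f)
    -- the projective surface `{F = 0} ⊆ ℙ³(ℂ)` is smooth:
    (hsmooth : ¬ ∃ p : Fin 4 → ℂ, p ≠ 0 ∧ aeval p F = 0 ∧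
      ∀ i, aeval p (pderiv i F) = 0) :
    ¬ ∃ A : Fin 4 → Matrix (Fin 4) (Fin 4) ℝ, (∀ k, (A k).IsSymm) ∧
      ∀ p : Fin 3 → ℝ,
        p ∈ C ↔ (A 0 + ∑ i : Fin 3, p i • A i.succ).PosSemidef := by
  rintro ⟨A0, hA0, hC0⟩
  simp only [pen_cons] at hC0
  obtain ⟨e, he⟩ := hint
  obtain ⟨A, hA, hC, hpd⟩ := regularize A0 hA0 C hC0 e he
  have hsing : ¬ Sing F := hsmooth
  have hde : ∀ p : Fin 3 → ℝ, eval (Fin.cons 1 p : Fin 4 → ℝ) F = eval p f := by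
    intro p
    have h1 : (Fin.cons 1 p : Fin 4 → ℝ) = ![1, p 0, p 1, p 2] := by
      ext i; fin_cases i <;> rfl
    have h2 : p = ![p 0, p 1, p 2] := by
      ext i; fin_cases i <;> rfl
    rw [h1, hFdehom, ← h2]
  -- the determinant vanishes on the zero set of `f`
  have hfr : ∀ q ∈ frontier C, (pen A (Fin.cons 1 q)).det = 0 := by
    intro q hq
    have hclosed : IsClosed C := by
      have hset : C = ⋂ v : Fin 4 → ℝ, {p | 0 ≤ v ⬝ᵥ (pen A (Fin.cons 1 p)).mulVec v} := by
        ext p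
        rw [hC, Set.mem_iInter]
        constructor
        · intro h v
          simpa using h.dotProduct_mulVec_nonneg v
        · intro h
          refine Matrix.PosSemidef.of_dotProduct_mulVec_nonneg ?_ fun v => by simpa using h v
          ext a b
          have : ∀ i, A i b a = A i a b := fun i => (hA i).apply a b
          simp [pen, Matrix.sum_apply, this]
      rw [hset]
      refine isClosed_iInter fun v => isClosed_le continuous_const ?_
      have : (fun p : Fin 3 → ℝ => v ⬝ᵥ (pen A (Fin.cons 1 p)).mulVec v)
        = fun p => ∑ a, v a * ∑ b, (A 0 a b + ∑ i : Fin 3, p i * A i.succ a b) * v b := by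
        ext z
        simp [dotProduct, Matrix.mulVec, ← pen_cons, Matrix.sum_apply]
      rw [this]
      fun_prop
    by_contra hdet
    have hqC : q ∈ C := hclosed.frontier_subset hq
    have hqpd := ((hC q).1 hqC).posDef_iff_det_ne_zero.2 hdet
    have hev := posDef_open A hA q hqpd
    have : q ∈ interior C := by
      rw [mem_interior_iff_mem_nhds]
      filter_upwards [hev] with y hy
      exact (hC y).2 hy
    exact hq.2 this
  have hfd : ∀ p, eval p f = 0 → (pen A (Fin.cons 1 p)).det = 0 := by
    intro p hp
    let g : MvPolynomial (Fin 3) ℝ :=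
      aeval (Fin.cons 1 X : Fin 4 → MvPolynomial (Fin 3) ℝ) (dpoly A)
    have hg : ∀ q, eval q g = (pen A (Fin.cons 1 q)).det := by
      intro q
      rw [← dpoly_eval, ← aeval_eq_eval, comp_aeval_apply, ← aeval_eq_eval]
      congr 2
      ext i
      refine Fin.cases ?_ (fun j => ?_) i <;> simp
    have := (hbd p).1 hp g fun q hq => by rw [hg, hfr q hq]
    rwa [hg] at this
  have hfe : eval e f ≠ 0 := fun h => hpd.det_pos.ne' (hfd e h)
  set E : Fin 4 → ℝ := Fin.cons 1 e with hE
  have hE0 : E 0 = 1 := rfl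
  set κ := (eval e f)⁻¹ with hκ
  have hκ0 : κ ≠ 0 := inv_ne_zero hfe
  have hF1h : (MvPolynomial.C κ * F).IsHomogeneous 3 := by
    simpa using (isHomogeneous_C (Fin 4) κ).mul hFhom
  have hF1s : ¬ Sing (MvPolynomial.C κ * F) := fun h => hsing (sing_smul κ hκ0 h)
  have hF1e : eval E (MvPolynomial.C κ * F) = 1 := by
    rw [map_mul, eval_C, hE, hde, hκ, inv_mul_cancel₀ hfe]
  let H : MvPolynomial (Fin 4) ℝ := aeval (fun i => X i - MvPolynomial.C (E i) * X 0) F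
  have hHev : ∀ y, eval y H = eval (fun i => y i - E i * y 0) F := by
    intro y
    rw [← aeval_eq_eval, comp_aeval_apply, ← aeval_eq_eval]
    congr 2
    ext i
    simp
  have hH : H ≠ 0 := by
    intro h0
    refine inf_ne F hFhom hsing fun x hx => ?_
    have := hHev x
    rw [h0, map_zero] at this
    simpa [hx] using this.symm
  have hdvd : (MvPolynomial.C κ * F) ∣ dpoly A := by
    refine div_of_roots _ _ H hF1h E hF1e hF1s hH fun y hy => ?_
    obtain ⟨t, ht⟩ := real_root _ hF1h E y hF1e
    refine ⟨t, ht, ?_⟩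
    set w := fun i => y i + E i * t with hw
    have hFw : eval w F = 0 := by
      rw [map_mul, eval_C] at ht
      exact (mul_eq_zero.1 ht).resolve_left hκ0
    have hw0 : w 0 ≠ 0 := by
      intro h0
      apply hy
      rw [hHev]
      have ht' : t = - y 0 := by
        have : y 0 + E 0 * t = 0 := h0
        rw [hE0] at this; linarith
      rw [← hFw]
      congr 2
      ext i
      simp only [hw, ht']; ring
    have hwe : w = w 0 • (Fin.cons 1 (fun j : Fin 3 => w j.succ / w 0) : Fin 4 → ℝ) := by
      ext i
      refine Fin.cases ?_ (fun j => ?_) i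
      · simp
      · simp; field_simp
    rw [hwe, hom_smul hFhom, hde] at hFw
    have hf0 := (mul_eq_zero.1 hFw).resolve_left (pow_ne_zero _ hw0)
    rw [hwe, hom_smul (dpoly_hom A), dpoly_eval, hfd _ hf0, mul_zero]
  obtain ⟨Q, hQ⟩ := hdvd
  have hL := lin_cofactor hF1h (dpoly_hom A) hQ
  refine hF1s (core A hA E hpd (homogeneousComponent 1 Q) _ (homogeneousComponent_isHomogeneous 1 Q)
    fun p => ?_)
  rw [← dpoly_eval, ← map_mul, ← hL]
end
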